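/- HyperLTL finite-state satisfiability is Σ⁰₁-complete: under a fixed computable injective encoding of HyperLTL sentences as natural numbers, the set of codes of HyperLTL sentences that are satisfied by the set of traces of some finite transition system is recursively enumerable, and every recursively enumerable set many-one reduces to it via a total computable function. -/

import Mathlib

/-! ### HyperLTL: syntax and semantics -/

/-- A trace over a set `AP` of atomic propositions. -/
abbrev Trace (AP : Type) : Type := ℕ → Set AP

/-- The suffix of a trace from position `j` onwards. -/
def Trace.shift {AP : Type} (t : Trace AP) (j : ℕ) : Trace AP := fun i => t (i + j)

/-- Quantifier-free HyperLTL formulas; trace variables are natural numbers. -/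
inductive QF (AP : Type) : Type where
  | atom : AP → ℕ → QF AP
  | neg  : QF AP → QF AP
  | disj : QF AP → QF AP → QF AP
  | next : QF AP → QF AP
  | untl : QF AP → QF AP → QF AP

/-- HyperLTL formulas: a block of trace quantifiers followed by a
quantifier-free formula (HyperLTL formulas are in prenex normal form). -/
inductive HFormula (AP : Type) : Type where
  | ex  : ℕ → HFormula AP → HFormula AP
  | all : ℕ → HFormula AP → HFormula AP
  | qf  : QF AP → HFormula AP

/-- The simultaneous shift of a trace assignment. -/
def shiftAsg {AP : Type} (As : ℕ → Trace AP) (j : ℕ) : ℕ → Trace AP :=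
  fun x => Trace.shift (As x) j

/-- Semantics of quantifier-free HyperLTL formulas w.r.t. a trace assignment. -/
def QF.sat {AP : Type} : QF AP → (ℕ → Trace AP) → Prop
  | .atom a x, As => a ∈ As x 0
  | .neg ψ, As => ¬ ψ.sat As
  | .disj ψ₁ ψ₂, As => ψ₁.sat As ∨ ψ₂.sat As
  | .next ψ, As => ψ.sat (shiftAsg As 1)
  | .untl ψ₁ ψ₂, As => ∃ j, ψ₂.sat (shiftAsg As j) ∧ ∀ j' < j, ψ₁.sat (shiftAsg As j')

/-- Semantics of HyperLTL formulas w.r.t. a set of traces and a trace assignment. -/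
def HFormula.sat {AP : Type} : HFormula AP → Set (Trace AP) → (ℕ → Trace AP) → Prop
  | .ex x φ, T, As => ∃ t ∈ T, φ.sat T (Function.update As x t)
  | .all x φ, T, As => ∀ t ∈ T, φ.sat T (Function.update As x t)
  | .qf ψ, _, As => ψ.sat As

def QF.freeVars {AP : Type} : QF AP → Set ℕ
  | .atom _ x => {x}
  | .neg ψ => ψ.freeVars
  | .disj ψ₁ ψ₂ => ψ₁.freeVars ∪ ψ₂.freeVars
  | .next ψ => ψ.freeVars
  | .untl ψ₁ ψ₂ => ψ₁.freeVars ∪ ψ₂.freeVars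

def HFormula.freeVars {AP : Type} : HFormula AP → Set ℕ
  | .ex x φ => φ.freeVars \ {x}
  | .all x φ => φ.freeVars \ {x}
  | .qf ψ => ψ.freeVars

/-- A sentence is a formula without free variables. -/
def HFormula.IsSentence {AP : Type} (φ : HFormula AP) : Prop := φ.freeVars = ∅

/-- `T` is a model of `φ` (for sentences the initial assignment is irrelevant). -/
def HModels {AP : Type} (T : Set (Trace AP)) (φ : HFormula AP) : Prop :=
  φ.sat T (fun _ _ => ∅)

/-- A HyperLTL sentence is satisfiable if it has a model. -/
def HSatisfiable {AP : Type} (φ : HFormula AP) : Prop := ∃ T, HModels T φ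

/-! ### A fixed computable injective encoding of HyperLTL formulas -/

def QF.codeWith {AP : Type} (e : AP → ℕ) : QF AP → ℕ
  | .atom a x => Nat.pair 0 (Nat.pair (e a) x)
  | .neg ψ => Nat.pair 1 (ψ.codeWith e)
  | .disj ψ₁ ψ₂ => Nat.pair 2 (Nat.pair (ψ₁.codeWith e) (ψ₂.codeWith e))
  | .next ψ => Nat.pair 3 (ψ.codeWith e)
  | .untl ψ₁ ψ₂ => Nat.pair 4 (Nat.pair (ψ₁.codeWith e) (ψ₂.codeWith e))

def HFormula.codeWith {AP : Type} (e : AP → ℕ) : HFormula AP → ℕ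
  | .ex x φ => Nat.pair 0 (Nat.pair x (φ.codeWith e))
  | .all x φ => Nat.pair 1 (Nat.pair x (φ.codeWith e))
  | .qf ψ => Nat.pair 2 (ψ.codeWith e)

/-- `A` many-one reduces to `B` via a total computable function. -/
def ManyOneRed (A B : Set ℕ) : Prop :=
  ∃ f : ℕ → ℕ, Computable f ∧ ∀ x, x ∈ A ↔ f x ∈ B

/-! ### Transition systems -/

/-- A transition system over `AP`: every vertex has an outgoing edge. -/
structure TS (AP : Type) : Type 1 where
  V : Type
  E : V → V → Prop
  vI : V
  lab : V → Set AP
  succ : ∀ v, ∃ w, E v w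

def TS.IsPath {AP : Type} (S : TS AP) (ρ : ℕ → S.V) : Prop :=
  ∀ i, S.E (ρ i) (ρ (i + 1))

/-- The set of traces of a transition system: traces of paths starting at the
initial vertex. -/
def TS.traces {AP : Type} (S : TS AP) : Set (Trace AP) :=
  {t | ∃ ρ : ℕ → S.V, S.IsPath ρ ∧ ρ 0 = S.vI ∧ t = fun i => S.lab (ρ i)}

/-- A set of naturals is Σ⁰₁ (recursively enumerable) iff it is the domain of a
partial computable function. -/
def IsRE (N : Set ℕ) : Prop :=
  ∃ f : ℕ →. ℕ, Nat.Partrec f ∧ ∀ n, n ∈ N ↔ (f n).Dom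

/-- The set of codes of HyperLTL sentences satisfied by the set of traces of
some finite transition system. -/
def FinStateSatCodes : Set ℕ :=
  {n : ℕ | ∃ φ : HFormula ℕ, φ.IsSentence ∧ HFormula.codeWith id φ = n ∧
    ∃ S : TS ℕ, Finite S.V ∧ HModels S.traces φ}

/-!
Membership in `Σ⁰₁`. Over a fixed finite transition system, an assignment of traces to `n` variables
is an infinite word, and every HyperLTL formula defines a language of such words that is saturated
by a congruence of finite index (Büchi's theorem, proved with Ramsey's theorem and temporal
testers). Quantifiers can therefore be restricted to ultimately periodic traces of some common
shape, so a finite table listing the satisfying assignments of lassos for each subformula certifies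
that a sentence holds, and checking such a table is primitive recursive.

Hardness. A trace on which each of five propositions holds exactly once encodes a tuple of five
numbers. A `∃∀∃*` sentence can state that every encoded tuple is the conclusion of a Horn rule whose
premises are encoded as well, where the rules use only constants, bounded offsets and `<`. Premises
have smaller rank, so every encoded tuple is derivable, and a derivable tuple needs only finitely
many others. The graph of a partial recursive function has such a Horn system, so its domain reduces
to finite-state satisfiability.
-/

namespace HyperLTL

/-! ### Languages of infinite words recognised by finite congruences -/

section Words

variable {A B C : Type*}

/-- The finite word `w a, w (a + 1), …, w (b - 1)`. -/
def factor (w : ℕ → A) (a b : ℕ) : List A := (List.range' a (b - a)).map w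

@[simp] theorem length_factor (w : ℕ → A) (a b : ℕ) : (factor w a b).length = b - a := by
  simp [factor]

theorem factor_append (w : ℕ → A) {a b c : ℕ} (hab : a ≤ b) (hbc : b ≤ c) :
    factor w a b ++ factor w b c = factor w a c := by
  rw [factor, factor, ← List.map_append, factor]
  congr 1
  have := List.range'_append_1 (s := a) (m := b - a) (n := c - b)
  rwa [show a + (b - a) = b by omega, show b - a + (c - b) = c - a by omega] at this

theorem getElem?_factor (w : ℕ → A) {a b i : ℕ} (hi : a + i < b) :
    (factor w a b)[i]? = some (w (a + i)) := by
  simp [factor, List.getElem?_range' (show i < b - a by omega)]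

theorem eq_factor_iff {u : List A} {w : ℕ → A} {a b : ℕ} :
    u = factor w a b ↔ u.length = b - a ∧ ∀ i, a + i < b → u[i]? = some (w (a + i)) := by
  constructor
  · rintro rfl
    exact ⟨length_factor w a b, fun i => getElem?_factor w⟩
  · rintro ⟨hlen, hu⟩
    refine List.ext_getElem? fun i => ?_
    rcases lt_or_ge i (b - a) with hi | hi
    · rw [hu i (by omega), getElem?_factor w (by omega)]
    · rw [List.getElem?_eq_none (by omega), List.getElem?_eq_none (by simpa using hi)]

theorem forall₂_factor_iff {r : B → A → Prop} {w : ℕ → B} {v : ℕ → A} {a b : ℕ} :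
    List.Forall₂ r (factor w a b) (factor v a b) ↔ ∀ i, a ≤ i → i < b → r (w i) (v i) := by
  simp only [factor, List.forall₂_map_left_iff, List.forall₂_map_right_iff, List.forall₂_same,
    List.mem_range'_1]
  exact forall_congr' fun i => ⟨fun h h₁ h₂ => h (by omega), fun h h' => h (by omega) (by omega)⟩

theorem forall₂_append_left_iff {r : B → A → Prop} {u v : List B} {x : List A} :
    List.Forall₂ r (u ++ v) x ↔ ∃ y z, List.Forall₂ r u y ∧ List.Forall₂ r v z ∧ x = y ++ z := by
  constructor
  · intro h
    exact ⟨_, _, List.forall₂_take_append _ _ _ (List.Forall₂.flip h) |>.flip,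
      List.forall₂_drop_append _ _ _ (List.Forall₂.flip h) |>.flip,
      (List.take_append_drop _ _).symm⟩
  · rintro ⟨y, z, hy, hz, rfl⟩
    exact List.rel_append hy hz

/-- A factorisation of an infinite word into nonempty finite words: the cut points `c k`. -/
structure IsCut (c : ℕ → ℕ) : Prop where
  zero : c 0 = 0
  strictMono : StrictMono c

theorem IsCut.exists_block {c : ℕ → ℕ} (hc : IsCut c) (i : ℕ) : ∃ k, c k ≤ i ∧ i < c (k + 1) := by
  have h0 : c 0 ≤ i := hc.zero.trans_le i.zero_le
  refine ⟨Nat.findGreatest (c · ≤ i) i, Nat.findGreatest_spec (P := (c · ≤ i)) i.zero_le h0, ?_⟩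
  by_contra! h
  have := Nat.le_findGreatest (P := (c · ≤ i)) ((hc.strictMono.id_le _).trans h) h
  exact Nat.not_succ_le_self _ this

theorem IsCut.block_unique {c : ℕ → ℕ} (hc : IsCut c) {i k l : ℕ} (hk : c k ≤ i)
    (hk' : i < c (k + 1)) (hl : c l ≤ i) (hl' : i < c (l + 1)) : k = l := by
  have h₁ := hc.strictMono.lt_iff_lt.1 (hk.trans_lt hl')
  have h₂ := hc.strictMono.lt_iff_lt.1 (hl.trans_lt hk')
  omega

theorem IsCut.exists_word {c : ℕ → ℕ} (hc : IsCut c) (u : ℕ → List A)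
    (hu : ∀ k, (u k).length = c (k + 1) - c k) :
    ∃ w : ℕ → A, ∀ k, factor w (c k) (c (k + 1)) = u k := by
  choose block le_block block_lt using hc.exists_block
  have hlt (i) : i - c (block i) < (u (block i)).length := by
    have := le_block i
    have := block_lt i
    rw [hu]; omega
  refine ⟨fun i => (u (block i))[i - c (block i)]'(hlt i), fun k => ?_⟩
  refine (eq_factor_iff.2 ⟨hu k, fun i hi => ?_⟩).symm
  have hk : block (c k + i) = k :=
    hc.block_unique (le_block _) (block_lt _) (by omega) hi
  rw [← List.getElem?_eq_getElem, hk, Nat.add_sub_cancel_left]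

/-- `h` recognises the `ω`-language `L`: its kernel is a congruence of finite words, and membership
in `L` only depends on the values of `h` on the blocks of a factorisation. -/
structure Recognizes (h : List A → C) (L : Set (ℕ → A)) : Prop where
  append : ∀ {u u' v v' : List A}, h u = h u' → h v = h v' → h (u ++ v) = h (u' ++ v')
  saturated : ∀ {w w' : ℕ → A} {c c' : ℕ → ℕ}, IsCut c → IsCut c' →
    (∀ k, h (factor w (c k) (c (k + 1))) = h (factor w' (c' k) (c' (k + 1)))) → w ∈ L → w' ∈ L

/-- `L` is recognised by a congruence with at most `N` classes; these are the `ω`-regular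
languages, measured by the size of a recogniser. -/
def Recognizable (N : ℕ) (L : Set (ℕ → A)) : Prop :=
  ∃ (C : Type) (_ : Finite C) (h : List A → C), Nat.card C ≤ N ∧ Recognizes h L

theorem Recognizable.compl {N : ℕ} {L : Set (ℕ → A)} : Recognizable N L → Recognizable N Lᶜ := by
  rintro ⟨C, hC, h, hcard, hL⟩
  exact ⟨C, hC, h, hcard, hL.append, fun hc hc' hh hw hw' =>
    hw (hL.saturated hc' hc (fun k => (hh k).symm) hw')⟩

theorem Recognizable.inter {M N : ℕ} {K L : Set (ℕ → A)} :
    Recognizable M K → Recognizable N L → Recognizable (M * N) (K ∩ L) := by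
  rintro ⟨C, hC, g, hg, hK⟩ ⟨D, hD, h, hh, hL⟩
  refine ⟨C × D, inferInstance, fun u => (g u, h u), ?_, ?_, ?_⟩
  · rw [Nat.card_prod]
    exact Nat.mul_le_mul hg hh
  · intro u u' v v' hu hv
    rw [Prod.mk.injEq] at hu hv ⊢
    exact ⟨hK.append hu.1 hv.1, hL.append hu.2 hv.2⟩
  · intro w w' c c' hc hc' hb hw
    simp only [Prod.mk.injEq] at hb
    exact ⟨hK.saturated hc hc' (fun k => (hb k).1) hw.1,
      hL.saturated hc hc' (fun k => (hb k).2) hw.2⟩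

theorem Recognizable.mono {M N : ℕ} (hMN : M ≤ N) {L : Set (ℕ → A)} :
    Recognizable M L → Recognizable N L := by
  rintro ⟨C, hC, h, hcard, hL⟩
  exact ⟨C, hC, h, hcard.trans hMN, hL⟩

theorem Recognizes.exists_forall₂ {h : List A → C} {L : Set (ℕ → A)} (hL : Recognizes h L)
    (r : B → A → Prop) :
    Recognizes (fun u => {x | ∃ v, List.Forall₂ r u v ∧ h v = x})
      {w : ℕ → B | ∃ v ∈ L, ∀ i, r (w i) (v i)} where
  append {u u' v v'} hu hv := by
    have key {u u' v v' : List B}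
        (hu : ∀ x, List.Forall₂ r u x → ∃ x', List.Forall₂ r u' x' ∧ h x' = h x)
        (hv : ∀ x, List.Forall₂ r v x → ∃ x', List.Forall₂ r v' x' ∧ h x' = h x) :
        {x | ∃ y, List.Forall₂ r (u ++ v) y ∧ h y = x} ⊆
          {x | ∃ y, List.Forall₂ r (u' ++ v') y ∧ h y = x} := by
      rintro _ ⟨y, hy, rfl⟩
      obtain ⟨y₁, y₂, h₁, h₂, rfl⟩ := forall₂_append_left_iff.1 hy
      obtain ⟨z₁, hz₁, e₁⟩ := hu y₁ h₁
      obtain ⟨z₂, hz₂, e₂⟩ := hv y₂ h₂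
      exact ⟨z₁ ++ z₂, forall₂_append_left_iff.2 ⟨z₁, z₂, hz₁, hz₂, rfl⟩, hL.append e₁ e₂⟩
    exact (key (fun x hx => hu.subset ⟨x, hx, rfl⟩) fun x hx => hv.subset ⟨x, hx, rfl⟩).antisymm
      (key (fun x hx => hu.superset ⟨x, hx, rfl⟩) fun x hx => hv.superset ⟨x, hx, rfl⟩)
  saturated {w w' c c'} hc hc' hb := by
    rintro ⟨v, hvL, hv⟩
    have (k : ℕ) : ∃ u, List.Forall₂ r (factor w' (c' k) (c' (k + 1))) u ∧
        h u = h (factor v (c k) (c (k + 1))) :=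
      (hb k).subset ⟨_, forall₂_factor_iff.2 fun i _ _ => hv i, rfl⟩
    choose u hu hhu using this
    obtain ⟨v', hv'⟩ := hc'.exists_word u fun k => by rw [← (hu k).length_eq, length_factor]
    refine ⟨v', hL.saturated hc hc' (fun k => by rw [hv', hhu]) hvL, fun i => ?_⟩
    obtain ⟨k, hk, hk'⟩ := hc'.exists_block i
    exact forall₂_factor_iff.1 ((hv' k).symm ▸ hu k) i hk hk'

theorem card_set (α : Type*) [Finite α] : Nat.card (Set α) = 2 ^ Nat.card α := by
  have := Fintype.ofFinite α
  simp only [Nat.card_eq_fintype_card, Fintype.card_set]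

theorem Recognizable.exists_forall₂ {N : ℕ} {L : Set (ℕ → A)} (r : B → A → Prop) :
    Recognizable N L → Recognizable (2 ^ N) {w : ℕ → B | ∃ v ∈ L, ∀ i, r (w i) (v i)} := by
  rintro ⟨C, hC, h, hcard, hL⟩
  refine ⟨Set C, inferInstance, _, ?_, hL.exists_forall₂ r⟩
  rw [card_set]
  exact Nat.pow_le_pow_right two_pos hcard

end Words

/-! ### Ultimately periodic witnesses -/

section Lasso

variable {A B C : Type*}

open Filter in
theorem exists_monochromatic [Finite C] (color : ℕ → ℕ → C) :
    ∃ (f : ℕ → ℕ) (c : C), StrictMono f ∧ ∀ k, color (f k) (f (k + 1)) = c := by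
  have pick (g : ℕ → C) : ∃ c, ∀ᶠ j in (hyperfilter ℕ : Filter ℕ), g j = c :=
    Ultrafilter.eventually_exists_iff.1 (Eventually.of_forall fun j => ⟨g j, rfl⟩)
  choose limit h_limit using fun i => pick (color i)
  obtain ⟨c, hc⟩ := pick limit
  have h_large (n : ℕ) : ∀ᶠ j in (hyperfilter ℕ : Filter ℕ), n < j :=
    Nat.hyperfilter_le_atTop (eventually_gt_atTop n)
  have h_next (i : {i // limit i = c}) : ∃ j : {j // limit j = c}, i.1 < j.1 ∧ color i j = c := by
    obtain ⟨j, hij, hj, hcol⟩ := ((h_large i).and (hc.and (h_limit i))).exists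
    exact ⟨⟨j, hj⟩, hij, hcol.trans i.2⟩
  choose next lt_next color_next using h_next
  obtain ⟨i₀, hi₀⟩ := hc.exists
  let f (k : ℕ) : {i // limit i = c} := next^[k] ⟨i₀, hi₀⟩
  have hf (k : ℕ) : f (k + 1) = next (f k) := Function.iterate_succ_apply' _ _ _
  refine ⟨fun k => (f k).1, c, strictMono_nat_of_lt_succ fun k => ?_, fun k => ?_⟩
  · simpa only [hf] using lt_next (f k)
  · simpa only [hf] using color_next (f k)

/-- The word `w` is ultimately periodic: both its transient and a period have length `q`. -/
def IsLasso (q : ℕ) (w : ℕ → A) : Prop := ∀ i, q ≤ i → w (i + q) = w i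

theorem IsLasso.add_mul {q : ℕ} {w : ℕ → A} (hw : IsLasso q w) {i : ℕ} (hi : q ≤ i) (n : ℕ) :
    w (i + q * n) = w i := by
  induction n with
  | zero => rfl
  | succ n ih => rw [Nat.mul_succ, ← Nat.add_assoc, hw _ (by omega), ih]

theorem IsLasso.of_dvd {q q' : ℕ} {w : ℕ → A} (hw : IsLasso q w) (hq' : 0 < q') (h : q ∣ q') :
    IsLasso q' w := by
  intro i hi
  have := Nat.le_of_dvd hq' h
  obtain ⟨n, rfl⟩ := h
  exact hw.add_mul (by omega) n

theorem IsLasso.of_transient_of_period {s p q : ℕ} {w : ℕ → A} (hw : ∀ i, s ≤ i → w (i + p) = w i)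
    (hs : s ≤ q) (hp : p ∣ q) : IsLasso q w := by
  obtain ⟨n, rfl⟩ := hp
  suffices ∀ m i, s ≤ i → w (i + p * m) = w i from fun i hi => this n i (by omega)
  intro m
  induction m with
  | zero => exact fun _ _ => rfl
  | succ m ih =>
    intro i hi
    rw [Nat.mul_succ, ← Nat.add_assoc, hw _ (by omega), ih i hi]

theorem exists_short_power [Finite C] {h : List A → C}
    (hh : ∀ {u u' v v'}, h u = h u' → h v = h v' → h (u ++ v) = h (u' ++ v'))
    {X : Language A} {u : List A} {n : ℕ} (hu : u ∈ X ^ n) (hn : 0 < n) :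
    ∃ m, 0 < m ∧ m ≤ Nat.card C ∧ ∃ u' ∈ X ^ m, h u' = h u := by
  induction n using Nat.strong_induction_on generalizing u with
  | _ n ih =>
  rcases le_or_gt n (Nat.card C) with hle | hlt
  · exact ⟨n, hn, hle, u, hu, rfl⟩
  obtain ⟨us, rfl, hlen, hX⟩ := Language.mem_pow.1 hu
  obtain ⟨i, j, hij, he⟩ : ∃ i j : Fin n, i < j ∧
      h (us.take (i + 1)).flatten = h (us.take (j + 1)).flatten := by
    have hcard : ¬ Function.Injective fun i : Fin n => h (us.take (i + 1)).flatten := fun hinj =>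
      hlt.not_ge (by simpa using Nat.card_le_card_of_injective _ hinj)
    obtain ⟨i, j, he, hne⟩ := Function.not_injective_iff.1 hcard
    exact hne.lt_or_gt.elim (fun hij => ⟨i, j, hij, he⟩) fun hij => ⟨j, i, hij, he.symm⟩
  have hsplit : us.flatten = (us.take (j + 1)).flatten ++ (us.drop (j + 1)).flatten := by
    rw [← List.flatten_append, List.take_append_drop]
  have hmem : (us.take (i + 1) ++ us.drop (j + 1)).flatten ∈ X ^ (i + 1 + (n - (j + 1))) := by
    refine Language.mem_pow.2 ⟨_, rfl, by simp; omega, fun y hy => hX y ?_⟩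
    exact (List.mem_append.1 hy).elim List.mem_of_mem_take List.mem_of_mem_drop
  obtain ⟨m, hm, hmC, u', hu', he'⟩ := ih _ (by omega) hmem (by omega)
  refine ⟨m, hm, hmC, u', hu', he'.trans ?_⟩
  rw [hsplit, List.flatten_append]
  exact hh he rfl

theorem IsLasso.factor_mul_eq {q : ℕ} {w : ℕ → A} (hw : IsLasso q w) {a : ℕ} (ha : 0 < a) :
    factor w (q * a) (q * (a + 1)) = factor w q (q * 2) := by
  obtain ⟨a, rfl⟩ := Nat.exists_eq_add_one.2 ha
  refine eq_factor_iff.2 ⟨?_, fun i hi => ?_⟩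
  · simp only [length_factor, Nat.mul_add, Nat.mul_one, Nat.mul_two]
    omega
  · rw [getElem?_factor w (by simp only [Nat.mul_add, Nat.mul_one, Nat.mul_two] at hi ⊢; omega),
      ← hw.add_mul (Nat.le_add_right q i) a, Nat.mul_add]
    congr 2
    omega

/-- The words over `A` that are letterwise `r`-related to the finite word `u`. -/
def relatedWords (r : B → A → Prop) (u : List B) : Language A := {x | List.Forall₂ r u x}

theorem IsLasso.mem_relatedWords_pow_iff {q : ℕ} {w : ℕ → B} (hw : IsLasso q w) {r : B → A → Prop}
    {a : ℕ} (ha : 0 < a) {n : ℕ} {u : List A} :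
    u ∈ relatedWords r (factor w q (q * 2)) ^ n ↔
      List.Forall₂ r (factor w (q * a) (q * (a + n))) u := by
  induction n generalizing a u with
  | zero => simp [factor]
  | succ n ih =>
    rw [← factor_append w (b := q * (a + 1)) (Nat.mul_le_mul_left q (by omega))
        (Nat.mul_le_mul_left q (by omega)), hw.factor_mul_eq ha, forall₂_append_left_iff, pow_succ',
      Language.mem_mul, show a + (n + 1) = a + 1 + n by omega]
    constructor
    · rintro ⟨x, hx, y, hy, rfl⟩
      exact ⟨x, y, hx, (ih a.succ_pos).1 hy, rfl⟩
    · rintro ⟨x, y, hx, hy, rfl⟩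
      exact ⟨x, hx, y, (ih a.succ_pos).2 hy, rfl⟩

/-- The sequence of cut points `0, f 0, f 1, …`. -/
def consZero (f : ℕ → ℕ) : ℕ → ℕ
  | 0 => 0
  | k + 1 => f k

theorem isCut_consZero {f : ℕ → ℕ} (hf : StrictMono f) (h0 : 0 < f 0) : IsCut (consZero f) where
  zero := rfl
  strictMono := strictMono_nat_of_lt_succ fun k => by
    cases k with
    | zero => exact h0
    | succ k => exact hf k.lt_succ_self

theorem exists_lasso_word {r : B → A → Prop} {w : ℕ → B} {s p : ℕ} (hs : 0 < s) (hp : 0 < p)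
    {x y : List A} (hx : List.Forall₂ r (factor w 0 s) x)
    (hy : ∀ k, List.Forall₂ r (factor w (s + p * k) (s + p * (k + 1))) y) :
    ∃ v : ℕ → A, (∀ i, r (w i) (v i)) ∧ factor v 0 s = x ∧
      (∀ k, factor v (s + p * k) (s + p * (k + 1)) = y) ∧ ∀ i, s ≤ i → v (i + p) = v i := by
  let c := consZero fun k => s + p * k
  have h_cut : IsCut c := isCut_consZero (strictMono_nat_of_lt_succ fun k => by
    rw [Nat.mul_succ]; omega) hs
  have h_rel : ∀ k, List.Forall₂ r (factor w (c k) (c (k + 1)))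
      (Nat.casesOn k x fun _ => y) := fun
    | 0 => hx
    | k + 1 => hy k
  obtain ⟨v, hv⟩ := h_cut.exists_word (fun k => Nat.casesOn k x fun _ => y) fun k => by
    rw [← (h_rel k).length_eq, length_factor]
  have h_period (k : ℕ) : factor v (s + p * k) (s + p * (k + 1)) = y := hv (k + 1)
  refine ⟨v, fun i => ?_, hv 0, h_period, fun i hi => ?_⟩
  · obtain ⟨k, hk, hk'⟩ := h_cut.exists_block i
    exact forall₂_factor_iff.1 (hv k ▸ h_rel k) i hk hk'
  · obtain ⟨j, k, hj, rfl⟩ : ∃ j k, j < p ∧ i = s + p * k + j :=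
      ⟨(i - s) % p, (i - s) / p, Nat.mod_lt _ hp, by have := Nat.div_add_mod (i - s) p; omega⟩
    have h₁ := getElem?_factor v (a := s + p * k) (b := s + p * (k + 1)) (i := j)
      (by rw [Nat.mul_succ]; omega)
    have h₂ := getElem?_factor v (a := s + p * (k + 1)) (b := s + p * (k + 1 + 1)) (i := j)
      (by rw [Nat.mul_succ p (k + 1)]; omega)
    rw [h_period] at h₁ h₂
    have := Option.some.inj (h₂.symm.trans h₁)
    rwa [Nat.mul_succ, show s + (p * k + p) + j = s + p * k + j + p by omega] at this

theorem Recognizes.exists_short_factor [Finite C] {h : List A → C} {L : Set (ℕ → A)}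
    (hL : Recognizes h L) {r : B → A → Prop} {q : ℕ} {w : ℕ → B} (hw : IsLasso q w)
    {v : ℕ → A} (hv : ∀ i, r (w i) (v i)) {a b : ℕ} (ha : 0 < a) (hab : a < b) :
    ∃ n x, 0 < n ∧ n ≤ Nat.card C ∧ h x = h (factor v (q * a) (q * b)) ∧
      ∀ a', 0 < a' → List.Forall₂ r (factor w (q * a') (q * (a' + n))) x := by
  have h_mem : factor v (q * a) (q * b) ∈ relatedWords r (factor w q (q * 2)) ^ (b - a) := by
    rw [hw.mem_relatedWords_pow_iff ha, Nat.add_sub_of_le hab.le]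
    exact forall₂_factor_iff.2 fun i _ _ => hv i
  obtain ⟨n, hn, hnC, x, hx, hhx⟩ :=
    exists_short_power (h := h) hL.append h_mem (Nat.sub_pos_of_lt hab)
  exact ⟨n, x, hn, hnC, hhx, fun a' ha' => (hw.mem_relatedWords_pow_iff ha').1 hx⟩

theorem Recognizes.exists_lasso [Finite C] {h : List A → C} {L : Set (ℕ → A)}
    (hL : Recognizes h L) {r : B → A → Prop} {q : ℕ} (hq : 0 < q) {w : ℕ → B} (hw : IsLasso q w)
    {v : ℕ → A} (hvL : v ∈ L) (hv : ∀ i, r (w i) (v i)) :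
    ∃ m n, m ≤ Nat.card C ∧ 0 < n ∧ n ≤ Nat.card C ∧ ∃ v' ∈ L, (∀ i, r (w i) (v' i)) ∧
      ∀ i, q * (m + 1) ≤ i → v' (i + q * n) = v' i := by
  obtain ⟨f, c, hf, hc⟩ := exists_monochromatic fun i j => h (factor v (q * (i + 2)) (q * (j + 2)))
  obtain ⟨m, x, -, hmC, hhx, hx⟩ := hL.exists_short_factor hw hv one_pos
    (show 1 < f 0 + 2 by omega)
  obtain ⟨n, y, hn, hnC, hhy, hy⟩ := hL.exists_short_factor hw hv (f 0 + 1).succ_pos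
    (show f 0 + 2 < f 1 + 2 from Nat.add_lt_add_right (hf zero_lt_one) 2)
  have hs : 0 < q * (m + 1) := Nat.mul_pos hq m.succ_pos
  have hp : 0 < q * n := Nat.mul_pos hq hn
  have hx' : List.Forall₂ r (factor w 0 (q * (m + 1))) (factor v 0 q ++ x) := by
    rw [← factor_append w q.zero_le (Nat.le_mul_of_pos_right q m.succ_pos), forall₂_append_left_iff]
    have := hx 1 one_pos
    rw [Nat.mul_one, Nat.add_comm 1 m] at this
    exact ⟨_, _, forall₂_factor_iff.2 fun i _ _ => hv i, this, rfl⟩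
  have hy' (k : ℕ) :
      List.Forall₂ r (factor w (q * (m + 1) + q * n * k) (q * (m + 1) + q * n * (k + 1))) y := by
    convert hy (m + 1 + n * k) (by omega) using 2 <;> ring
  obtain ⟨v', hv', h_head, h_tail, h_period⟩ := exists_lasso_word hs hp hx' hy'
  have h_cut : IsCut (consZero fun k => q * (f k + 2)) := isCut_consZero
    (fun _ _ hij => Nat.mul_lt_mul_of_pos_left (Nat.add_lt_add_right (hf hij) 2) hq)
    (Nat.mul_pos hq (Nat.succ_pos _))
  have h_cut' : IsCut (consZero fun k => q * (m + 1) + q * n * k) := isCut_consZero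
    (fun _ _ hij => Nat.add_lt_add_left (Nat.mul_lt_mul_of_pos_left hij hp) _) hs
  refine ⟨m, n, hmC, hn, hnC, v', ?_, hv', h_period⟩
  refine hL.saturated h_cut h_cut' (fun k => ?_) hvL
  cases k with
  | zero =>
    have h_split : factor v 0 (q * (f 0 + 2)) = factor v 0 q ++ factor v q (q * (f 0 + 2)) :=
      (factor_append v q.zero_le (Nat.le_mul_of_pos_right q (by omega))).symm
    rw [Nat.mul_one] at hhx
    exact (congrArg h h_split).trans ((hL.append rfl hhx.symm).trans (congrArg h h_head.symm))
  | succ k => exact (hc k).trans (((hc 0).symm.trans hhy.symm).trans (congrArg h (h_tail k).symm))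

theorem Recognizable.exists_isLasso {N : ℕ} {L : Set (ℕ → A)} (hL : Recognizable N L)
    {r : B → A → Prop} {q : ℕ} (hq : 0 < q) {w : ℕ → B} (hw : IsLasso q w)
    {v : ℕ → A} (hvL : v ∈ L) (hv : ∀ i, r (w i) (v i)) :
    ∃ v' ∈ L, (∀ i, r (w i) (v' i)) ∧ IsLasso (q * (N + 1).factorial) v' := by
  obtain ⟨C, hC, h, hN, hL⟩ := hL
  obtain ⟨m, n, hm, hn, hn', v', hv'L, hv', h_period⟩ := hL.exists_lasso hq hw hvL hv
  refine ⟨v', hv'L, hv', .of_transient_of_period h_period ?_ ?_⟩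
  · exact Nat.mul_le_mul_left q ((Nat.succ_le_succ (hm.trans hN)).trans (Nat.self_le_factorial _))
  · exact Nat.mul_dvd_mul_left q (Nat.dvd_factorial hn (by omega))

end Lasso

/-! ### Büchi conditions and temporal testers -/

section Closure

variable {A B : Type}

open Filter

theorem Recognizable.preimage {N : ℕ} {L : Set (ℕ → B)} (f : A → B) :
    Recognizable N L → Recognizable N {w : ℕ → A | f ∘ w ∈ L} := by
  rintro ⟨C, hC, h, hcard, hL⟩
  refine ⟨C, hC, fun u => h (u.map f), hcard, fun hu hv => ?_, fun hc hc' hb hw => ?_⟩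
  · simp only [List.map_append]
    exact hL.append hu hv
  · exact hL.saturated hc hc' (fun k => by simpa only [factor, List.map_map] using hb k) hw

theorem Recognizable.iInter {N : ℕ} {K : Type} [Finite K] {L : K → Set (ℕ → A)}
    (hL : ∀ k, Recognizable N (L k)) : Recognizable (N ^ Nat.card K) (⋂ k, L k) := by
  have := Fintype.ofFinite K
  choose C hC h hcard hL using hL
  refine ⟨∀ k, C k, inferInstance, fun u k => h k u, ?_, fun hu hv => ?_, fun hc hc' hb hw => ?_⟩
  · rw [Nat.card_pi, Nat.card_eq_fintype_card]
    exact Finset.prod_le_pow_card _ _ _ fun k _ => hcard k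
  · simp only [funext_iff] at hu hv ⊢
    exact fun k => (hL k).append (hu k) (hv k)
  · simp only [funext_iff] at hb
    exact Set.mem_iInter.2 fun k => (hL k).saturated hc hc' (fun i => hb i k)
      (Set.mem_iInter.1 hw k)

theorem IsCut.frequently_iff {c : ℕ → ℕ} (hc : IsCut c) {w : ℕ → A} {P : A → Prop} :
    (∃ᶠ i in atTop, P (w i)) ↔ ∃ᶠ k in atTop, ∃ a ∈ factor w (c k) (c (k + 1)), P a := by
  simp only [frequently_atTop, factor, List.mem_map, List.mem_range'_1]
  constructor
  · intro h K
    obtain ⟨i, hi, hP⟩ := h (c K)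
    obtain ⟨k, hk, hk'⟩ := hc.exists_block i
    have := hc.strictMono.lt_iff_lt.1 (hi.trans_lt hk')
    exact ⟨k, by omega, w i, ⟨i, by omega, rfl⟩, hP⟩
  · intro h I
    obtain ⟨k, hk, _, ⟨i, hi, rfl⟩, hP⟩ := h I
    exact ⟨i, (hk.trans (hc.strictMono.id_le k)).trans hi.1, hP⟩

theorem recognizable_frequently (P : A → Prop) :
    Recognizable 2 {w : ℕ → A | ∃ᶠ i in atTop, P (w i)} := by
  refine ⟨Prop, inferInstance, fun u => ∃ a ∈ u, P a, by simp, fun hu hv => ?_,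
    fun hc hc' hb hw => ?_⟩
  · simp only [List.mem_append, or_and_right, exists_or, hu, hv]
  · rw [Set.mem_ofPred_eq, hc'.frequently_iff]
    simp only [← hb]
    exact hc.frequently_iff.1 hw

theorem IsCut.head?_factor {c : ℕ → ℕ} (hc : IsCut c) (w : ℕ → A) (k : ℕ) :
    (factor w (c k) (c (k + 1))).head? = some (w (c k)) := by
  rw [List.head?_eq_getElem?, getElem?_factor w (hc.strictMono k.lt_succ_self)]
  rfl

theorem IsCut.getLast?_factor {c : ℕ → ℕ} (hc : IsCut c) (w : ℕ → A) (k : ℕ) :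
    (factor w (c k) (c (k + 1))).getLast? = some (w (c (k + 1) - 1)) := by
  have := hc.strictMono (Nat.lt_add_one k)
  rw [List.getLast?_eq_getElem?, length_factor, getElem?_factor w (by omega)]
  congr 2
  omega

theorem recognizable_first (P : A → Prop) : Recognizable 3 {w : ℕ → A | P (w 0)} := by
  refine ⟨Option Prop, inferInstance, fun u => u.head?.map P, by simp, fun hu hv => ?_,
    fun hc hc' hb hw => ?_⟩
  · simp only [List.head?_append, Option.map_or] at hu hv ⊢
    rw [hu, hv]
  · have := hb 0
    rw [hc.head?_factor, hc'.head?_factor, hc.zero, hc'.zero] at this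
    exact (Option.some.inj this).mp hw

theorem isChain_factor_iff {R : A → A → Prop} {w : ℕ → A} {a b : ℕ} :
    (factor w a b).IsChain R ↔ ∀ i, a ≤ i → i + 1 < b → R (w i) (w (i + 1)) := by
  simp only [List.isChain_iff_getElem, factor, List.getElem_map, List.getElem_range',
    List.length_map, List.length_range', one_mul]
  constructor
  · intro h i hi hib
    have := h (i - a) (by omega)
    rwa [← Nat.add_assoc, Nat.add_sub_of_le hi] at this
  · intro h i hi
    exact h (a + i) (by omega) (by omega)

theorem IsCut.chain_iff {c : ℕ → ℕ} (hc : IsCut c) {w : ℕ → A} {R : A → A → Prop} :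
    (∀ i, R (w i) (w (i + 1))) ↔ ∀ k, (factor w (c k) (c (k + 1))).IsChain R ∧
      ∀ a ∈ (factor w (c k) (c (k + 1))).getLast?,
        ∀ b ∈ (factor w (c (k + 1)) (c (k + 1 + 1))).head?, R a b := by
  simp only [hc.head?_factor, hc.getLast?_factor, Option.mem_some_iff, forall_eq',
    isChain_factor_iff]
  constructor
  · intro h k
    have := hc.strictMono (Nat.lt_add_one k)
    refine ⟨fun i _ _ => h i, ?_⟩
    have := h (c (k + 1) - 1)
    rwa [Nat.sub_add_cancel (by omega)] at this
  · intro h i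
    obtain ⟨k, hk, hk'⟩ := hc.exists_block i
    rcases (Nat.succ_le_of_lt hk').lt_or_eq with hlt | heq
    · exact (h k).1 i hk hlt
    · have := (h k).2
      rwa [← heq] at this

theorem recognizable_chain [Finite A] (R : A → A → Prop) :
    Recognizable ((Nat.card A + 1) * ((Nat.card A + 1) * 2))
      {w : ℕ → A | ∀ i, R (w i) (w (i + 1))} := by
  refine ⟨Option A × Option A × Prop, inferInstance, fun u => (u.head?, u.getLast?, u.IsChain R),
    by simp [Nat.card_prod, Finite.card_option], fun hu hv => ?_, fun hc hc' hb hw => ?_⟩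
  · simp only [Prod.mk.injEq] at hu hv ⊢
    simp only [List.head?_append, List.getLast?_append, List.isChain_append, hu, hv, true_and]
  · simp only [Prod.mk.injEq] at hb
    rw [Set.mem_ofPred_eq, hc'.chain_iff]
    simp only [← (hb _).1, ← (hb _).2.1, ← (hb _).2.2]
    exact hc.chain_iff.1 hw

end Closure

section Automata

variable {A Q K Q₁ Q₂ K₁ K₂ : Type}

open Filter

/-- A generalised Büchi automaton over `A`: each of the sets `fair k` of states has to be visited
infinitely often. Initial and accepting states are supplied where automata are used. -/
structure BuchiAutomaton (A Q K : Type) where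
  step : Q → A → Q → Prop
  fair : K → Q → Prop

namespace BuchiAutomaton

/-- `ρ` is a fair run of the automaton on the word `w`. -/
def IsFairRun (M : BuchiAutomaton A Q K) (w : ℕ → A) (ρ : ℕ → Q) : Prop :=
  (∀ i, M.step (ρ i) (w i) (ρ (i + 1))) ∧ ∀ k, ∃ᶠ i in atTop, M.fair k (ρ i)

/-- The size of the recogniser for an automaton with `m` states and `k` fairness conditions. -/
def recognizerSize (m k : ℕ) : ℕ :=
  2 ^ (3 * ((m * m + 1) * ((m * m + 1) * 2) * 2 ^ k))

theorem recognizable [Finite Q] [Finite K] (M : BuchiAutomaton A Q K) (init : Q → Prop) :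
    Recognizable (recognizerSize (Nat.card Q) (Nat.card K))
      {w | ∃ ρ, init (ρ 0) ∧ M.IsFairRun w ρ} := by
  let runs : Set (ℕ → Q × Q) := {σ | init (σ 0).1} ∩
    ({σ | ∀ i, (σ i).2 = (σ (i + 1)).1} ∩ ⋂ k, {σ | ∃ᶠ i in atTop, M.fair k (σ i).1})
  have h_runs : Recognizable _ runs := (recognizable_first fun s : Q × Q => init s.1).inter <|
    (recognizable_chain fun s t : Q × Q => s.2 = t.1).inter <|
      .iInter fun k => recognizable_frequently fun s : Q × Q => M.fair k s.1
  rw [Nat.card_prod] at h_runs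
  have h_lang : {w | ∃ ρ, init (ρ 0) ∧ M.IsFairRun w ρ} =
      {w | ∃ σ ∈ runs, ∀ i, M.step (σ i).1 (w i) (σ i).2} := by
    ext w
    constructor
    · rintro ⟨ρ, h_init, h_step, h_fair⟩
      exact ⟨fun i => (ρ i, ρ (i + 1)), ⟨h_init, fun _ => rfl, Set.mem_iInter.2 h_fair⟩, h_step⟩
    · rintro ⟨σ, ⟨h_init, h_chain, h_fair⟩, h_step⟩
      exact ⟨fun i => (σ i).1, h_init, fun i => by simpa only [← h_chain i] using h_step i,
        Set.mem_iInter.1 h_fair⟩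
  rw [h_lang]
  exact h_runs.exists_forall₂ fun (a : A) s => M.step s.1 a s.2

/-- The synchronous product of two automata. -/
def prod (M₁ : BuchiAutomaton A Q₁ K₁) (M₂ : BuchiAutomaton A Q₂ K₂) :
    BuchiAutomaton A (Q₁ × Q₂) (K₁ ⊕ K₂) where
  step s a t := M₁.step s.1 a t.1 ∧ M₂.step s.2 a t.2
  fair := Sum.elim (fun k s => M₁.fair k s.1) fun k s => M₂.fair k s.2

theorem isFairRun_prod_iff {M₁ : BuchiAutomaton A Q₁ K₁} {M₂ : BuchiAutomaton A Q₂ K₂}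
    {w : ℕ → A} {ρ : ℕ → Q₁ × Q₂} : (M₁.prod M₂).IsFairRun w ρ ↔
      M₁.IsFairRun w (fun i => (ρ i).1) ∧ M₂.IsFairRun w fun i => (ρ i).2 := by
  simp only [IsFairRun, prod, forall_and, Sum.forall, Sum.elim_inl, Sum.elim_inr]
  exact and_and_and_comm

/-- Extend the states by one guessed bit, subject to one more step relation and one more fairness
condition. -/
def withBit (M : BuchiAutomaton A Q K) (step : Q × Prop → Q × Prop → Prop)
    (fair : Q × Prop → Prop) : BuchiAutomaton A (Q × Prop) (Option K) where
  step s a t := M.step s.1 a t.1 ∧ step s t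
  fair k s := k.elim (fair s) fun k => M.fair k s.1

theorem isFairRun_withBit_iff {M : BuchiAutomaton A Q K} {step : Q × Prop → Q × Prop → Prop}
    {fair : Q × Prop → Prop} {w : ℕ → A} {ρ : ℕ → Q × Prop} :
    (M.withBit step fair).IsFairRun w ρ ↔ M.IsFairRun w (fun i => (ρ i).1) ∧
      (∀ i, step (ρ i) (ρ (i + 1))) ∧ ∃ᶠ i in atTop, fair (ρ i) := by
  simp only [IsFairRun, withBit, forall_and, Option.forall, Option.elim_none, Option.elim_some]
  tauto

end BuchiAutomaton

/-- The suffix of the word `w` from position `j` onwards. -/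
def suffix (w : ℕ → A) (j : ℕ) : ℕ → A := fun i => w (i + j)

theorem suffix_suffix (w : ℕ → A) (i j : ℕ) : suffix (suffix w i) j = suffix w (j + i) :=
  funext fun k => congrArg w (Nat.add_assoc k j i)

/-- The language `P` has a temporal tester of size `n`: an automaton which has a fair run on every
word, and whose fair runs announce, at each position, whether the suffix read from there lies in
`P`. -/
def HasTester (n : ℕ) (P : Set (ℕ → A)) : Prop :=
  ∃ (Q K : Type) (_ : Finite Q) (_ : Finite K) (M : BuchiAutomaton A Q K) (out : Q → Prop),
    Nat.card Q ≤ 2 ^ n ∧ Nat.card K ≤ n ∧ (∀ w, ∃ ρ, M.IsFairRun w ρ) ∧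
      ∀ w ρ, M.IsFairRun w ρ → ∀ i, out (ρ i) ↔ suffix w i ∈ P

theorem HasTester.recognizable {n : ℕ} {P : Set (ℕ → A)} (hP : HasTester n P) :
    Recognizable (BuchiAutomaton.recognizerSize (2 ^ n) n) P := by
  obtain ⟨Q, K, hQ, hK, M, out, hQn, hKn, h_total, h_out⟩ := hP
  have h_lang : {w | ∃ ρ, out (ρ 0) ∧ M.IsFairRun w ρ} = P := by
    ext w
    constructor
    · rintro ⟨ρ, h_acc, hρ⟩
      exact (h_out w ρ hρ 0).1 h_acc
    · intro hw
      obtain ⟨ρ, hρ⟩ := h_total w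
      exact ⟨ρ, (h_out w ρ hρ 0).2 hw, hρ⟩
  rw [← h_lang]
  refine (M.recognizable out).mono ?_
  unfold BuchiAutomaton.recognizerSize
  gcongr <;> norm_num

theorem HasTester.mono {m n : ℕ} (hmn : m ≤ n) {P : Set (ℕ → A)} : HasTester m P → HasTester n P :=
  fun ⟨Q, K, hQ, hK, M, out, hQm, hKm, h⟩ =>
    ⟨Q, K, hQ, hK, M, out, hQm.trans (Nat.pow_le_pow_right two_pos hmn), hKm.trans hmn, h⟩

theorem hasTester_first (p : A → Prop) : HasTester 1 {w : ℕ → A | p (w 0)} := by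
  refine ⟨Prop, Empty, inferInstance, inferInstance, ⟨fun s a _ => s ↔ p a, Empty.elim⟩, id,
    by simp, by simp, fun w => ⟨fun i => p (w i), fun _ => Iff.rfl, nofun⟩, fun w ρ hρ i => ?_⟩
  simpa [suffix] using hρ.1 i

theorem HasTester.compl {n : ℕ} {P : Set (ℕ → A)} : HasTester n P → HasTester n Pᶜ :=
  fun ⟨Q, K, hQ, hK, M, out, hQn, hKn, h_total, h_out⟩ =>
    ⟨Q, K, hQ, hK, M, fun s => ¬ out s, hQn, hKn, h_total,
      fun w ρ hρ i => not_congr (h_out w ρ hρ i)⟩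

theorem HasTester.exists_prod {m n : ℕ} {P R : Set (ℕ → A)} (hP : HasTester m P)
    (hR : HasTester n R) :
    ∃ (Q K : Type) (_ : Finite Q) (_ : Finite K) (M : BuchiAutomaton A Q K) (out₁ out₂ : Q → Prop),
      Nat.card Q ≤ 2 ^ (m + n) ∧ Nat.card K ≤ m + n ∧ (∀ w, ∃ ρ, M.IsFairRun w ρ) ∧
        ∀ w ρ, M.IsFairRun w ρ →
          ∀ i, (out₁ (ρ i) ↔ suffix w i ∈ P) ∧ (out₂ (ρ i) ↔ suffix w i ∈ R) := by
  obtain ⟨Q₁, K₁, _, _, M₁, out₁, hQ₁, hK₁, h_total₁, h_out₁⟩ := hP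
  obtain ⟨Q₂, K₂, _, _, M₂, out₂, hQ₂, hK₂, h_total₂, h_out₂⟩ := hR
  refine ⟨Q₁ × Q₂, K₁ ⊕ K₂, inferInstance, inferInstance, M₁.prod M₂, fun s => out₁ s.1,
    fun s => out₂ s.2, ?_, ?_, fun w => ?_, fun w ρ hρ i => ?_⟩
  · rw [Nat.card_prod, pow_add]
    exact Nat.mul_le_mul hQ₁ hQ₂
  · rw [Nat.card_sum]
    exact Nat.add_le_add hK₁ hK₂
  · obtain ⟨ρ₁, hρ₁⟩ := h_total₁ w
    obtain ⟨ρ₂, hρ₂⟩ := h_total₂ w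
    exact ⟨fun i => (ρ₁ i, ρ₂ i), BuchiAutomaton.isFairRun_prod_iff.2 ⟨hρ₁, hρ₂⟩⟩
  · obtain ⟨hρ₁, hρ₂⟩ := BuchiAutomaton.isFairRun_prod_iff.1 hρ
    exact ⟨h_out₁ w _ hρ₁ i, h_out₂ w _ hρ₂ i⟩

theorem HasTester.union {m n : ℕ} {P R : Set (ℕ → A)} (hP : HasTester m P) (hR : HasTester n R) :
    HasTester (m + n) (P ∪ R) := by
  obtain ⟨Q, K, hQ, hK, M, out₁, out₂, hQmn, hKmn, h_total, h_out⟩ := hP.exists_prod hR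
  exact ⟨Q, K, hQ, hK, M, fun s => out₁ s ∨ out₂ s, hQmn, hKmn, h_total,
    fun w ρ hρ i => or_congr (h_out w ρ hρ i).1 (h_out w ρ hρ i).2⟩

theorem hasTester_of_withBit [Finite Q] [Finite K] {M : BuchiAutomaton A Q K} {n : ℕ}
    (hQ : Nat.card Q ≤ 2 ^ n) (hK : Nat.card K ≤ n) (h_total : ∀ w, ∃ ρ, M.IsFairRun w ρ)
    {P : Set (ℕ → A)} (step : Q × Prop → Q × Prop → Prop) (fair : Q × Prop → Prop)
    (h : ∀ w ρ, M.IsFairRun w ρ → ∀ b : ℕ → Prop,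
      ((∀ i, step (ρ i, b i) (ρ (i + 1), b (i + 1))) ∧ ∃ᶠ i in atTop, fair (ρ i, b i)) ↔
        ∀ i, b i ↔ suffix w i ∈ P) : HasTester (n + 1) P := by
  refine ⟨Q × Prop, Option K, inferInstance, inferInstance, M.withBit step fair, Prod.snd,
    ?_, ?_, fun w => ?_, fun w ρ hρ => ?_⟩
  · simpa [Nat.card_prod, pow_succ] using hQ
  · rw [Finite.card_option]
    exact Nat.succ_le_succ hK
  · obtain ⟨ρ, hρ⟩ := h_total w
    exact ⟨fun i => (ρ i, suffix w i ∈ P), BuchiAutomaton.isFairRun_withBit_iff.2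
      ⟨hρ, (h w ρ hρ fun i => suffix w i ∈ P).2 fun _ => Iff.rfl⟩⟩
  · obtain ⟨hρ₁, hρ₂⟩ := BuchiAutomaton.isFairRun_withBit_iff.1 hρ
    exact (h w _ hρ₁ fun i => (ρ i).2).1 hρ₂

theorem HasTester.next {n : ℕ} {P : Set (ℕ → A)} (hP : HasTester n P) :
    HasTester (n + 1) {w | suffix w 1 ∈ P} := by
  obtain ⟨Q, K, _, _, M, out, hQ, hK, h_total, h_out⟩ := hP
  refine hasTester_of_withBit hQ hK h_total (fun s t => s.2 ↔ out t.1) (fun _ => True) ?_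
  intro w ρ hρ b
  simp only [h_out w ρ hρ, frequently_const, and_true]
  exact forall_congr' fun i => by rw [Set.mem_ofPred_eq, suffix_suffix, Nat.add_comm]

theorem until_iff_now_or_next {p q : ℕ → Prop} (i : ℕ) :
    (∃ j, q (j + i) ∧ ∀ j' < j, p (j' + i)) ↔
      q i ∨ p i ∧ ∃ j, q (j + (i + 1)) ∧ ∀ j' < j, p (j' + (i + 1)) := by
  have h_shift (j : ℕ) : j + 1 + i = j + (i + 1) := by omega
  constructor
  · rintro ⟨_ | j, hq, hp⟩
    · exact .inl (by rwa [Nat.zero_add] at hq)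
    · exact .inr ⟨by simpa using hp 0 j.succ_pos, j, h_shift j ▸ hq,
        fun j' hj' => h_shift j' ▸ hp (j' + 1) (Nat.succ_lt_succ hj')⟩
  · rintro (hq | ⟨hp, j, hq, hp'⟩)
    · exact ⟨0, by rwa [Nat.zero_add], nofun⟩
    · refine ⟨j + 1, (h_shift j).symm ▸ hq, fun j' hj' => ?_⟩
      obtain _ | j' := j'
      · rwa [Nat.zero_add]
      · exact (h_shift j').symm ▸ hp' j' (Nat.lt_of_succ_lt_succ hj')

/-- The fairness condition excludes the bits that promise `q` forever without delivering it. -/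
theorem until_fixpoint_iff {p q b : ℕ → Prop} :
    ((∀ i, b i ↔ q i ∨ p i ∧ b (i + 1)) ∧ ∃ᶠ i in atTop, b i → q i) ↔
      ∀ i, b i ↔ ∃ j, q (j + i) ∧ ∀ j' < j, p (j' + i) := by
  constructor
  · rintro ⟨h_step, h_fair⟩ i
    constructor
    · intro hb
      by_contra h_until
      have h_keep : ∀ k ≥ i, b k ∧ ¬ ∃ j, q (j + k) ∧ ∀ j' < j, p (j' + k) := by
        refine Nat.le_induction ⟨hb, h_until⟩ fun k _ ⟨hb, h_until⟩ => ?_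
        rw [h_step] at hb
        rw [until_iff_now_or_next] at h_until
        obtain hq | ⟨hp, hb⟩ := hb
        · exact absurd (.inl hq) h_until
        · exact ⟨hb, fun h => h_until (.inr ⟨hp, h⟩)⟩
      obtain ⟨k, hk, h_deliver⟩ := frequently_atTop.1 h_fair i
      obtain ⟨hb, h_until⟩ := h_keep k hk
      exact h_until ((until_iff_now_or_next k).2 (.inl (h_deliver hb)))
    · rintro ⟨j, hq, hp⟩
      induction j generalizing i with
      | zero => exact (h_step i).2 (.inl (by rwa [Nat.zero_add] at hq))
      | succ j ih =>
        have h_shift (j : ℕ) : j + 1 + i = j + (i + 1) := by omega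
        exact (h_step i).2 (.inr ⟨by simpa using hp 0 j.succ_pos, ih (i + 1) (h_shift j ▸ hq)
          fun j' hj' => h_shift j' ▸ hp (j' + 1) (Nat.succ_lt_succ hj')⟩)
  · intro h
    refine ⟨fun i => by rw [h i, h (i + 1), until_iff_now_or_next], ?_⟩
    refine frequently_atTop.2 fun i => ?_
    by_cases hb : b i
    · obtain ⟨j, hq, -⟩ := (h i).1 hb
      exact ⟨j + i, Nat.le_add_left i j, fun _ => hq⟩
    · exact ⟨i, le_rfl, fun hb' => absurd hb' hb⟩

theorem HasTester.until {m n : ℕ} {P R : Set (ℕ → A)} (hP : HasTester m P) (hR : HasTester n R) :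
    HasTester (m + n + 1) {w | ∃ j, suffix w j ∈ R ∧ ∀ j' < j, suffix w j' ∈ P} := by
  obtain ⟨Q, K, hQ, hK, M, out₁, out₂, hQmn, hKmn, h_total, h_out⟩ := hP.exists_prod hR
  refine hasTester_of_withBit hQmn hKmn h_total (fun s t => s.2 ↔ out₂ s.1 ∨ out₁ s.1 ∧ t.2)
    (fun s => s.2 → out₂ s.1) ?_
  intro w ρ hρ b
  simp only [(h_out w ρ hρ _).1, (h_out w ρ hρ _).2, until_fixpoint_iff]
  simp only [Set.mem_ofPred_eq, suffix_suffix]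

end Automata

end HyperLTL

/-! ### Recognisability of HyperLTL over a fixed transition system -/

/-- The number of nodes of a quantifier-free formula. -/
def QF.size {AP : Type} : QF AP → ℕ
  | .atom _ _ => 1
  | .neg ψ => ψ.size + 1
  | .disj ψ₁ ψ₂ => ψ₁.size + ψ₂.size + 1
  | .next ψ => ψ.size + 1
  | .untl ψ₁ ψ₂ => ψ₁.size + ψ₂.size + 1

/-- The number of connectives and quantifiers of a formula. -/
def HFormula.size {AP : Type} : HFormula AP → ℕ
  | .ex _ φ => φ.size + 1
  | .all _ φ => φ.size + 1
  | .qf ψ => ψ.size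

namespace HyperLTL

section Semantics

variable {AP V : Type}

/-- The trace assignment described by a word whose letters assign a vertex to each variable. -/
def traceAsg (lab : V → Set AP) (w : ℕ → ℕ → V) : ℕ → Trace AP := fun x i => lab (w i x)

theorem update_traceAsg (lab : V → Set AP) (w : ℕ → ℕ → V) (x : ℕ) (ρ : ℕ → V) :
    Function.update (traceAsg lab w) x (fun i => lab (ρ i)) =
      traceAsg lab fun i => Function.update (w i) x (ρ i) := by
  ext y i
  obtain rfl | hy := eq_or_ne y x <;> simp [traceAsg, *]

theorem _root_.QF.hasTester (lab : V → Set AP) (ψ : QF AP) :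
    HasTester ψ.size {w : ℕ → ℕ → V | ψ.sat (traceAsg lab w)} := by
  induction ψ with
  | atom a x => exact hasTester_first fun s : ℕ → V => a ∈ lab (s x)
  | neg ψ ih => exact ih.compl.mono (Nat.le_succ _)
  | disj ψ₁ ψ₂ ih₁ ih₂ => exact (ih₁.union ih₂).mono (Nat.le_succ _)
  | next ψ ih => exact ih.next
  | untl ψ₁ ψ₂ ih₁ ih₂ => exact ih₁.until ih₂

/-- The paths of a transition system from its initial vertex. -/
def _root_.TS.initialPaths (S : TS AP) : Set (ℕ → S.V) := {ρ | ρ 0 = S.vI ∧ S.IsPath ρ}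

theorem _root_.HFormula.sat_ex_traceAsg_iff {S : TS AP} {w : ℕ → ℕ → S.V} {x : ℕ}
    {φ : HFormula AP} : (HFormula.ex x φ).sat S.traces (traceAsg S.lab w) ↔
      ∃ ρ ∈ S.initialPaths,
        φ.sat S.traces (traceAsg S.lab fun i => Function.update (w i) x (ρ i)) := by
  simp only [← update_traceAsg]
  constructor
  · rintro ⟨_, ⟨ρ, hρ, h0, rfl⟩, h_sat⟩
    exact ⟨ρ, ⟨h0, hρ⟩, h_sat⟩
  · rintro ⟨ρ, ⟨h0, hρ⟩, h_sat⟩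
    exact ⟨_, ⟨ρ, hρ, h0, rfl⟩, h_sat⟩

theorem _root_.HFormula.sat_all_traceAsg_iff {S : TS AP} {w : ℕ → ℕ → S.V} {x : ℕ}
    {φ : HFormula AP} : (HFormula.all x φ).sat S.traces (traceAsg S.lab w) ↔
      ∀ ρ ∈ S.initialPaths,
        φ.sat S.traces (traceAsg S.lab fun i => Function.update (w i) x (ρ i)) := by
  simp only [← update_traceAsg]
  constructor
  · exact fun h ρ ⟨h0, hρ⟩ => h _ ⟨ρ, hρ, h0, rfl⟩
  · rintro h _ ⟨ρ, hρ, h0, rfl⟩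
    exact h ρ ⟨h0, hρ⟩

/-- The size of a recogniser for the initial paths of a system with `m` vertices. -/
def pathSize (m : ℕ) : ℕ := 3 * ((m + 1) * ((m + 1) * 2))

/-- The size of a recogniser for `∃ x. φ` over a system with `m` vertices, given one of size `N` for
`φ`. -/
def existsSize (m N : ℕ) : ℕ := 2 ^ (pathSize m * N)

theorem le_existsSize (m N : ℕ) : N ≤ existsSize m N :=
  Nat.lt_two_pow_self.le.trans
    (Nat.pow_le_pow_right two_pos (Nat.le_mul_of_pos_left N (by unfold pathSize; positivity)))

theorem Recognizable.initialPath_inter {S : TS AP} [Finite S.V] {N : ℕ} {L : Set (ℕ → ℕ → S.V)}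
    (hL : Recognizable N L) (x : ℕ) : Recognizable (pathSize (Nat.card S.V) * N)
      {w : ℕ → ℕ → S.V | (fun i => w i x) ∈ S.initialPaths ∧ w ∈ L} :=
  (((recognizable_first (· = S.vI)).inter (recognizable_chain S.E)).preimage
    fun s : ℕ → S.V => s x).inter hL

theorem exists_initialPath_iff {S : TS AP} {L : Set (ℕ → ℕ → S.V)} {x : ℕ} {w : ℕ → ℕ → S.V} :
    (∃ ρ ∈ S.initialPaths, (fun i => Function.update (w i) x (ρ i)) ∈ L) ↔
      ∃ w' ∈ {w : ℕ → ℕ → S.V | (fun i => w i x) ∈ S.initialPaths ∧ w ∈ L},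
        ∀ i, w' i = Function.update (w i) x (w' i x) := by
  constructor
  · rintro ⟨ρ, hρ, hw⟩
    exact ⟨_, ⟨by simpa using hρ, hw⟩, by simp⟩
  · rintro ⟨w', ⟨h_path, hw'⟩, h_update⟩
    exact ⟨_, h_path, by rwa [← funext h_update]⟩

theorem Recognizable.exists_initialPath {S : TS AP} [Finite S.V] {N : ℕ} {L : Set (ℕ → ℕ → S.V)}
    (hL : Recognizable N L) (x : ℕ) : Recognizable (existsSize (Nat.card S.V) N)
      {w | ∃ ρ ∈ S.initialPaths, (fun i => Function.update (w i) x (ρ i)) ∈ L} := by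
  simp only [exists_initialPath_iff]
  exact (hL.initialPath_inter x).exists_forall₂
    fun s s' : ℕ → S.V => s' = Function.update s x (s' x)

theorem Recognizable.exists_isLasso_initialPath {S : TS AP} [Finite S.V] {N : ℕ}
    {L : Set (ℕ → ℕ → S.V)} (hL : Recognizable N L) {x q : ℕ} (hq : 0 < q) {w : ℕ → ℕ → S.V}
    (hw : IsLasso q w) {ρ : ℕ → S.V} (hρ : ρ ∈ S.initialPaths)
    (h : (fun i => Function.update (w i) x (ρ i)) ∈ L) :
    ∃ ρ' ∈ S.initialPaths, IsLasso (q * (pathSize (Nat.card S.V) * N + 1).factorial) ρ' ∧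
      (fun i => Function.update (w i) x (ρ' i)) ∈ L := by
  obtain ⟨v, hv, h_update⟩ := exists_initialPath_iff.1 ⟨ρ, hρ, h⟩
  obtain ⟨v', ⟨h_path, hv'⟩, h_update', h_lasso⟩ := (hL.initialPath_inter x).exists_isLasso
    (r := fun s s' : ℕ → S.V => s' = Function.update s x (s' x)) hq hw hv h_update
  exact ⟨fun i => v' i x, h_path, fun i hi => congrFun (h_lasso i hi) x,
    by rwa [← funext h_update']⟩

/-- A size which suffices to recognise all formulas of size at most `r` over systems with `m`
vertices. -/
def recognizerBound (m r : ℕ) : ℕ :=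
  (existsSize m)^[r] (BuchiAutomaton.recognizerSize (2 ^ r) r)

theorem _root_.HFormula.recognizable_iterate {S : TS AP} [Finite S.V] {φ : HFormula AP} {k r : ℕ}
    (hk : φ.size ≤ k) (hr : φ.size ≤ r) :
    Recognizable ((existsSize (Nat.card S.V))^[k] (BuchiAutomaton.recognizerSize (2 ^ r) r))
      {w : ℕ → ℕ → S.V | φ.sat S.traces (traceAsg S.lab w)} := by
  induction φ generalizing k with
  | qf ψ =>
    exact ((ψ.hasTester S.lab).mono hr).recognizable.mono
      (Function.id_le_iterate_of_id_le (le_existsSize _) k _)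
  | ex x φ ih =>
    obtain _ | k := k
    · exact absurd hk (Nat.not_succ_le_zero _)
    rw [Function.iterate_succ_apply']
    simp only [HFormula.sat_ex_traceAsg_iff]
    exact (ih (Nat.le_of_succ_le_succ hk) (Nat.le_of_succ_le hr)).exists_initialPath x
  | all x φ ih =>
    obtain _ | k := k
    · exact absurd hk (Nat.not_succ_le_zero _)
    rw [Function.iterate_succ_apply']
    have h_neg := ((ih (Nat.le_of_succ_le_succ hk) (Nat.le_of_succ_le hr)).compl.exists_initialPath
      x).compl
    convert h_neg using 1
    ext w
    simp [HFormula.sat_all_traceAsg_iff]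

theorem _root_.HFormula.recognizable {S : TS AP} [Finite S.V] {φ : HFormula AP} {r : ℕ}
    (hr : φ.size ≤ r) : Recognizable (recognizerBound (Nat.card S.V) r)
      {w : ℕ → ℕ → S.V | φ.sat S.traces (traceAsg S.lab w)} :=
  φ.recognizable_iterate hr hr

end Semantics

end HyperLTL

/-! ### Coded finite transition systems -/

/-- The atomic propositions occurring in a quantifier-free formula. -/
def QF.atoms {AP : Type} : QF AP → Set AP
  | .atom a _ => {a}
  | .neg ψ => ψ.atoms
  | .disj ψ₁ ψ₂ => ψ₁.atoms ∪ ψ₂.atoms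
  | .next ψ => ψ.atoms
  | .untl ψ₁ ψ₂ => ψ₁.atoms ∪ ψ₂.atoms

/-- The atomic propositions occurring in a formula. -/
def HFormula.atoms {AP : Type} : HFormula AP → Set AP
  | .ex _ φ => φ.atoms
  | .all _ φ => φ.atoms
  | .qf ψ => ψ.atoms

namespace HyperLTL

section Congruence

variable {AP : Type}

theorem _root_.QF.finite_atoms (ψ : QF AP) : ψ.atoms.Finite := by
  induction ψ with
  | atom a _ => exact Set.finite_singleton a
  | neg _ ih => exact ih
  | disj _ _ ih₁ ih₂ => exact ih₁.union ih₂
  | next _ ih => exact ih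
  | untl _ _ ih₁ ih₂ => exact ih₁.union ih₂

theorem _root_.HFormula.finite_atoms (φ : HFormula AP) : φ.atoms.Finite := by
  induction φ with
  | ex _ _ ih => exact ih
  | all _ _ ih => exact ih
  | qf ψ => exact ψ.finite_atoms

theorem _root_.QF.sat_congr {P : Set AP} {ψ : QF AP} (hP : ψ.atoms ⊆ P) {As As' : ℕ → Trace AP}
    (h : ∀ x ∈ ψ.freeVars, ∀ i, As x i ∩ P = As' x i ∩ P) : ψ.sat As ↔ ψ.sat As' := by
  induction ψ generalizing As As' with
  | atom a x =>
    have h_mem := Set.ext_iff.1 (h x rfl 0) a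
    simpa only [QF.sat, Set.mem_inter_iff, hP rfl, and_true] using h_mem
  | neg ψ ih => exact not_congr (ih hP h)
  | disj ψ₁ ψ₂ ih₁ ih₂ =>
    rw [QF.atoms, Set.union_subset_iff] at hP
    exact or_congr (ih₁ hP.1 fun x hx => h x (.inl hx)) (ih₂ hP.2 fun x hx => h x (.inr hx))
  | next ψ ih => exact ih hP fun x hx i => h x hx (i + 1)
  | untl ψ₁ ψ₂ ih₁ ih₂ =>
    rw [QF.atoms, Set.union_subset_iff] at hP
    exact exists_congr fun j => and_congr (ih₂ hP.2 fun x hx i => h x (.inr hx) (i + j))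
      (forall₂_congr fun j' _ => ih₁ hP.1 fun x hx i => h x (.inl hx) (i + j'))

theorem _root_.HFormula.sat_congr {P : Set AP} {φ : HFormula AP} (hP : φ.atoms ⊆ P)
    {T T' : Set (Trace AP)} (hT : ∀ t ∈ T, ∃ t' ∈ T', ∀ i, t i ∩ P = t' i ∩ P)
    (hT' : ∀ t' ∈ T', ∃ t ∈ T, ∀ i, t i ∩ P = t' i ∩ P) {As As' : ℕ → Trace AP}
    (h : ∀ x ∈ φ.freeVars, ∀ i, As x i ∩ P = As' x i ∩ P) : φ.sat T As ↔ φ.sat T' As' := by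
  have h_update {φ : HFormula AP} {As As' : ℕ → Trace AP} {x : ℕ} {t t' : Trace AP}
      (h : ∀ y ∈ φ.freeVars \ {x}, ∀ i, As y i ∩ P = As' y i ∩ P)
      (ht : ∀ i, t i ∩ P = t' i ∩ P) : ∀ y ∈ φ.freeVars, ∀ i,
        Function.update As x t y i ∩ P = Function.update As' x t' y i ∩ P := by
    intro y hy i
    obtain rfl | hyx := eq_or_ne y x
    · simpa only [Function.update_self] using ht i
    · simpa only [Function.update_of_ne hyx] using h y ⟨hy, hyx⟩ i
  induction φ generalizing As As' with
  | qf ψ => exact QF.sat_congr hP h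
  | ex x φ ih =>
    constructor
    · rintro ⟨t, ht, h_sat⟩
      obtain ⟨t', ht', h_eq⟩ := hT t ht
      exact ⟨t', ht', (ih hP (h_update h h_eq)).1 h_sat⟩
    · rintro ⟨t', ht', h_sat⟩
      obtain ⟨t, ht, h_eq⟩ := hT' t' ht'
      exact ⟨t, ht, (ih hP (h_update h h_eq)).2 h_sat⟩
  | all x φ ih =>
    constructor
    · intro h_sat t' ht'
      obtain ⟨t, ht, h_eq⟩ := hT' t' ht'
      exact (ih hP (h_update h h_eq)).1 (h_sat t ht)
    · intro h_sat t ht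
      obtain ⟨t', ht', h_eq⟩ := hT t ht
      exact (ih hP (h_update h h_eq)).2 (h_sat t' ht')

theorem _root_.HFormula.IsSentence.sat_iff {φ : HFormula AP} (hφ : φ.IsSentence)
    (T : Set (Trace AP)) (As : ℕ → Trace AP) : φ.sat T As ↔ HModels T φ :=
  φ.sat_congr subset_rfl (fun t ht => ⟨t, ht, fun _ => rfl⟩) (fun t ht => ⟨t, ht, fun _ => rfl⟩)
    fun x hx => absurd hx (hφ ▸ Set.notMem_empty x)

theorem hModels_iff_of_equiv {S S' : TS AP} {φ : HFormula AP} (hφ : φ.IsSentence) (e : S.V ≃ S'.V)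
    (h_init : e S.vI = S'.vI) (h_edge : ∀ v w, S'.E (e v) (e w) ↔ S.E v w)
    (h_lab : ∀ v, S'.lab (e v) = S.lab v ∩ φ.atoms) :
    HModels S'.traces φ ↔ HModels S.traces φ := by
  refine (φ.sat_congr subset_rfl ?_ ?_ fun x hx => absurd hx (hφ ▸ Set.notMem_empty x)).symm
  · rintro _ ⟨ρ, hρ, h0, rfl⟩
    refine ⟨_, ⟨fun i => e (ρ i), fun i => (h_edge _ _).2 (hρ i), ?_, rfl⟩, fun i => ?_⟩
    · exact (congrArg e h0).trans h_init
    · simp only [h_lab, Set.inter_assoc, Set.inter_self]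
  · rintro _ ⟨ρ, hρ, h0, rfl⟩
    obtain ⟨ρ, rfl⟩ : ∃ ρ' : ℕ → S.V, ρ = fun i => e (ρ' i) :=
      ⟨fun i => e.symm (ρ i), by simp⟩
    refine ⟨_, ⟨ρ, fun i => (h_edge _ _).1 (hρ i), ?_, rfl⟩, fun i => ?_⟩
    · exact e.injective (h0.trans h_init.symm)
    · simp only [h_lab, Set.inter_assoc, Set.inter_self]

end Congruence

/-- A code `(n, v, edges, labels)` for a finite transition system with vertices `0, …, n` and
initial vertex `v`. -/
abbrev SystemCode : Type := ℕ × ℕ × List (ℕ × ℕ) × List (ℕ × ℕ)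

namespace SystemCode

/-- The edge relation of the coded system. Vertices without a listed successor get an edge to every
vertex, so that every code denotes a transition system. -/
def Edge (θ : SystemCode) (v w : ℕ) : Prop :=
  (v, w) ∈ θ.2.2.1 ∨ ∀ w' < θ.1 + 1, (v, w') ∉ θ.2.2.1

/-- The coded transition system. -/
def toTS (θ : SystemCode) : TS ℕ where
  V := Fin (θ.1 + 1)
  E v w := θ.Edge v w
  vI := Fin.ofNat (θ.1 + 1) θ.2.1
  lab v := {a | ((v : ℕ), a) ∈ θ.2.2.2}
  succ v := by
    by_cases h : ∃ w < θ.1 + 1, ((v : ℕ), w) ∈ θ.2.2.1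
    · obtain ⟨w, hw, h_edge⟩ := h
      exact ⟨⟨w, hw⟩, .inl h_edge⟩
    · exact ⟨v, .inr fun w hw h_edge => h ⟨w, hw, h_edge⟩⟩

/-- The vertex of the coded system denoted by a number. -/
def vertex (θ : SystemCode) (v : ℕ) : θ.toTS.V := Fin.ofNat (θ.1 + 1) v

instance (θ : SystemCode) : Finite θ.toTS.V := inferInstanceAs (Finite (Fin (θ.1 + 1)))

theorem natCard_toTS (θ : SystemCode) : Nat.card θ.toTS.V = θ.1 + 1 := Nat.card_fin _

theorem exists_equiv (S : TS ℕ) [Finite S.V] {P : Set ℕ} (hP : P.Finite) :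
    ∃ (θ : SystemCode) (e : S.V ≃ θ.toTS.V), e S.vI = θ.toTS.vI ∧
      (∀ v w, θ.toTS.E (e v) (e w) ↔ S.E v w) ∧ ∀ v, θ.toTS.lab (e v) = S.lab v ∩ P := by
  obtain ⟨_ | n, ⟨e⟩⟩ := Finite.exists_equiv_fin S.V
  · exact (e S.vI).elim0
  have h_list {s : Set (ℕ × ℕ)} (hs : s.Finite) : ∃ l : List (ℕ × ℕ), ∀ p, p ∈ l ↔ p ∈ s :=
    ⟨hs.toFinset.toList, by simp⟩
  have h_inj {v w : S.V} : (e v : ℕ) = e w ↔ v = w := Fin.val_inj.trans e.apply_eq_iff_eq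
  obtain ⟨edges, h_edges⟩ := h_list (s := (fun p : S.V × S.V => ((e p.1 : ℕ), (e p.2 : ℕ))) ''
    {p | S.E p.1 p.2}) (Set.toFinite _)
  obtain ⟨labels, h_labels⟩ := h_list (s := (fun p : S.V × ℕ => ((e p.1 : ℕ), p.2)) ''
    {p | p.2 ∈ S.lab p.1 ∩ P})
    (((Set.finite_univ.prod hP).subset fun _ hp => ⟨trivial, hp.2⟩).image _)
  have h_edge (v w : S.V) : ((e v : ℕ), (e w : ℕ)) ∈ edges ↔ S.E v w := by
    simp [h_edges, h_inj]
  have h_label (v : S.V) (a : ℕ) : ((e v : ℕ), a) ∈ labels ↔ a ∈ S.lab v ∩ P := by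
    simp only [h_labels, Set.mem_image, Prod.mk.injEq, h_inj]
    exact ⟨fun ⟨_, hp, hv, ha⟩ => hv ▸ ha ▸ hp, fun h => ⟨(v, a), h, rfl, rfl⟩⟩
  refine ⟨(n, e S.vI, edges, labels), e, ?_, fun v w => ?_, fun v => ?_⟩
  · exact (Fin.ofNat_val_eq_self (e S.vI)).symm
  · refine ⟨?_, fun h => .inl ((h_edge v w).2 h)⟩
    rintro (h | h)
    · exact (h_edge v w).1 h
    · obtain ⟨w', hw'⟩ := S.succ v
      exact absurd ((h_edge v w').2 hw') (h _ (e w').isLt)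
  · exact Set.ext (h_label v)

theorem exists_hModels_iff {φ : HFormula ℕ} (hφ : φ.IsSentence) :
    (∃ S : TS ℕ, Finite S.V ∧ HModels S.traces φ) ↔
      ∃ θ : SystemCode, HModels θ.toTS.traces φ := by
  constructor
  · rintro ⟨S, _, hS⟩
    obtain ⟨θ, e, h_init, h_edge, h_lab⟩ := exists_equiv S φ.finite_atoms
    exact ⟨θ, (hModels_iff_of_equiv hφ e h_init h_edge h_lab).2 hS⟩
  · rintro ⟨θ, hθ⟩
    exact ⟨θ.toTS, inferInstance, hθ⟩

end SystemCode

/-! ### Bounded model checking on lassos -/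

section LassoLists

variable {A B : Type*} {q : ℕ}

theorem IsLasso.comp {w : ℕ → A} (hw : IsLasso q w) (f : A → B) : IsLasso q fun i => f (w i) :=
  fun i hi => congrArg f (hw i hi)

theorem IsLasso.prodMk {w : ℕ → A} {v : ℕ → B} (hw : IsLasso q w) (hv : IsLasso q v) :
    IsLasso q fun i => (w i, v i) :=
  fun i hi => Prod.ext (hw i hi) (hv i hi)

theorem IsLasso.suffix {A : Type} {w : ℕ → A} (hw : IsLasso q w) (j : ℕ) :
    IsLasso q (suffix w j) := fun i hi => by
  have := hw (i + j) (by omega)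
  rwa [Nat.add_right_comm] at this

/-- The representative below `2 * q` of a position in a word of shape `IsLasso q`. -/
def lassoIndex (q i : ℕ) : ℕ := if i < q then i else q + i % q

theorem lassoIndex_lt (hq : 0 < q) (i : ℕ) : lassoIndex q i < 2 * q := by
  have := Nat.mod_lt i hq
  unfold lassoIndex
  split <;> omega

theorem IsLasso.apply_lassoIndex {w : ℕ → A} (hw : IsLasso q w) (i : ℕ) :
    w (lassoIndex q i) = w i := by
  unfold lassoIndex
  split_ifs with hi
  · rfl
  · obtain rfl | hq := q.eq_zero_or_pos
    · simp
    have h_pos : 1 ≤ i / q := (Nat.one_le_div_iff hq).2 (not_lt.1 hi)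
    have h_split : i = q + i % q + q * (i / q - 1) := by
      have h_mod := Nat.mod_add_div i q
      obtain ⟨d, hd⟩ := Nat.exists_eq_add_of_le' h_pos
      rw [hd, Nat.mul_succ] at h_mod
      rw [hd, Nat.add_sub_cancel]
      omega
    conv_rhs => rw [h_split]
    exact (hw.add_mul (Nat.le_add_right q _) _).symm

theorem isLasso_comp_lassoIndex (w : ℕ → A) : IsLasso q fun i => w (lassoIndex q i) := by
  intro i hi
  simp [lassoIndex, hi.not_gt, show ¬ i + q < q by omega]

theorem IsLasso.forall_iff {w : ℕ → A} (hw : IsLasso q w) (hq : 0 < q) {P : A → Prop} :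
    (∀ i, P (w i)) ↔ ∀ i < 2 * q, P (w i) :=
  ⟨fun h i _ => h i, fun h i => hw.apply_lassoIndex i ▸ h _ (lassoIndex_lt hq i)⟩

theorem IsLasso.until_iff {w : ℕ → A} (hw : IsLasso q w) (hq : 0 < q) {P R : A → Prop} :
    (∃ j, R (w j) ∧ ∀ j' < j, P (w j')) ↔ ∃ j < 2 * q, R (w j) ∧ ∀ j' < j, P (w j') := by
  classical
  refine ⟨fun h => ?_, fun ⟨j, _, h⟩ => ⟨j, h⟩⟩
  obtain ⟨hR, hP⟩ := Nat.find_spec h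
  refine ⟨Nat.find h, ?_, hR, hP⟩
  by_contra! h_long
  have h_lt := lassoIndex_lt hq (Nat.find h)
  exact Nat.find_min h (h_lt.trans_le h_long) ⟨by rwa [hw.apply_lassoIndex],
    fun j' hj' => hP j' (hj'.trans (h_lt.trans_le h_long))⟩

/-- The infinite word of shape `IsLasso (v.length / 2)` with prefix `v`. -/
def lasso (v : List ℕ) (i : ℕ) : ℕ := v.getD (lassoIndex (v.length / 2) i) 0

/-- The prefix which determines a word of shape `IsLasso q`. -/
def lassoPrefix (q : ℕ) (w : ℕ → ℕ) : List ℕ := (List.range (2 * q)).map w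

theorem isLasso_lasso (v : List ℕ) : IsLasso (v.length / 2) (lasso v) :=
  isLasso_comp_lassoIndex fun i => v.getD i 0

theorem length_lassoPrefix_half (q : ℕ) (w : ℕ → ℕ) : (lassoPrefix q w).length / 2 = q := by
  simp [lassoPrefix]

theorem lasso_lassoPrefix (hq : 0 < q) {w : ℕ → ℕ} (hw : IsLasso q w) :
    lasso (lassoPrefix q w) = w := by
  funext i
  rw [lasso, length_lassoPrefix_half, lassoPrefix, List.getD_eq_getElem _ _
    (by simpa using lassoIndex_lt hq i), List.getElem_map, List.getElem_range,
    hw.apply_lassoIndex]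

/-- The lasso of the suffix from position `j` onwards. -/
def shiftLasso (j : ℕ) (v : List ℕ) : List ℕ :=
  lassoPrefix (v.length / 2) fun i => lasso v (i + j)

theorem lasso_shiftLasso {v : List ℕ} (hv : 0 < v.length / 2) (j : ℕ) :
    lasso (shiftLasso j v) = suffix (lasso v) j :=
  lasso_lassoPrefix hv ((isLasso_lasso v).suffix j)

/-- The lists which describe words of shape `IsLasso q` over the alphabet `{0, …, n - 1}`. -/
def lassoLists (n q : ℕ) : List (List ℕ) := (List.replicate (2 * q) (List.range n)).sections

theorem mem_lassoLists_iff {n : ℕ} {v : List ℕ} :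
    v ∈ lassoLists n q ↔ v.length = 2 * q ∧ ∀ a ∈ v, a < n := by
  rw [lassoLists, List.mem_sections, List.forall₂_iff_get]
  simp only [List.length_replicate, List.get_eq_getElem, List.getElem_replicate, List.mem_range]
  refine and_congr_right fun h_len => ?_
  rw [List.forall_mem_iff_getElem]
  exact ⟨fun h i hi => h i hi (h_len ▸ hi), fun h i hi _ => h i hi⟩

theorem length_half_of_mem_lassoLists {n : ℕ} {v : List ℕ} (hv : v ∈ lassoLists n q) :
    v.length / 2 = q := by
  rw [(mem_lassoLists_iff.1 hv).1]
  omega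

theorem lasso_lt {n : ℕ} {v : List ℕ} (hv : v ∈ lassoLists (n + 1) q) (i : ℕ) :
    lasso v i < n + 1 := by
  rw [lasso, List.getD_eq_getElem?_getD]
  cases h : v[lassoIndex (v.length / 2) i]? with
  | none => exact n.succ_pos
  | some a => exact (mem_lassoLists_iff.1 hv).2 a (List.mem_of_getElem? h)

theorem lassoPrefix_mem_lassoLists {n : ℕ} {w : ℕ → ℕ} (hw : ∀ i, w i < n) :
    lassoPrefix q w ∈ lassoLists n q := by
  rw [mem_lassoLists_iff]
  simp [lassoPrefix, hw]

theorem shiftLasso_mem_lassoLists {n : ℕ} {v : List ℕ} (hv : v ∈ lassoLists (n + 1) q) (j : ℕ) :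
    shiftLasso j v ∈ lassoLists (n + 1) q := by
  rw [shiftLasso, length_half_of_mem_lassoLists hv]
  exact lassoPrefix_mem_lassoLists fun i => lasso_lt hv _

/-- The assignments of lassos to `k` nested variables. Each quantifier multiplies the length of the
lassos by `Q`; the innermost variable comes first. -/
def lassoTuples (n Q k : ℕ) : List (List (List ℕ)) :=
  ((List.range k).reverse.map fun i => lassoLists n (Q ^ (i + 1))).sections

theorem nil_mem_lassoTuples_zero (n Q : ℕ) : [] ∈ lassoTuples n Q 0 := by simp [lassoTuples]

theorem cons_mem_lassoTuples_succ_iff {n Q k : ℕ} {v : List ℕ} {u : List (List ℕ)} :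
    v :: u ∈ lassoTuples n Q (k + 1) ↔
      v ∈ lassoLists n (Q ^ (k + 1)) ∧ u ∈ lassoTuples n Q k := by
  simp only [lassoTuples, List.mem_sections, List.range_succ, List.reverse_append,
    List.reverse_singleton, List.singleton_append, List.map_cons, List.forall₂_cons]

theorem map_shiftLasso_mem_lassoTuples {n Q k : ℕ} {u : List (List ℕ)}
    (hu : u ∈ lassoTuples (n + 1) Q k) (j : ℕ) :
    u.map (shiftLasso j) ∈ lassoTuples (n + 1) Q k := by
  rw [lassoTuples, List.mem_sections, List.forall₂_map_right_iff] at hu ⊢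
  rw [List.forall₂_map_left_iff]
  exact hu.imp fun _ _ hv => shiftLasso_mem_lassoLists hv j

theorem exists_mem_lassoLists_of_mem_lassoTuples {n Q k : ℕ} {u : List (List ℕ)}
    (hu : u ∈ lassoTuples n Q k) {v : List ℕ} (hv : v ∈ u) :
    ∃ i < k, v ∈ lassoLists n (Q ^ (i + 1)) := by
  rw [lassoTuples, List.mem_sections, List.forall₂_map_right_iff] at hu
  obtain ⟨h_len, h_mem⟩ := List.forall₂_iff_get.1 hu
  obtain ⟨m, hm, rfl⟩ := List.mem_iff_getElem.1 hv
  have h_level := List.getElem_mem (l := (List.range k).reverse) (h_len ▸ hm)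
  exact ⟨_, by simpa using h_level, h_mem m hm (h_len ▸ hm)⟩

end LassoLists

section Environments

variable (θ : SystemCode) {Q : ℕ}

/-- The word of assignments of vertices to the variables in `ctx` given by the lassos `u`; the other
variables are assigned the constant word of the vertex `0`. -/
def environment (ctx : List ℕ) (u : List (List ℕ)) : ℕ → ℕ → θ.toTS.V :=
  fun i x => θ.vertex (lasso (u.getD (ctx.idxOf x) []) i)

theorem environment_cons (x : ℕ) (ctx : List ℕ) (v : List ℕ) (u : List (List ℕ)) :
    environment θ (x :: ctx) (v :: u) =
      fun i => Function.update (environment θ ctx u i) x (θ.vertex (lasso v i)) := by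
  funext i y
  obtain rfl | hy := eq_or_ne y x
  · rw [Function.update_self, environment, List.idxOf_cons_self, List.getD_cons_zero]
  · rw [Function.update_of_ne hy, environment, List.idxOf_cons_ne _ hy.symm, List.getD_cons_succ,
      environment]

theorem lasso_nil : lasso [] = fun _ => 0 := by
  funext i
  simp [lasso]

variable {θ}

theorem isLasso_environment {n k : ℕ} (hQ : 0 < Q) (ctx : List ℕ) {u : List (List ℕ)}
    (hu : u ∈ lassoTuples n Q k) : IsLasso (Q ^ k) (environment θ ctx u) := by
  suffices ∀ x, IsLasso (Q ^ k) (lasso (u.getD (ctx.idxOf x) [])) from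
    fun i hi => funext fun x => congrArg θ.vertex (this x i hi)
  intro x
  rw [List.getD_eq_getElem?_getD]
  cases h : u[ctx.idxOf x]? with
  | none => exact fun _ _ => by simp [lasso_nil]
  | some v =>
    obtain ⟨i, hi, hv⟩ := exists_mem_lassoLists_of_mem_lassoTuples hu (List.mem_of_getElem? h)
    refine (isLasso_lasso v).of_dvd (pow_pos hQ k) ?_
    rw [length_half_of_mem_lassoLists hv]
    exact pow_dvd_pow Q hi

theorem environment_map_shiftLasso {n k : ℕ} (hQ : 0 < Q) (ctx : List ℕ) {u : List (List ℕ)}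
    (hu : u ∈ lassoTuples n Q k) (j : ℕ) :
    environment θ ctx (u.map (shiftLasso j)) = suffix (environment θ ctx u) j := by
  funext i x
  refine congrArg θ.vertex ?_
  rw [List.getD_eq_getElem?_getD, List.getD_eq_getElem?_getD, List.getElem?_map]
  cases h : u[ctx.idxOf x]? with
  | none => simp [lasso_nil]
  | some v =>
    obtain ⟨m, -, hv⟩ := exists_mem_lassoLists_of_mem_lassoTuples hu (List.mem_of_getElem? h)
    have h_pos : 0 < v.length / 2 := length_half_of_mem_lassoLists hv ▸ pow_pos hQ (m + 1)
    exact congrFun (lasso_shiftLasso h_pos j) i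

end Environments

section LassoSemantics

variable (θ : SystemCode)

/-- The list `v` describes a path of the coded system from its initial vertex. -/
def IsPathLasso (v : List ℕ) : Prop :=
  lasso v 0 = θ.2.1 % (θ.1 + 1) ∧ ∀ i < v.length, θ.Edge (lasso v i) (lasso v (i + 1))

variable {θ} {q : ℕ}

theorem vertex_lasso_mem_initialPaths_iff (hq : 0 < q) {v : List ℕ}
    (hv : v ∈ lassoLists (θ.1 + 1) q) :
    (fun i => θ.vertex (lasso v i)) ∈ θ.toTS.initialPaths ↔ IsPathLasso θ v := by
  have h_val (i : ℕ) : lasso v i % (θ.1 + 1) = lasso v i := Nat.mod_eq_of_lt (lasso_lt hv i)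
  have h_init : θ.vertex (lasso v 0) = θ.toTS.vI ↔ lasso v 0 = θ.2.1 % (θ.1 + 1) := by
    rw [← h_val 0]
    exact Fin.ext_iff.trans (by simp [SystemCode.vertex, SystemCode.toTS])
  have h_edge (i : ℕ) : θ.toTS.E (θ.vertex (lasso v i)) (θ.vertex (lasso v (i + 1))) ↔
      θ.Edge (lasso v i) (lasso v (i + 1)) := by
    rw [← h_val i, ← h_val (i + 1)]
    simp [SystemCode.vertex, SystemCode.toTS]
  have h_lasso := isLasso_lasso v
  rw [length_half_of_mem_lassoLists hv] at h_lasso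
  refine and_congr h_init ((forall_congr' h_edge).trans ?_)
  rw [(mem_lassoLists_iff.1 hv).1]
  exact (h_lasso.prodMk (h_lasso.suffix 1)).forall_iff hq
    (P := fun p => θ.Edge p.1 p.2)

theorem exists_vertex_lasso_eq (hq : 0 < q) {ρ : ℕ → θ.toTS.V} (hρ : IsLasso q ρ) :
    ∃ v ∈ lassoLists (θ.1 + 1) q, (fun i => θ.vertex (lasso v i)) = ρ := by
  refine ⟨lassoPrefix q fun i => (ρ i).val, lassoPrefix_mem_lassoLists fun i => (ρ i).isLt, ?_⟩
  rw [lasso_lassoPrefix hq (hρ.comp Fin.val)]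
  exact funext fun i => Fin.ofNat_val_eq_self _

/-- The factor by which a quantifier over the paths of the coded system enlarges lassos, for
formulas of size at most `R`. -/
def lassoFactor (θ : SystemCode) (R : ℕ) : ℕ :=
  (pathSize (θ.1 + 1) * recognizerBound (θ.1 + 1) R + 1).factorial

theorem lassoFactor_pos (θ : SystemCode) (R : ℕ) : 0 < lassoFactor θ R := Nat.factorial_pos _

/-- The tuples of lassos which the bounded semantics assigns to the variables in `ctx`. -/
def lassoAssignments (θ : SystemCode) (R : ℕ) (ctx : List ℕ) : List (List (List ℕ)) :=
  lassoTuples (θ.1 + 1) (lassoFactor θ R) ctx.length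

/-- The lassos over which a quantifier below the variables in `ctx` ranges. -/
def quantifierLassos (θ : SystemCode) (R : ℕ) (ctx : List ℕ) : List (List ℕ) :=
  lassoLists (θ.1 + 1) (lassoFactor θ R ^ (ctx.length + 1))

variable {R : ℕ} {ctx : List ℕ} {u : List (List ℕ)}

theorem exists_initialPath_iff_exists_lasso (hu : u ∈ lassoAssignments θ R ctx) (x : ℕ)
    {L : Set (ℕ → ℕ → θ.toTS.V)} (hL : Recognizable (recognizerBound (θ.1 + 1) R) L) :
    (∃ ρ ∈ θ.toTS.initialPaths,
        (fun i => Function.update (environment θ ctx u i) x (ρ i)) ∈ L) ↔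
      ∃ v ∈ quantifierLassos θ R ctx, IsPathLasso θ v ∧ environment θ (x :: ctx) (v :: u) ∈ L := by
  have h_pos (k : ℕ) : 0 < lassoFactor θ R ^ k := pow_pos (lassoFactor_pos θ R) k
  simp only [environment_cons]
  constructor
  · rintro ⟨ρ, hρ, h⟩
    obtain ⟨ρ', hρ', h_lasso, h'⟩ := hL.exists_isLasso_initialPath (h_pos _)
      (isLasso_environment (lassoFactor_pos θ R) ctx hu) hρ h
    rw [SystemCode.natCard_toTS] at h_lasso
    obtain ⟨v, hv, rfl⟩ := exists_vertex_lasso_eq (h_pos (ctx.length + 1)) h_lasso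
    exact ⟨v, hv, (vertex_lasso_mem_initialPaths_iff (h_pos _) hv).1 hρ', h'⟩
  · rintro ⟨v, hv, h_path, h⟩
    exact ⟨_, (vertex_lasso_mem_initialPaths_iff (h_pos _) hv).2 h_path, h⟩

/-- Satisfaction of `φ` over the coded system under the lassos `u` for the variables in `ctx`. -/
def Holds (θ : SystemCode) (φ : HFormula ℕ) (ctx : List ℕ) (u : List (List ℕ)) : Prop :=
  φ.sat θ.toTS.traces (traceAsg θ.toTS.lab (environment θ ctx u))

theorem holds_atom_iff {a x : ℕ} : Holds θ (.qf (.atom a x)) ctx u ↔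
    (lasso (u.getD (ctx.idxOf x) []) 0 % (θ.1 + 1), a) ∈ θ.2.2.2 := by
  simp [Holds, HFormula.sat, QF.sat, traceAsg, environment, SystemCode.vertex, SystemCode.toTS]

theorem holds_next_iff (hu : u ∈ lassoAssignments θ R ctx) {ψ : QF ℕ} :
    Holds θ (.qf (.next ψ)) ctx u ↔ Holds θ (.qf ψ) ctx (u.map (shiftLasso 1)) := by
  rw [Holds, Holds, environment_map_shiftLasso (lassoFactor_pos θ R) ctx hu]
  rfl

theorem holds_until_iff (hu : u ∈ lassoAssignments θ R ctx) {ψ₁ ψ₂ : QF ℕ} :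
    Holds θ (.qf (.untl ψ₁ ψ₂)) ctx u ↔ ∃ j < 2 * lassoFactor θ R ^ ctx.length,
      Holds θ (.qf ψ₂) ctx (u.map (shiftLasso j)) ∧
        ∀ j' < j, Holds θ (.qf ψ₁) ctx (u.map (shiftLasso j')) := by
  have hQ := lassoFactor_pos θ R
  have h_lasso : IsLasso (lassoFactor θ R ^ ctx.length) fun j => suffix (environment θ ctx u) j :=
    fun j hj => funext fun i => by
      have := isLasso_environment (θ := θ) hQ ctx hu (i + j) (by omega)
      rwa [Nat.add_assoc] at this
  simp only [Holds, environment_map_shiftLasso hQ ctx hu]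
  exact h_lasso.until_iff (pow_pos hQ _) (P := fun w => ψ₁.sat (traceAsg θ.toTS.lab w))
    (R := fun w => ψ₂.sat (traceAsg θ.toTS.lab w))

theorem recognizable_holds {φ : HFormula ℕ} (hφ : φ.size ≤ R) :
    Recognizable (recognizerBound (θ.1 + 1) R)
      {w : ℕ → ℕ → θ.toTS.V | φ.sat θ.toTS.traces (traceAsg θ.toTS.lab w)} := by
  simpa only [SystemCode.natCard_toTS] using φ.recognizable (S := θ.toTS) hφ

theorem holds_ex_iff (hu : u ∈ lassoAssignments θ R ctx) {φ : HFormula ℕ} (hφ : φ.size ≤ R)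
    {x : ℕ} : Holds θ (.ex x φ) ctx u ↔
      ∃ v ∈ quantifierLassos θ R ctx, IsPathLasso θ v ∧ Holds θ φ (x :: ctx) (v :: u) :=
  HFormula.sat_ex_traceAsg_iff.trans
    (exists_initialPath_iff_exists_lasso hu x (recognizable_holds hφ))

theorem holds_all_iff (hu : u ∈ lassoAssignments θ R ctx) {φ : HFormula ℕ} (hφ : φ.size ≤ R)
    {x : ℕ} : Holds θ (.all x φ) ctx u ↔
      ∀ v ∈ quantifierLassos θ R ctx, IsPathLasso θ v → Holds θ φ (x :: ctx) (v :: u) := by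
  have h_neg := not_congr
    (exists_initialPath_iff_exists_lasso hu x (recognizable_holds hφ).compl)
  simp only [not_exists, not_and, Set.mem_compl_iff, not_not] at h_neg
  exact HFormula.sat_all_traceAsg_iff.trans h_neg

end LassoSemantics

/-! ### Certificates -/

/-- An entry `(r, ctx, c, T)` of a certificate: the formula of size `r` with code `c` holds under
precisely those assignments of lassos to the variables `ctx` which are listed in `T`. -/
abbrev Entry : Type := ℕ × List ℕ × ℕ × List (List (List ℕ))

namespace Entry

/-- The size of the formula. -/
abbrev rank (e : Entry) : ℕ := e.1

/-- The variables in scope, the innermost one first. -/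
abbrev ctx (e : Entry) : List ℕ := e.2.1

/-- The code of the formula. -/
abbrev code (e : Entry) : ℕ := e.2.2.1

/-- The satisfying assignments. -/
abbrev table (e : Entry) : List (List (List ℕ)) := e.2.2.2

end Entry

section Certificates

variable (θ : SystemCode) (R : ℕ)

/-- The table of `e` lists the assignments which satisfy `P`. -/
def Tabulates (e : Entry) (P : List (List ℕ) → Prop) : Prop :=
  ∀ u ∈ lassoAssignments θ R e.ctx, u ∈ e.table ↔ P u

/-- The claim made by an entry about the formula `φ`. -/
def Represents (e : Entry) (φ : HFormula ℕ) : Prop :=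
  e.rank = φ.size ∧ e.code = φ.codeWith id ∧ (∀ x ∈ φ.freeVars, x ∈ e.ctx) ∧
    Tabulates θ R e (Holds θ φ e.ctx)

/-- The entry `e` is correct by the semantics of an atomic formula. -/
def AtomStep (e : Entry) : Prop :=
  ∃ x ∈ e.ctx, ∃ a < e.code + 1, e.rank = 1 ∧
    e.code = Nat.pair 2 (Nat.pair 0 (Nat.pair a x)) ∧
    Tabulates θ R e fun u => (lasso (u.getD (e.ctx.idxOf x) []) 0 % (θ.1 + 1), a) ∈ θ.2.2.2

/-- The entry `e` follows from `e₁` by the rule `P` for the unary connective with the given tag. -/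
def UnaryStep (tag : ℕ) (P : List (List (List ℕ)) → List (List ℕ) → Prop) (e e₁ : Entry) :
    Prop :=
  e.rank = e₁.rank + 1 ∧ e.ctx = e₁.ctx ∧ e₁.code.unpair.1 = 2 ∧
    e.code = Nat.pair 2 (Nat.pair tag e₁.code.unpair.2) ∧ Tabulates θ R e (P e₁.table)

/-- The entry `e` follows from `e₁` and `e₂` by the rule `P` for the binary connective with the
given tag. -/
def BinaryStep (tag : ℕ)
    (P : List ℕ → List (List (List ℕ)) → List (List (List ℕ)) → List (List ℕ) → Prop)
    (e e₁ e₂ : Entry) : Prop :=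
  e.rank = e₁.rank + e₂.rank + 1 ∧ e.ctx = e₁.ctx ∧ e.ctx = e₂.ctx ∧
    e₁.code.unpair.1 = 2 ∧ e₂.code.unpair.1 = 2 ∧
    e.code = Nat.pair 2 (Nat.pair tag (Nat.pair e₁.code.unpair.2 e₂.code.unpair.2)) ∧
    Tabulates θ R e (P e.ctx e₁.table e₂.table)

/-- The entry `e` follows from `e₁` by the rule `P` for the quantifier with the given tag. -/
def QuantifierStep (tag : ℕ) (P : List ℕ → List (List (List ℕ)) → List (List ℕ) → Prop)
    (e e₁ : Entry) : Prop :=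
  ∃ x ∈ e₁.ctx, e.rank = e₁.rank + 1 ∧ e₁.ctx = x :: e.ctx ∧
    e.code = Nat.pair tag (Nat.pair x e₁.code) ∧ Tabulates θ R e (P e.ctx e₁.table)

/-- The semantics of negation on tables. -/
def negTable (T : List (List (List ℕ))) (u : List (List ℕ)) : Prop := u ∉ T

/-- The semantics of the next operator on tables. -/
def nextTable (T : List (List (List ℕ))) (u : List (List ℕ)) : Prop := u.map (shiftLasso 1) ∈ T

/-- The semantics of disjunction on tables. -/
def disjTable (_ : List ℕ) (T₁ T₂ : List (List (List ℕ))) (u : List (List ℕ)) : Prop :=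
  u ∈ T₁ ∨ u ∈ T₂

/-- The semantics of the until operator on tables. -/
def untilTable (ctx : List ℕ) (T₁ T₂ : List (List (List ℕ))) (u : List (List ℕ)) : Prop :=
  ∃ j < 2 * lassoFactor θ R ^ ctx.length,
    u.map (shiftLasso j) ∈ T₂ ∧ ∀ j' < j, u.map (shiftLasso j') ∈ T₁

/-- The semantics of existential quantification on tables. -/
def existsTable (ctx : List ℕ) (T : List (List (List ℕ))) (u : List (List ℕ)) : Prop :=
  ∃ v ∈ quantifierLassos θ R ctx, IsPathLasso θ v ∧ v :: u ∈ T

/-- The semantics of universal quantification on tables. -/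
def forallTable (ctx : List ℕ) (T : List (List (List ℕ))) (u : List (List ℕ)) : Prop :=
  ∀ v ∈ quantifierLassos θ R ctx, ¬ IsPathLasso θ v ∨ v :: u ∈ T

/-- The entry `e` follows from entries in `D` by one of the rules. -/
def Justified (D : List Entry) (e : Entry) : Prop :=
  e.rank ≤ R ∧ (AtomStep θ R e ∨
    (∃ e₁ ∈ D, UnaryStep θ R 1 negTable e e₁ ∨ UnaryStep θ R 3 nextTable e e₁) ∨
    (∃ e₁ ∈ D, ∃ e₂ ∈ D, BinaryStep θ R 2 disjTable e e₁ e₂ ∨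
      BinaryStep θ R 4 (untilTable θ R) e e₁ e₂) ∨
    ∃ e₁ ∈ D, QuantifierStep θ R 0 (existsTable θ R) e e₁ ∨
      QuantifierStep θ R 1 (forallTable θ R) e e₁)

variable {θ R} {e e₁ e₂ : Entry}

theorem Tabulates.congr_iff {P P' : List (List ℕ) → Prop}
    (h : ∀ u ∈ lassoAssignments θ R e.ctx, P u ↔ P' u) :
    Tabulates θ R e P ↔ Tabulates θ R e P' :=
  forall₂_congr fun u hu => iff_congr Iff.rfl (h u hu)

theorem exists_represents {φ : HFormula ℕ} {ctx : List ℕ} (hφ : ∀ x ∈ φ.freeVars, x ∈ ctx) :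
    ∃ e : Entry, e.ctx = ctx ∧ Represents θ R e φ := by
  classical
  refine ⟨(φ.size, ctx, φ.codeWith id, (lassoAssignments θ R ctx).filter (Holds θ φ ctx)),
    rfl, rfl, rfl, hφ, fun u hu => ?_⟩
  rw [List.mem_filter, decide_eq_true_iff]
  exact and_iff_right hu

theorem AtomStep.exists_represents (h : AtomStep θ R e) : ∃ φ, Represents θ R e φ := by
  obtain ⟨x, hx, a, -, h_rank, h_code, h_table⟩ := h
  refine ⟨.qf (.atom a x), h_rank, h_code, fun y hy => ?_,
    (Tabulates.congr_iff fun _ _ => holds_atom_iff).2 h_table⟩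
  obtain rfl : y = x := hy
  exact hx

theorem Represents.atomStep {a x : ℕ} (h : Represents θ R e (.qf (.atom a x))) :
    AtomStep θ R e := by
  obtain ⟨h_rank, h_code, h_vars, h_table⟩ := h
  refine ⟨x, h_vars x rfl, a, ?_, h_rank, h_code,
    (Tabulates.congr_iff fun _ _ => holds_atom_iff).1 h_table⟩
  rw [h_code]
  exact Nat.lt_succ_of_le ((Nat.left_le_pair a x).trans
    ((Nat.right_le_pair 0 _).trans (Nat.right_le_pair 2 _)))

theorem Represents.exists_eq_qf {φ : HFormula ℕ} (h : Represents θ R e φ)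
    (h_tag : e.code.unpair.1 = 2) : ∃ ψ, φ = .qf ψ := by
  rw [h.2.1] at h_tag
  cases φ with
  | qf ψ => exact ⟨ψ, rfl⟩
  | ex | all => simp [HFormula.codeWith] at h_tag

theorem Represents.code_qf {ψ : QF ℕ} (h : Represents θ R e (.qf ψ)) :
    e.code.unpair = (2, ψ.codeWith id) := by
  rw [h.2.1, HFormula.codeWith, Nat.unpair_pair]

theorem Represents.unaryStep_iff {ψ ψ₁ : QF ℕ} {tag : ℕ}
    {P : List (List (List ℕ)) → List (List ℕ) → Prop} (h₁ : Represents θ R e₁ (.qf ψ₁))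
    (h_ctx : e.ctx = e₁.ctx) (h_size : ψ.size = ψ₁.size + 1)
    (h_code : ψ.codeWith id = Nat.pair tag (ψ₁.codeWith id)) (h_vars : ψ.freeVars = ψ₁.freeVars)
    (hP : ∀ u ∈ lassoAssignments θ R e.ctx, P e₁.table u ↔ Holds θ (.qf ψ) e.ctx u) :
    UnaryStep θ R tag P e e₁ ↔ Represents θ R e (.qf ψ) := by
  have h_vars' : ∀ x ∈ ψ.freeVars, x ∈ e.ctx := h_ctx ▸ h_vars ▸ h₁.2.2.1
  have h_rank : e₁.rank = ψ₁.size := h₁.1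
  simp only [UnaryStep, Represents, HFormula.size, HFormula.codeWith, HFormula.freeVars,
    Tabulates.congr_iff hP, h₁.code_qf, h_rank, h_size, h_code, eq_true h_ctx, eq_true h_vars',
    true_and]

theorem Represents.binaryStep_iff {ψ ψ₁ ψ₂ : QF ℕ} {tag : ℕ}
    {P : List ℕ → List (List (List ℕ)) → List (List (List ℕ)) → List (List ℕ) → Prop}
    (h₁ : Represents θ R e₁ (.qf ψ₁)) (h₂ : Represents θ R e₂ (.qf ψ₂))
    (h_ctx₁ : e.ctx = e₁.ctx) (h_ctx₂ : e.ctx = e₂.ctx) (h_size : ψ.size = ψ₁.size + ψ₂.size + 1)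
    (h_code : ψ.codeWith id = Nat.pair tag (Nat.pair (ψ₁.codeWith id) (ψ₂.codeWith id)))
    (h_vars : ψ.freeVars = ψ₁.freeVars ∪ ψ₂.freeVars)
    (hP : ∀ u ∈ lassoAssignments θ R e.ctx,
      P e.ctx e₁.table e₂.table u ↔ Holds θ (.qf ψ) e.ctx u) :
    BinaryStep θ R tag P e e₁ e₂ ↔ Represents θ R e (.qf ψ) := by
  have h_vars' : ∀ x ∈ ψ.freeVars, x ∈ e.ctx := by
    rw [h_vars]
    exact fun x hx => hx.elim (fun h => h_ctx₁ ▸ h₁.2.2.1 x h) fun h => h_ctx₂ ▸ h₂.2.2.1 x h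
  have h_rank₁ : e₁.rank = ψ₁.size := h₁.1
  have h_rank₂ : e₂.rank = ψ₂.size := h₂.1
  simp only [BinaryStep, Represents, HFormula.size, HFormula.codeWith, HFormula.freeVars,
    Tabulates.congr_iff hP, h₁.code_qf, h₂.code_qf, h_rank₁, h_rank₂, h_size, h_code,
    eq_true h_ctx₁, eq_true h_ctx₂, eq_true h_vars', true_and]

theorem Represents.quantifierStep_iff {φ φ₁ : HFormula ℕ} {tag x : ℕ}
    {P : List ℕ → List (List (List ℕ)) → List (List ℕ) → Prop} (h₁ : Represents θ R e₁ φ₁)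
    (h_ctx : e₁.ctx = x :: e.ctx) (h_size : φ.size = φ₁.size + 1)
    (h_code : φ.codeWith id = Nat.pair tag (Nat.pair x (φ₁.codeWith id)))
    (h_vars : φ.freeVars = φ₁.freeVars \ {x})
    (hP : ∀ u ∈ lassoAssignments θ R e.ctx, P e.ctx e₁.table u ↔ Holds θ φ e.ctx u) :
    QuantifierStep θ R tag P e e₁ ↔ Represents θ R e φ := by
  have h_vars' : ∀ y ∈ φ.freeVars, y ∈ e.ctx := by
    rw [h_vars]
    exact fun y ⟨hy, hyx⟩ => (List.mem_cons.1 (h_ctx ▸ h₁.2.2.1 y hy)).resolve_left hyx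
  simp only [QuantifierStep, Represents, Tabulates.congr_iff hP, h₁.1, h₁.2.1, h_size, h_code,
    h_ctx, eq_true h_vars', true_and]
  simp

theorem Represents.mem_table_iff {φ : HFormula ℕ} (h : Represents θ R e φ) {ctx : List ℕ}
    (h_ctx : ctx = e.ctx) {u : List (List ℕ)} (hu : u ∈ lassoAssignments θ R ctx) :
    u ∈ e.table ↔ Holds θ φ ctx u := by
  subst h_ctx
  exact h.2.2.2 u hu

theorem Represents.neg_iff {ψ : QF ℕ} (h₁ : Represents θ R e₁ (.qf ψ)) (h_ctx : e.ctx = e₁.ctx) :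
    UnaryStep θ R 1 negTable e e₁ ↔ Represents θ R e (.qf ψ.neg) :=
  h₁.unaryStep_iff h_ctx rfl rfl rfl fun _ hu => not_congr (h₁.mem_table_iff h_ctx hu)

theorem Represents.next_iff {ψ : QF ℕ} (h₁ : Represents θ R e₁ (.qf ψ)) (h_ctx : e.ctx = e₁.ctx) :
    UnaryStep θ R 3 nextTable e e₁ ↔ Represents θ R e (.qf ψ.next) :=
  h₁.unaryStep_iff h_ctx rfl rfl rfl fun _ hu =>
    (h₁.mem_table_iff h_ctx (map_shiftLasso_mem_lassoTuples hu 1)).trans (holds_next_iff hu).symm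

theorem Represents.disj_iff {ψ₁ ψ₂ : QF ℕ} (h₁ : Represents θ R e₁ (.qf ψ₁))
    (h₂ : Represents θ R e₂ (.qf ψ₂)) (h_ctx₁ : e.ctx = e₁.ctx) (h_ctx₂ : e.ctx = e₂.ctx) :
    BinaryStep θ R 2 disjTable e e₁ e₂ ↔ Represents θ R e (.qf (ψ₁.disj ψ₂)) :=
  h₁.binaryStep_iff h₂ h_ctx₁ h_ctx₂ rfl rfl rfl fun _ hu =>
    or_congr (h₁.mem_table_iff h_ctx₁ hu) (h₂.mem_table_iff h_ctx₂ hu)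

theorem Represents.until_iff {ψ₁ ψ₂ : QF ℕ} (h₁ : Represents θ R e₁ (.qf ψ₁))
    (h₂ : Represents θ R e₂ (.qf ψ₂)) (h_ctx₁ : e.ctx = e₁.ctx) (h_ctx₂ : e.ctx = e₂.ctx) :
    BinaryStep θ R 4 (untilTable θ R) e e₁ e₂ ↔ Represents θ R e (.qf (ψ₁.untl ψ₂)) :=
  h₁.binaryStep_iff h₂ h_ctx₁ h_ctx₂ rfl rfl rfl fun _ hu => .trans
    (exists_congr fun j => and_congr_right fun _ => and_congr
      (h₂.mem_table_iff h_ctx₂ (map_shiftLasso_mem_lassoTuples hu j))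
      (forall₂_congr fun j' _ => h₁.mem_table_iff h_ctx₁ (map_shiftLasso_mem_lassoTuples hu j')))
    (holds_until_iff hu).symm

theorem Represents.mem_table_cons_iff {φ : HFormula ℕ} (h₁ : Represents θ R e₁ φ) {x : ℕ}
    {ctx : List ℕ} (h_ctx : e₁.ctx = x :: ctx) {u : List (List ℕ)}
    (hu : u ∈ lassoAssignments θ R ctx) {v : List ℕ} (hv : v ∈ quantifierLassos θ R ctx) :
    v :: u ∈ e₁.table ↔ Holds θ φ (x :: ctx) (v :: u) :=
  h₁.mem_table_iff h_ctx.symm (cons_mem_lassoTuples_succ_iff.2 ⟨hv, hu⟩)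

theorem Represents.ex_iff {φ : HFormula ℕ} (h₁ : Represents θ R e₁ φ) (h_size : φ.size ≤ R) {x : ℕ}
    (h_ctx : e₁.ctx = x :: e.ctx) :
    QuantifierStep θ R 0 (existsTable θ R) e e₁ ↔ Represents θ R e (.ex x φ) :=
  h₁.quantifierStep_iff h_ctx rfl rfl rfl fun _ hu => .trans
    (exists_congr fun _ => and_congr_right fun hv => and_congr_right fun _ =>
      h₁.mem_table_cons_iff h_ctx hu hv)
    (holds_ex_iff hu h_size).symm

theorem Represents.all_iff {φ : HFormula ℕ} (h₁ : Represents θ R e₁ φ) (h_size : φ.size ≤ R)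
    {x : ℕ} (h_ctx : e₁.ctx = x :: e.ctx) :
    QuantifierStep θ R 1 (forallTable θ R) e e₁ ↔ Represents θ R e (.all x φ) :=
  h₁.quantifierStep_iff h_ctx rfl rfl rfl fun _ hu => .trans
    (forall₂_congr fun _ hv => imp_iff_not_or.symm.trans
      (imp_congr_right fun _ => h₁.mem_table_cons_iff h_ctx hu hv))
    (holds_all_iff hu h_size).symm

theorem Justified.exists_represents {D : List Entry} (h : Justified θ R D e)
    (ih : ∀ e₁ ∈ D, e₁.rank < e.rank → ∃ φ, Represents θ R e₁ φ) :
    ∃ φ, Represents θ R e φ := by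
  obtain ⟨h_rank, h_atom | ⟨e₁, he₁, h⟩ | ⟨e₁, he₁, e₂, he₂, h⟩ | ⟨e₁, he₁, h⟩⟩ := h
  · exact h_atom.exists_represents
  · obtain ⟨h_lt, h_ctx, h_tag⟩ :
        e₁.rank < e.rank ∧ e.ctx = e₁.ctx ∧ e₁.code.unpair.1 = 2 := by
      rcases h with ⟨h, h_ctx, h_tag, -⟩ | ⟨h, h_ctx, h_tag, -⟩ <;> exact ⟨by omega, h_ctx, h_tag⟩
    obtain ⟨φ, hφ⟩ := ih e₁ he₁ h_lt
    obtain ⟨ψ, rfl⟩ := hφ.exists_eq_qf h_tag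
    exact h.elim (fun h => ⟨_, (hφ.neg_iff h_ctx).1 h⟩) fun h => ⟨_, (hφ.next_iff h_ctx).1 h⟩
  · obtain ⟨h_lt₁, h_lt₂, h_ctx₁, h_ctx₂, h_tag₁, h_tag₂⟩ : e₁.rank < e.rank ∧ e₂.rank < e.rank ∧
        e.ctx = e₁.ctx ∧ e.ctx = e₂.ctx ∧ e₁.code.unpair.1 = 2 ∧ e₂.code.unpair.1 = 2 := by
      rcases h with ⟨h, h₁, h₂, h₃, h₄, -⟩ | ⟨h, h₁, h₂, h₃, h₄, -⟩ <;>
        exact ⟨by omega, by omega, h₁, h₂, h₃, h₄⟩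
    obtain ⟨φ₁, hφ₁⟩ := ih e₁ he₁ h_lt₁
    obtain ⟨φ₂, hφ₂⟩ := ih e₂ he₂ h_lt₂
    obtain ⟨ψ₁, rfl⟩ := hφ₁.exists_eq_qf h_tag₁
    obtain ⟨ψ₂, rfl⟩ := hφ₂.exists_eq_qf h_tag₂
    exact h.elim (fun h => ⟨_, (hφ₁.disj_iff hφ₂ h_ctx₁ h_ctx₂).1 h⟩)
      fun h => ⟨_, (hφ₁.until_iff hφ₂ h_ctx₁ h_ctx₂).1 h⟩
  · obtain ⟨x, h_lt, h_ctx⟩ : ∃ x, e₁.rank < e.rank ∧ e₁.ctx = x :: e.ctx := by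
      rcases h with ⟨x, -, h, h_ctx, -⟩ | ⟨x, -, h, h_ctx, -⟩ <;> exact ⟨x, by omega, h_ctx⟩
    obtain ⟨φ, hφ⟩ := ih e₁ he₁ h_lt
    have h_size : φ.size ≤ R := hφ.1 ▸ h_lt.le.trans h_rank
    exact h.elim (fun h => ⟨_, (hφ.ex_iff h_size h_ctx).1 h⟩)
      fun h => ⟨_, (hφ.all_iff h_size h_ctx).1 h⟩

theorem Justified.mono {D D' : List Entry} (hD : D ⊆ D') :
    Justified θ R D e → Justified θ R D' e :=
  And.imp_right <| Or.imp_right <| Or.imp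
    (fun ⟨e₁, he₁, h⟩ => ⟨e₁, hD he₁, h⟩) <| Or.imp
    (fun ⟨e₁, he₁, e₂, he₂, h⟩ => ⟨e₁, hD he₁, e₂, hD he₂, h⟩)
    (fun ⟨e₁, he₁, h⟩ => ⟨e₁, hD he₁, h⟩)

variable (θ R) in
/-- Every entry of `D` follows from entries in `D`; the dependencies are well founded since the
ranks decrease. -/
def IsCertificate (D : List Entry) : Prop := ∀ e ∈ D, Justified θ R D e

theorem IsCertificate.exists_represents {D : List Entry} (hD : IsCertificate θ R D)
    (he : e ∈ D) : ∃ φ, Represents θ R e φ := by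
  induction hr : e.rank using Nat.strong_induction_on generalizing e with
  | _ r ih =>
    subst hr
    exact (hD e he).exists_represents fun e₁ he₁ h_lt => ih _ h_lt he₁ rfl

theorem IsCertificate.exists_mem {D : List Entry} (hD : IsCertificate θ R D)
    (he : Justified θ R D e) : ∃ D', IsCertificate θ R D' ∧ e ∈ D' :=
  ⟨e :: D, List.forall_mem_cons.2 ⟨he.mono (List.subset_cons_self e D),
    fun e' he' => (hD e' he').mono (List.subset_cons_self e D)⟩, List.mem_cons_self⟩

theorem IsCertificate.append {D₁ D₂ : List Entry} (hD₁ : IsCertificate θ R D₁)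
    (hD₂ : IsCertificate θ R D₂) : IsCertificate θ R (D₁ ++ D₂) :=
  List.forall_mem_append.2 ⟨fun e he => (hD₁ e he).mono (List.subset_append_left D₁ D₂),
    fun e he => (hD₂ e he).mono (List.subset_append_right D₁ D₂)⟩

variable (θ R) in
/-- Every correct claim about `φ` occurs in a certificate. -/
def Certifiable (φ : HFormula ℕ) : Prop :=
  ∀ e, Represents θ R e φ → ∃ D, IsCertificate θ R D ∧ e ∈ D

theorem Certifiable.exists_entry {φ : HFormula ℕ} (hφ : Certifiable θ R φ) {ctx : List ℕ}
    (h_vars : ∀ x ∈ φ.freeVars, x ∈ ctx) :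
    ∃ D, IsCertificate θ R D ∧ ∃ e ∈ D, ctx = e.ctx ∧ Represents θ R e φ := by
  obtain ⟨e, h_ctx, he⟩ := HyperLTL.exists_represents (θ := θ) (R := R) h_vars
  obtain ⟨D, hD, h_mem⟩ := hφ e he
  exact ⟨D, hD, e, h_mem, h_ctx.symm, he⟩

theorem Certifiable.unary {ψ₁ ψ : QF ℕ} (hψ₁ : Certifiable θ R (.qf ψ₁)) (h_size : ψ.size ≤ R)
    (h_vars : ψ.freeVars = ψ₁.freeVars)
    (h_step : ∀ e e₁, e.ctx = e₁.ctx → Represents θ R e₁ (.qf ψ₁) → Represents θ R e (.qf ψ) →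
      UnaryStep θ R 1 negTable e e₁ ∨ UnaryStep θ R 3 nextTable e e₁) :
    Certifiable θ R (.qf ψ) := by
  intro e he
  obtain ⟨D, hD, e₁, h_mem, h_ctx, he₁⟩ := hψ₁.exists_entry
    (ctx := e.ctx) fun x hx => he.2.2.1 x (h_vars.superset hx)
  exact hD.exists_mem
    ⟨he.1.trans_le h_size, .inr (.inl ⟨e₁, h_mem, h_step e e₁ h_ctx he₁ he⟩)⟩

theorem Certifiable.binary {ψ₁ ψ₂ ψ : QF ℕ} (hψ₁ : Certifiable θ R (.qf ψ₁))
    (hψ₂ : Certifiable θ R (.qf ψ₂)) (h_size : ψ.size ≤ R)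
    (h_vars : ψ.freeVars = ψ₁.freeVars ∪ ψ₂.freeVars)
    (h_step : ∀ e e₁ e₂, e.ctx = e₁.ctx → e.ctx = e₂.ctx → Represents θ R e₁ (.qf ψ₁) →
      Represents θ R e₂ (.qf ψ₂) → Represents θ R e (.qf ψ) →
      BinaryStep θ R 2 disjTable e e₁ e₂ ∨ BinaryStep θ R 4 (untilTable θ R) e e₁ e₂) :
    Certifiable θ R (.qf ψ) := by
  intro e he
  have h_mem : ∀ x ∈ ψ₁.freeVars ∪ ψ₂.freeVars, x ∈ e.ctx := h_vars ▸ he.2.2.1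
  obtain ⟨D₁, hD₁, e₁, h_mem₁, h_ctx₁, he₁⟩ := hψ₁.exists_entry fun x hx => h_mem x (.inl hx)
  obtain ⟨D₂, hD₂, e₂, h_mem₂, h_ctx₂, he₂⟩ := hψ₂.exists_entry fun x hx => h_mem x (.inr hx)
  exact (hD₁.append hD₂).exists_mem ⟨he.1.trans_le h_size, .inr (.inr (.inl
    ⟨e₁, List.mem_append_left _ h_mem₁, e₂, List.mem_append_right _ h_mem₂,
      h_step e e₁ e₂ h_ctx₁ h_ctx₂ he₁ he₂ he⟩))⟩

theorem Certifiable.quantifier {φ₁ φ : HFormula ℕ} (hφ₁ : Certifiable θ R φ₁)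
    (h_size : φ.size ≤ R) {x : ℕ} (h_vars : φ.freeVars = φ₁.freeVars \ {x})
    (h_step : ∀ e e₁, e₁.ctx = x :: e.ctx → Represents θ R e₁ φ₁ → Represents θ R e φ →
      QuantifierStep θ R 0 (existsTable θ R) e e₁ ∨ QuantifierStep θ R 1 (forallTable θ R) e e₁) :
    Certifiable θ R φ := by
  intro e he
  have h_mem : ∀ y ∈ φ₁.freeVars, y ∈ x :: e.ctx := fun y hy =>
    List.mem_cons.2 (or_iff_not_imp_left.2 fun hyx => he.2.2.1 y (h_vars ▸ ⟨hy, hyx⟩))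
  obtain ⟨D, hD, e₁, h_mem, h_ctx, he₁⟩ := hφ₁.exists_entry h_mem
  exact hD.exists_mem
    ⟨he.1.trans_le h_size, .inr (.inr (.inr ⟨e₁, h_mem, h_step e e₁ h_ctx.symm he₁ he⟩))⟩

theorem certifiable_qf {ψ : QF ℕ} (h_size : ψ.size ≤ R) : Certifiable θ R (.qf ψ) := by
  induction ψ with
  | atom a x =>
    exact fun e he => IsCertificate.exists_mem (D := []) (fun _ => nofun)
      ⟨he.1.trans_le h_size, .inl he.atomStep⟩
  | neg ψ ih =>
    exact (ih (Nat.le_of_succ_le h_size)).unary h_size rfl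
      fun _ _ h_ctx h₁ h => .inl ((h₁.neg_iff h_ctx).2 h)
  | next ψ ih =>
    exact (ih (Nat.le_of_succ_le h_size)).unary h_size rfl
      fun _ _ h_ctx h₁ h => .inr ((h₁.next_iff h_ctx).2 h)
  | disj ψ₁ ψ₂ ih₁ ih₂ =>
    rw [QF.size] at h_size
    exact (ih₁ (by omega)).binary (ih₂ (by omega)) h_size rfl
      fun _ _ _ h_ctx₁ h_ctx₂ h₁ h₂ h => .inl ((h₁.disj_iff h₂ h_ctx₁ h_ctx₂).2 h)
  | untl ψ₁ ψ₂ ih₁ ih₂ =>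
    rw [QF.size] at h_size
    exact (ih₁ (by omega)).binary (ih₂ (by omega)) h_size rfl
      fun _ _ _ h_ctx₁ h_ctx₂ h₁ h₂ h => .inr ((h₁.until_iff h₂ h_ctx₁ h_ctx₂).2 h)

theorem certifiable {φ : HFormula ℕ} (h_size : φ.size ≤ R) : Certifiable θ R φ := by
  induction φ with
  | qf ψ => exact certifiable_qf h_size
  | ex x φ ih =>
    have h_size₁ := Nat.le_of_succ_le h_size
    exact (ih h_size₁).quantifier h_size rfl
      fun _ _ h_ctx h₁ h => .inl ((h₁.ex_iff h_size₁ h_ctx).2 h)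
  | all x φ ih =>
    have h_size₁ := Nat.le_of_succ_le h_size
    exact (ih h_size₁).quantifier h_size rfl
      fun _ _ h_ctx h₁ h => .inr ((h₁.all_iff h_size₁ h_ctx).2 h)

end Certificates

theorem holds_nil_iff {θ : SystemCode} {φ : HFormula ℕ} (hφ : φ.IsSentence) :
    Holds θ φ [] [] ↔ HModels θ.toTS.traces φ :=
  hφ.sat_iff _ _

/-- A certificate for a system and a sentence with code `n`. -/
def Certifies (n : ℕ) (z : SystemCode × ℕ × List Entry) : Prop :=
  IsCertificate z.1 z.2.1 z.2.2 ∧ ∃ e ∈ z.2.2, e.ctx = [] ∧ e.code = n ∧ [] ∈ e.table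

theorem mem_finStateSatCodes_iff {n : ℕ} : n ∈ FinStateSatCodes ↔ ∃ z, Certifies n z := by
  constructor
  · rintro ⟨φ, hφ, rfl, h_model⟩
    obtain ⟨θ, hθ⟩ := (SystemCode.exists_hModels_iff hφ).1 h_model
    obtain ⟨D, hD, e, he, h_ctx, h_rep⟩ :=
      (certifiable (θ := θ) (le_refl φ.size)).exists_entry (ctx := []) fun x hx =>
        absurd hx (hφ ▸ Set.notMem_empty x)
    refine ⟨(θ, φ.size, D), hD, e, he, h_ctx.symm, h_rep.2.1, ?_⟩
    exact (h_rep.mem_table_iff h_ctx (nil_mem_lassoTuples_zero _ _)).2 ((holds_nil_iff hφ).2 hθ)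
  · rintro ⟨⟨θ, R, D⟩, hD, e, he, h_ctx, rfl, h_mem⟩
    obtain ⟨φ, h_rep⟩ := hD.exists_represents he
    have hφ : φ.IsSentence := Set.eq_empty_of_forall_notMem fun x hx =>
      List.not_mem_nil (h_ctx ▸ h_rep.2.2.1 x hx)
    refine ⟨φ, hφ, h_rep.2.1.symm, (SystemCode.exists_hModels_iff hφ).2 ⟨θ, ?_⟩⟩
    exact (holds_nil_iff hφ).1
      ((h_rep.mem_table_iff h_ctx.symm (nil_mem_lassoTuples_zero _ _)).1 h_mem)

/-! ### Computability of the certificate check -/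

section Primrec

variable {α β : Type} [Primcodable α] [Primcodable β]

theorem isRE_of_primrecPred [Inhabited β] {P : ℕ → β → Prop}
    (hP : PrimrecPred fun z : ℕ × β => P z.1 z.2) : IsRE {n | ∃ y, P n y} := by
  classical
  let decoded (k : ℕ) : β := (Encodable.decode k).getD default
  have h_decoded : Primrec decoded :=
    Primrec.option_getD.comp Primrec.decode (Primrec.const default)
  have h_test : PrimrecPred fun z : ℕ × ℕ => P z.1 (decoded z.2) :=
    hP.comp (Primrec.fst.pair (h_decoded.comp Primrec.snd))
  refine ⟨fun n => Nat.rfind fun k => Part.some (decide (P n (decoded k))),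
    Partrec.nat_iff.1 (Partrec.rfind h_test.decide.to_comp.partrec),
    fun n => Iff.trans ?_ Nat.rfind_dom'.symm⟩
  constructor
  · rintro ⟨y, hy⟩
    exact ⟨Encodable.encode y, by simpa [decoded] using hy, fun _ => trivial⟩
  · rintro ⟨k, hk, -⟩
    exact ⟨decoded k, by simpa using hk⟩

theorem primrecPred_exists_mem {f : α → List β} {P : α → β → Prop} (hf : Primrec f)
    (hP : PrimrecRel P) : PrimrecPred fun a => ∃ b ∈ f a, P a b :=
  hP.swap.exists_mem_list.comp hf .id

theorem primrecPred_forall_mem {f : α → List β} {P : α → β → Prop} (hf : Primrec f)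
    (hP : PrimrecRel P) : PrimrecPred fun a => ∀ b ∈ f a, P a b :=
  hP.swap.forall_mem_list.comp hf .id

theorem primrecPred_exists_lt {f : α → ℕ} {P : α → ℕ → Prop} (hf : Primrec f)
    (hP : PrimrecRel P) : PrimrecPred fun a => ∃ k < f a, P a k :=
  (primrecPred_exists_mem (Primrec.list_range.comp hf) hP).of_eq fun a => by
    simp only [List.mem_range]

theorem primrecPred_forall_lt {f : α → ℕ} {P : α → ℕ → Prop} (hf : Primrec f)
    (hP : PrimrecRel P) : PrimrecPred fun a => ∀ k < f a, P a k :=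
  (primrecPred_forall_mem (Primrec.list_range.comp hf) hP).of_eq fun a => by
    simp only [List.mem_range]

theorem primrecPred_mem {f : α → β} {g : α → List β} (hf : Primrec f) (hg : Primrec g) :
    PrimrecPred fun a => f a ∈ g a :=
  (primrecPred_exists_mem hg (Primrec.eq.comp₂ .right (hf.comp₂ .left))).of_eq fun a => by simp

theorem primrecPred_iff {P P' : α → Prop} (hP : PrimrecPred P) (hP' : PrimrecPred P') :
    PrimrecPred fun a => P a ↔ P' a :=
  ((hP.and hP').or (hP.not.and hP'.not)).of_eq fun _ => iff_iff_and_or_not_and_not.symm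

theorem primrec_pow : Primrec₂ ((· ^ ·) : ℕ → ℕ → ℕ) :=
  Primrec₂.unpaired'.1 Nat.Primrec.pow

theorem primrec_factorial : Primrec Nat.factorial := by
  have h_step : Primrec₂ fun n k : ℕ => (n + 1) * k :=
    Primrec.nat_mul.comp (Primrec.succ.comp .fst) .snd
  refine (Primrec.nat_rec₁ 1 h_step).of_eq fun n => ?_
  induction n with
  | zero => rfl
  | succ n ih => rw [Nat.factorial_succ, ← ih]

theorem primrec_sections : Primrec (List.sections : List (List α) → List (List α)) := by
  have h_step : Primrec₂ fun (_ : List (List α)) (z : List α × List (List α)) =>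
      z.2.flatMap fun s => z.1.map (· :: s) :=
    Primrec.list_flatMap (Primrec.snd.comp .snd) (Primrec.list_map
      (Primrec.fst.comp (Primrec.snd.comp .fst))
      (Primrec.list_cons.comp .snd (Primrec.snd.comp .fst)))
  refine (Primrec.list_foldr .id (.const [[]]) h_step).of_eq fun L => ?_
  induction L with
  | nil => rfl
  | cons l L ih => rw [List.sections, ← ih]; rfl

theorem primrec_replicate : Primrec₂ (List.replicate : ℕ → α → List α) :=
  (Primrec.list_map (Primrec.list_range.comp .fst) (Primrec.snd.comp .fst).to₂).of_eq
    fun n => by simp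

end Primrec

theorem primrec_lassoIndex : Primrec₂ lassoIndex :=
  Primrec.ite (Primrec.nat_lt.comp .snd .fst) .snd
    (Primrec.nat_add.comp .fst (Primrec.nat_mod.comp .snd .fst))

theorem primrec_lasso : Primrec₂ lasso :=
  (Primrec.list_getD 0).comp .fst (primrec_lassoIndex.comp
    (Primrec.nat_div.comp (Primrec.list_length.comp .fst) (.const 2)) .snd)

theorem primrec_shiftLasso : Primrec₂ shiftLasso :=
  Primrec.list_map
    (Primrec.list_range.comp (Primrec.nat_double.comp
      (Primrec.nat_div.comp (Primrec.list_length.comp .snd) (.const 2))))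
    (primrec_lasso.comp (Primrec.snd.comp .fst)
      (Primrec.nat_add.comp .snd (Primrec.fst.comp .fst)))

theorem primrec_lassoLists : Primrec₂ lassoLists :=
  primrec_sections.comp (primrec_replicate.comp (Primrec.nat_double.comp .snd)
    (Primrec.list_range.comp .fst))

theorem primrec_recognizerSize : Primrec₂ BuchiAutomaton.recognizerSize := by
  have h_square : Primrec fun z : ℕ × ℕ => z.1 * z.1 + 1 :=
    Primrec.succ.comp (Primrec.nat_mul.comp .fst .fst)
  exact primrec_pow.comp (.const 2) (Primrec.nat_mul.comp (.const 3) (Primrec.nat_mul.comp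
    (Primrec.nat_mul.comp h_square (Primrec.nat_mul.comp h_square (.const 2)))
    (primrec_pow.comp (.const 2) .snd)))

theorem primrec_pathSize : Primrec pathSize :=
  Primrec.nat_mul.comp (.const 3) (Primrec.nat_mul.comp Primrec.succ
    (Primrec.nat_mul.comp Primrec.succ (.const 2)))

theorem primrec_existsSize : Primrec₂ existsSize :=
  primrec_pow.comp (.const 2) (Primrec.nat_mul.comp (primrec_pathSize.comp .fst) .snd)

theorem primrec_recognizerBound : Primrec₂ recognizerBound :=
  Primrec.nat_iterate .snd
    (primrec_recognizerSize.comp (primrec_pow.comp (.const 2) .snd) .snd)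
    (primrec_existsSize.comp (Primrec.fst.comp .fst) .snd)

theorem primrec_lassoFactor : Primrec₂ lassoFactor := by
  have h_size : Primrec fun z : SystemCode × ℕ => z.1.1 + 1 :=
    Primrec.succ.comp (Primrec.fst.comp .fst)
  exact primrec_factorial.comp (Primrec.succ.comp (Primrec.nat_mul.comp
    (primrec_pathSize.comp h_size) (primrec_recognizerBound.comp h_size .snd)))

section Steps

variable {α : Type} [Primcodable α] {θ : α → SystemCode} {R : α → ℕ} {ctx : α → List ℕ}

theorem primrec_lassoAssignments (hθ : Primrec θ) (hR : Primrec R) (hctx : Primrec ctx) :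
    Primrec fun a => lassoAssignments (θ a) (R a) (ctx a) := by
  have h_lists : Primrec₂ fun (a : α) (i : ℕ) =>
      lassoLists ((θ a).1 + 1) (lassoFactor (θ a) (R a) ^ (i + 1)) :=
    primrec_lassoLists.comp (Primrec.succ.comp (Primrec.fst.comp (hθ.comp .fst)))
      (primrec_pow.comp (primrec_lassoFactor.comp (hθ.comp .fst) (hR.comp .fst))
        (Primrec.succ.comp .snd))
  exact primrec_sections.comp (Primrec.list_map
    (Primrec.list_reverse.comp (Primrec.list_range.comp (Primrec.list_length.comp hctx))) h_lists)

theorem primrec_quantifierLassos (hθ : Primrec θ) (hR : Primrec R) (hctx : Primrec ctx) :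
    Primrec fun a => quantifierLassos (θ a) (R a) (ctx a) :=
  primrec_lassoLists.comp (Primrec.succ.comp (Primrec.fst.comp hθ))
    (primrec_pow.comp (primrec_lassoFactor.comp hθ hR)
      (Primrec.succ.comp (Primrec.list_length.comp hctx)))

theorem primrecPred_edge {v w : α → ℕ} (hθ : Primrec θ) (hv : Primrec v) (hw : Primrec w) :
    PrimrecPred fun a => (θ a).Edge (v a) (w a) := by
  have h_edges : Primrec fun a => (θ a).2.2.1 :=
    Primrec.fst.comp (Primrec.snd.comp (Primrec.snd.comp hθ))
  exact (primrecPred_mem (hv.pair hw) h_edges).or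
    (primrecPred_forall_lt (Primrec.succ.comp (Primrec.fst.comp hθ))
      (primrecPred_mem ((hv.comp .fst).pair .snd) (h_edges.comp .fst)).not)

theorem primrecPred_isPathLasso {v : α → List ℕ} (hθ : Primrec θ) (hv : Primrec v) :
    PrimrecPred fun a => IsPathLasso (θ a) (v a) := by
  have h_initial : Primrec fun a => (θ a).2.1 % ((θ a).1 + 1) :=
    Primrec.nat_mod.comp (Primrec.fst.comp (Primrec.snd.comp hθ))
      (Primrec.succ.comp (Primrec.fst.comp hθ))
  exact (Primrec.eq.comp (primrec_lasso.comp hv (.const 0)) h_initial).and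
    (primrecPred_forall_lt (Primrec.list_length.comp hv)
      (primrecPred_edge (hθ.comp .fst) (primrec_lasso.comp (hv.comp .fst) .snd)
        (primrec_lasso.comp (hv.comp .fst) (Primrec.succ.comp .snd))))

variable {e e₁ e₂ : α → Entry}

theorem primrec_rank (he : Primrec e) : Primrec fun a => (e a).rank := Primrec.fst.comp he

theorem primrec_ctx (he : Primrec e) : Primrec fun a => (e a).ctx :=
  Primrec.fst.comp (Primrec.snd.comp he)

theorem primrec_code (he : Primrec e) : Primrec fun a => (e a).code :=
  Primrec.fst.comp (Primrec.snd.comp (Primrec.snd.comp he))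

theorem primrec_table (he : Primrec e) : Primrec fun a => (e a).table :=
  Primrec.snd.comp (Primrec.snd.comp (Primrec.snd.comp he))

theorem primrecPred_tabulates {P : α → List (List ℕ) → Prop} (hθ : Primrec θ) (hR : Primrec R)
    (he : Primrec e) (hP : PrimrecRel P) :
    PrimrecPred fun a => Tabulates (θ a) (R a) (e a) (P a) :=
  primrecPred_forall_mem (primrec_lassoAssignments hθ hR (primrec_ctx he))
    (primrecPred_iff (primrecPred_mem .snd (primrec_table (he.comp .fst))) hP)

theorem primrecPred_atomStep (hθ : Primrec θ) (hR : Primrec R) (he : Primrec e) :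
    PrimrecPred fun a => AtomStep (θ a) (R a) (e a) := by
  refine primrecPred_exists_mem (primrec_ctx he) (primrecPred_exists_lt
    (Primrec.succ.comp (primrec_code (he.comp .fst))) ?_)
  have hx : Primrec fun z : (α × ℕ) × ℕ => z.1.2 := Primrec.snd.comp .fst
  replace hθ : Primrec fun z : (α × ℕ) × ℕ => θ z.1.1 := hθ.comp (Primrec.fst.comp .fst)
  replace hR : Primrec fun z : (α × ℕ) × ℕ => R z.1.1 := hR.comp (Primrec.fst.comp .fst)
  replace he : Primrec fun z : (α × ℕ) × ℕ => e z.1.1 := he.comp (Primrec.fst.comp .fst)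
  have h_code : Primrec fun z : (α × ℕ) × ℕ =>
      Nat.pair 2 (Nat.pair 0 (Nat.pair z.2 z.1.2)) :=
    Primrec₂.natPair.comp (.const 2) (Primrec₂.natPair.comp (.const 0)
      (Primrec₂.natPair.comp .snd hx))
  have h_index : Primrec fun z : (α × ℕ) × ℕ => (e z.1.1).ctx.idxOf z.1.2 :=
    Primrec.list_idxOf.comp hx (primrec_ctx he)
  have h_vertex : Primrec₂ fun (z : (α × ℕ) × ℕ) (u : List (List ℕ)) =>
      lasso (u.getD ((e z.1.1).ctx.idxOf z.1.2) []) 0 % ((θ z.1.1).1 + 1) :=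
    Primrec.nat_mod.comp
      (primrec_lasso.comp ((Primrec.list_getD []).comp .snd (h_index.comp .fst)) (.const 0))
      (Primrec.succ.comp (Primrec.fst.comp (hθ.comp .fst)))
  exact (Primrec.eq.comp (primrec_rank he) (.const 1)).and
    ((Primrec.eq.comp (primrec_code he) h_code).and
      (primrecPred_tabulates hθ hR he (primrecPred_mem
        (Primrec.pair h_vertex (Primrec.snd.comp .fst))
        (Primrec.snd.comp (Primrec.snd.comp (Primrec.snd.comp (hθ.comp .fst)))))))

theorem primrecPred_unaryStep {P : List (List (List ℕ)) → List (List ℕ) → Prop}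
    (hθ : Primrec θ) (hR : Primrec R) (he : Primrec e) (he₁ : Primrec e₁) (tag : ℕ)
    (hP : PrimrecRel P) : PrimrecPred fun a => UnaryStep (θ a) (R a) tag P (e a) (e₁ a) := by
  have h_unpair := Primrec.unpair.comp (primrec_code he₁)
  exact (Primrec.eq.comp (primrec_rank he) (Primrec.succ.comp (primrec_rank he₁))).and
    ((Primrec.eq.comp (primrec_ctx he) (primrec_ctx he₁)).and
    ((Primrec.eq.comp (Primrec.fst.comp h_unpair) (.const 2)).and
    ((Primrec.eq.comp (primrec_code he) (Primrec₂.natPair.comp (.const 2)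
      (Primrec₂.natPair.comp (.const tag) (Primrec.snd.comp h_unpair)))).and
    (primrecPred_tabulates hθ hR he (hP.comp (primrec_table (he₁.comp .fst)) .snd)))))

theorem primrecPred_binaryStep
    {P : α → List ℕ → List (List (List ℕ)) → List (List (List ℕ)) → List (List ℕ) → Prop}
    (hθ : Primrec θ) (hR : Primrec R) (he : Primrec e) (he₁ : Primrec e₁) (he₂ : Primrec e₂)
    (tag : ℕ) (hP : PrimrecRel fun a => P a (e a).ctx (e₁ a).table (e₂ a).table) :
    PrimrecPred fun a => BinaryStep (θ a) (R a) tag (P a) (e a) (e₁ a) (e₂ a) := by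
  have h_unpair₁ := Primrec.unpair.comp (primrec_code he₁)
  have h_unpair₂ := Primrec.unpair.comp (primrec_code he₂)
  exact (Primrec.eq.comp (primrec_rank he) (Primrec.succ.comp
      (Primrec.nat_add.comp (primrec_rank he₁) (primrec_rank he₂)))).and
    ((Primrec.eq.comp (primrec_ctx he) (primrec_ctx he₁)).and
    ((Primrec.eq.comp (primrec_ctx he) (primrec_ctx he₂)).and
    ((Primrec.eq.comp (Primrec.fst.comp h_unpair₁) (.const 2)).and
    ((Primrec.eq.comp (Primrec.fst.comp h_unpair₂) (.const 2)).and
    ((Primrec.eq.comp (primrec_code he) (Primrec₂.natPair.comp (.const 2)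
      (Primrec₂.natPair.comp (.const tag) (Primrec₂.natPair.comp
        (Primrec.snd.comp h_unpair₁) (Primrec.snd.comp h_unpair₂))))).and
    (primrecPred_tabulates hθ hR he hP))))))

theorem primrecPred_quantifierStep
    {P : α → List ℕ → List (List (List ℕ)) → List (List ℕ) → Prop}
    (hθ : Primrec θ) (hR : Primrec R) (he : Primrec e) (he₁ : Primrec e₁) (tag : ℕ)
    (hP : PrimrecRel fun a => P a (e a).ctx (e₁ a).table) :
    PrimrecPred fun a => QuantifierStep (θ a) (R a) tag (P a) (e a) (e₁ a) := by
  have h_table : PrimrecPred fun a => Tabulates (θ a) (R a) (e a) (P a (e a).ctx (e₁ a).table) :=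
    primrecPred_tabulates hθ hR he hP
  refine primrecPred_exists_mem (primrec_ctx he₁) ?_
  exact ((Primrec.eq.comp (primrec_rank he) (Primrec.succ.comp (primrec_rank he₁))).comp .fst).and
    ((Primrec.eq.comp (primrec_ctx (he₁.comp .fst))
      (Primrec.list_cons.comp .snd (primrec_ctx (he.comp .fst)))).and
    ((Primrec.eq.comp (primrec_code (he.comp .fst)) (Primrec₂.natPair.comp (.const tag)
      (Primrec₂.natPair.comp .snd (primrec_code (he₁.comp .fst))))).and
    (h_table.comp .fst)))

theorem primrecRel_negTable : PrimrecRel negTable := (primrecPred_mem .snd .fst).not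

theorem primrec_map_shiftLasso :
    Primrec₂ fun (j : ℕ) (u : List (List ℕ)) => u.map (shiftLasso j) :=
  Primrec.list_map .snd (primrec_shiftLasso.comp (Primrec.fst.comp .fst) .snd)

theorem primrecRel_nextTable : PrimrecRel nextTable :=
  primrecPred_mem (primrec_map_shiftLasso.comp (.const 1) .snd) .fst

variable {T T₁ T₂ : α → List (List (List ℕ))}

theorem primrecRel_disjTable (hT₁ : Primrec T₁) (hT₂ : Primrec T₂) :
    PrimrecRel fun a => disjTable (ctx a) (T₁ a) (T₂ a) :=
  (primrecPred_mem .snd (hT₁.comp .fst)).or (primrecPred_mem .snd (hT₂.comp .fst))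

theorem primrecRel_untilTable (hθ : Primrec θ) (hR : Primrec R) (hctx : Primrec ctx)
    (hT₁ : Primrec T₁) (hT₂ : Primrec T₂) :
    PrimrecRel fun a => untilTable (θ a) (R a) (ctx a) (T₁ a) (T₂ a) := by
  have h_bound : Primrec fun a => 2 * lassoFactor (θ a) (R a) ^ (ctx a).length :=
    Primrec.nat_double.comp (primrec_pow.comp (primrec_lassoFactor.comp hθ hR)
      (Primrec.list_length.comp hctx))
  have h_shift : Primrec₂ fun (z : α × List (List ℕ)) (j : ℕ) => z.2.map (shiftLasso j) :=
    primrec_map_shiftLasso.comp .snd (Primrec.snd.comp .fst)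
  exact primrecPred_exists_lt (h_bound.comp .fst)
    ((primrecPred_mem h_shift (hT₂.comp (Primrec.fst.comp .fst))).and
      (primrecPred_forall_lt .snd (primrecPred_mem (h_shift.comp (Primrec.fst.comp .fst) .snd)
        (hT₁.comp (Primrec.fst.comp (Primrec.fst.comp .fst))))))

theorem primrecRel_existsTable (hθ : Primrec θ) (hR : Primrec R) (hctx : Primrec ctx)
    (hT : Primrec T) : PrimrecRel fun a => existsTable (θ a) (R a) (ctx a) (T a) :=
  primrecPred_exists_mem ((primrec_quantifierLassos hθ hR hctx).comp .fst)
    ((primrecPred_isPathLasso (hθ.comp (Primrec.fst.comp .fst)) .snd).and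
      (primrecPred_mem (Primrec.list_cons.comp .snd (Primrec.snd.comp .fst))
        (hT.comp (Primrec.fst.comp .fst))))

theorem primrecRel_forallTable (hθ : Primrec θ) (hR : Primrec R) (hctx : Primrec ctx)
    (hT : Primrec T) : PrimrecRel fun a => forallTable (θ a) (R a) (ctx a) (T a) :=
  primrecPred_forall_mem ((primrec_quantifierLassos hθ hR hctx).comp .fst)
    ((primrecPred_isPathLasso (hθ.comp (Primrec.fst.comp .fst)) .snd).not.or
      (primrecPred_mem (Primrec.list_cons.comp .snd (Primrec.snd.comp .fst))
        (hT.comp (Primrec.fst.comp .fst))))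

theorem primrecPred_unaryRules (hθ : Primrec θ) (hR : Primrec R) (he : Primrec e)
    (he₁ : Primrec e₁) : PrimrecPred fun a =>
      UnaryStep (θ a) (R a) 1 negTable (e a) (e₁ a) ∨
        UnaryStep (θ a) (R a) 3 nextTable (e a) (e₁ a) :=
  (primrecPred_unaryStep hθ hR he he₁ 1 primrecRel_negTable).or
    (primrecPred_unaryStep hθ hR he he₁ 3 primrecRel_nextTable)

theorem primrecPred_binaryRules (hθ : Primrec θ) (hR : Primrec R) (he : Primrec e)
    (he₁ : Primrec e₁) (he₂ : Primrec e₂) : PrimrecPred fun a =>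
      BinaryStep (θ a) (R a) 2 disjTable (e a) (e₁ a) (e₂ a) ∨
        BinaryStep (θ a) (R a) 4 (untilTable (θ a) (R a)) (e a) (e₁ a) (e₂ a) :=
  (primrecPred_binaryStep (P := fun _ => disjTable) hθ hR he he₁ he₂ 2
    (primrecRel_disjTable (primrec_table he₁) (primrec_table he₂))).or
    (primrecPred_binaryStep (P := fun a => untilTable (θ a) (R a)) hθ hR he he₁ he₂ 4
      (primrecRel_untilTable hθ hR (primrec_ctx he) (primrec_table he₁) (primrec_table he₂)))

theorem primrecPred_quantifierRules (hθ : Primrec θ) (hR : Primrec R) (he : Primrec e)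
    (he₁ : Primrec e₁) : PrimrecPred fun a =>
      QuantifierStep (θ a) (R a) 0 (existsTable (θ a) (R a)) (e a) (e₁ a) ∨
        QuantifierStep (θ a) (R a) 1 (forallTable (θ a) (R a)) (e a) (e₁ a) :=
  (primrecPred_quantifierStep (P := fun a => existsTable (θ a) (R a)) hθ hR he he₁ 0
    (primrecRel_existsTable hθ hR (primrec_ctx he) (primrec_table he₁))).or
    (primrecPred_quantifierStep (P := fun a => forallTable (θ a) (R a)) hθ hR he he₁ 1
      (primrecRel_forallTable hθ hR (primrec_ctx he) (primrec_table he₁)))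

theorem primrecPred_justified {D : α → List Entry} (hθ : Primrec θ) (hR : Primrec R)
    (hD : Primrec D) (he : Primrec e) :
    PrimrecPred fun a => Justified (θ a) (R a) (D a) (e a) := by
  have h_unary := primrecPred_unaryRules (hθ.comp .fst) (hR.comp .fst) (he.comp .fst)
    (Primrec.snd (α := α) (β := Entry))
  have h_outer : Primrec fun z : (α × Entry) × Entry => z.1.1 := Primrec.fst.comp .fst
  have h_binary := primrecPred_binaryRules (hθ.comp h_outer) (hR.comp h_outer) (he.comp h_outer)
    (Primrec.snd.comp .fst) .snd
  have h_quantifier := primrecPred_quantifierRules (hθ.comp .fst) (hR.comp .fst) (he.comp .fst)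
    (Primrec.snd (α := α) (β := Entry))
  exact (Primrec.nat_le.comp (primrec_rank he) hR).and ((primrecPred_atomStep hθ hR he).or
    ((primrecPred_exists_mem hD h_unary.primrecRel).or
      ((primrecPred_exists_mem hD
        (primrecPred_exists_mem (hD.comp .fst) h_binary.primrecRel).primrecRel).or
        (primrecPred_exists_mem hD h_quantifier.primrecRel))))

end Steps

theorem primrecPred_certifies :
    PrimrecPred fun z : ℕ × SystemCode × ℕ × List Entry => Certifies z.1 z.2 := by
  have hθ : Primrec fun z : ℕ × SystemCode × ℕ × List Entry => z.2.1 := Primrec.fst.comp .snd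
  have hR : Primrec fun z : ℕ × SystemCode × ℕ × List Entry => z.2.2.1 :=
    Primrec.fst.comp (Primrec.snd.comp .snd)
  have hD : Primrec fun z : ℕ × SystemCode × ℕ × List Entry => z.2.2.2 :=
    Primrec.snd.comp (Primrec.snd.comp .snd)
  have h_justified : PrimrecRel fun (z : ℕ × SystemCode × ℕ × List Entry) (e : Entry) =>
      Justified z.2.1 z.2.2.1 z.2.2.2 e :=
    primrecPred_justified (hθ.comp .fst) (hR.comp .fst) (hD.comp .fst) .snd
  exact (primrecPred_forall_mem hD h_justified).and
    (primrecPred_exists_mem hD ((Primrec.eq.comp (primrec_ctx .snd) (.const [])).and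
      ((Primrec.eq.comp (primrec_code .snd) (Primrec.fst.comp .fst)).and
        (primrecPred_mem (.const []) (primrec_table .snd)))))

theorem isRE_finStateSatCodes : IsRE FinStateSatCodes := by
  have h_eq : FinStateSatCodes = {n | ∃ z, Certifies n z} :=
    Set.ext fun _ => mem_finStateSatCodes_iff
  exact h_eq ▸ isRE_of_primrecPred primrecPred_certifies

/-! ### Derived operators and injectivity of the encoding -/

section Operators

variable {AP : Type}

/-- The conjunction of two quantifier-free formulas. -/
def conj (ψ χ : QF AP) : QF AP := .neg (.disj (.neg ψ) (.neg χ))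

/-- The temporal operator `F` (eventually). The left argument `ψ ∨ ¬ψ` of the until stands for
truth, for which there is no constant. -/
def eventually (ψ : QF AP) : QF AP := .untl (.disj ψ (.neg ψ)) ψ

/-- The `k`-fold next operator. -/
def nextN (k : ℕ) (ψ : QF AP) : QF AP := QF.next^[k] ψ

theorem sat_conj {ψ χ : QF AP} {As : ℕ → Trace AP} :
    (conj ψ χ).sat As ↔ ψ.sat As ∧ χ.sat As := by
  simp only [conj, QF.sat, not_or, not_not]

theorem sat_eventually {ψ : QF AP} {As : ℕ → Trace AP} :
    (eventually ψ).sat As ↔ ∃ j, ψ.sat (shiftAsg As j) :=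
  exists_congr fun _ => and_iff_left fun _ _ => em _

theorem shiftAsg_shiftAsg (As : ℕ → Trace AP) (j k : ℕ) :
    shiftAsg (shiftAsg As j) k = shiftAsg As (k + j) := by
  funext x i
  simp only [shiftAsg, Trace.shift, add_assoc]

theorem sat_nextN {k : ℕ} {ψ : QF AP} {As : ℕ → Trace AP} :
    (nextN k ψ).sat As ↔ ψ.sat (shiftAsg As k) := by
  induction k generalizing As with
  | zero => rfl
  | succ k ih =>
    rw [nextN, Function.iterate_succ_apply', QF.sat, ← nextN, ih, shiftAsg_shiftAsg]

theorem freeVars_conj (ψ χ : QF AP) : (conj ψ χ).freeVars = ψ.freeVars ∪ χ.freeVars := rfl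

theorem freeVars_eventually (ψ : QF AP) : (eventually ψ).freeVars = ψ.freeVars := by
  simp only [eventually, QF.freeVars, Set.union_self]

theorem freeVars_nextN (k : ℕ) (ψ : QF AP) : (nextN k ψ).freeVars = ψ.freeVars := by
  induction k with
  | zero => rfl
  | succ k ih => rwa [nextN, Function.iterate_succ_apply', QF.freeVars]

variable [Inhabited AP]

/-- A valid formula. -/
def top : QF AP := .disj (.atom default 0) (.neg (.atom default 0))

/-- The conjunction of a list of formulas. -/
def conjList (l : List (QF AP)) : QF AP := l.foldr conj top

/-- The disjunction of a list of formulas. -/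
def disjList (l : List (QF AP)) : QF AP := l.foldr .disj (.neg top)

theorem sat_top (As : ℕ → Trace AP) : (top : QF AP).sat As := em _

theorem sat_conjList {l : List (QF AP)} {As : ℕ → Trace AP} :
    (conjList l).sat As ↔ ∀ ψ ∈ l, ψ.sat As := by
  induction l with
  | nil => simpa [conjList] using sat_top As
  | cons ψ l ih => rw [conjList, List.foldr_cons, sat_conj, ← conjList, ih, List.forall_mem_cons]

theorem sat_disjList {l : List (QF AP)} {As : ℕ → Trace AP} :
    (disjList l).sat As ↔ ∃ ψ ∈ l, ψ.sat As := by
  induction l with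
  | nil => simpa [disjList, QF.sat] using sat_top As
  | cons ψ l ih => rw [disjList, List.foldr_cons, QF.sat, ← disjList, ih, List.exists_mem_cons_iff]

theorem freeVars_top : (top : QF AP).freeVars = {0} := by
  simp only [top, QF.freeVars, Set.union_self]

theorem freeVars_conjList_subset {l : List (QF AP)} {s : Set ℕ} (h0 : 0 ∈ s)
    (hl : ∀ ψ ∈ l, ψ.freeVars ⊆ s) : (conjList l).freeVars ⊆ s := by
  induction l with
  | nil => simpa [conjList, freeVars_top] using h0
  | cons ψ l ih =>
    rw [List.forall_mem_cons] at hl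
    exact Set.union_subset hl.1 (ih hl.2)

theorem freeVars_disjList_subset {l : List (QF AP)} {s : Set ℕ} (h0 : 0 ∈ s)
    (hl : ∀ ψ ∈ l, ψ.freeVars ⊆ s) : (disjList l).freeVars ⊆ s := by
  induction l with
  | nil => simpa [disjList, QF.freeVars, freeVars_top] using h0
  | cons ψ l ih =>
    rw [List.forall_mem_cons] at hl
    exact Set.union_subset hl.1 (ih hl.2)

end Operators

section Codes

variable {AP : Type} {e : AP → ℕ}

theorem _root_.QF.codeWith_injective (he : Function.Injective e) :
    Function.Injective (QF.codeWith e) := by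
  intro ψ
  induction ψ with
  | atom a x =>
    rintro (_ | _ | _ | _ | _) h <;> simp_all [QF.codeWith, he.eq_iff]
  | neg ψ ih | next ψ ih =>
    rintro (_ | _ | _ | _ | _) h <;> simp only [QF.codeWith, Nat.pair_eq_pair] at h <;>
      first | omega | rw [ih h.2]
  | disj ψ χ ihψ ihχ | untl ψ χ ihψ ihχ =>
    rintro (_ | _ | _ | _ | _) h <;> simp only [QF.codeWith, Nat.pair_eq_pair] at h <;>
      first | omega | rw [ihψ h.2.1, ihχ h.2.2]

theorem _root_.HFormula.codeWith_injective (he : Function.Injective e) :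
    Function.Injective (HFormula.codeWith e) := by
  intro φ
  induction φ with
  | ex x φ ih | all x φ ih =>
    rintro (_ | _ | _) h <;> simp only [HFormula.codeWith, Nat.pair_eq_pair] at h <;>
      first | omega | rw [h.2.1, ih h.2.2]
  | qf ψ =>
    rintro (_ | _ | _) h <;> simp only [HFormula.codeWith, Nat.pair_eq_pair] at h <;>
      first | omega | rw [QF.codeWith_injective he h.2]

theorem codeWith_nextN (k : ℕ) (ψ : QF AP) :
    (nextN k ψ).codeWith e = (Nat.pair 3)^[k] (ψ.codeWith e) :=
  Function.Semiconj.iterate_right (f := QF.codeWith e) (fun _ => rfl) k ψ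

end Codes

/-! ### Horn systems over tuples of numbers -/

/-- A fact of a Horn system: a tuple of five numbers. The constraints treat all fields alike; the
rules for partial recursive functions read them as tag, input, output, value and rank. -/
abbrev Fact : Type := Fin 5 → ℕ

/-- A field of one of the seven facts of a rule instance. Fact `0` is the head of the rule and the
other six are its premises. -/
abbrev Slot : Type := Fin 7 × Fin 5

/-- An arithmetic constraint between the fields of the facts of a rule instance: `s = k`,
`t = s + k` or `s < t`. -/
inductive Constraint : Type where
  | const (s : Slot) (k : ℕ)
  | offset (s t : Slot) (k : ℕ)
  | lt (s t : Slot)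

/-- The truth of a constraint for the facts `ν`. -/
def Constraint.Holds (ν : Fin 7 → Fact) : Constraint → Prop
  | .const s k => ν s.1 s.2 = k
  | .offset s t k => ν t.1 t.2 = ν s.1 s.2 + k
  | .lt s t => ν s.1 s.2 < ν t.1 t.2

/-- A Horn rule, given by the constraints that its instances satisfy. -/
abbrev Rule : Type := List Constraint

/-- The facts `ν` form an instance of the rule `r`. -/
def Rule.Holds (r : Rule) (ν : Fin 7 → Fact) : Prop := r.Forall (Constraint.Holds ν)

/-- A set of facts is supported if each of its members is the head of a rule instance all of whose
facts lie in the set. -/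
def Supported (R : List Rule) (F : Set Fact) : Prop :=
  ∀ v ∈ F, ∃ ν : Fin 7 → Fact, ν 0 = v ∧ (∀ x, ν x ∈ F) ∧ ∃ r ∈ R, r.Holds ν

/-! ### Supported sets as models of HyperLTL sentences -/

/-- A trace encodes a fact `v` if proposition `i < 5` holds exactly at position `v i + 1`. The shift
by one keeps position `0`, which all traces of a transition system share, free of information. -/
def Encodes (t : Trace ℕ) (v : Fact) : Prop := ∀ (i : Fin 5) (p : ℕ), (i : ℕ) ∈ t p ↔ p = v i + 1

/-- The facts encoded by the traces of a set. -/
def encodedFacts (T : Set (Trace ℕ)) : Set Fact := {v | ∃ t ∈ T, Encodes t v}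

theorem Encodes.unique {t : Trace ℕ} {v w : Fact} (hv : Encodes t v) (hw : Encodes t w) : v = w :=
  funext fun i => Nat.succ_injective ((hw i _).1 ((hv i _).2 rfl))

/-- The atom of a slot. Trace variable `x + 1` carries fact `x` of a rule instance; variable `0` is
reserved for the fact whose presence the sentence demands. -/
def Slot.atom (s : Slot) : QF ℕ := .atom s.2 (s.1 + 1)

/-- The formula expressing a constraint. -/
def Constraint.formula : Constraint → QF ℕ
  | .const s k => nextN (k + 1) s.atom
  | .offset s t k => eventually (conj s.atom (nextN k t.atom))
  | .lt s t => eventually (conj s.atom (nextN 1 (eventually t.atom)))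

/-- Proposition `i` holds exactly once on the trace of the head, and not at position `0`. -/
def wellFormed (i : Fin 5) : QF ℕ :=
  conj (.neg (Slot.atom (0, i))) (conj (eventually (Slot.atom (0, i)))
    (.neg (eventually (conj (Slot.atom (0, i)) (nextN 1 (eventually (Slot.atom (0, i))))))))

/-- The head is well-formed and is derived by an instance of one of the rules. -/
def supportFormula (R : List Rule) : QF ℕ :=
  conj (conjList ((List.finRange 5).map wellFormed))
    (disjList (R.map fun r => conjList (r.map Constraint.formula)))

/-- The fact of trace variable `0` starts with the numbers `k` and `n`. -/
def goalFormula (k n : ℕ) : QF ℕ := conj (nextN (k + 1) (.atom 0 0)) (nextN (n + 1) (.atom 1 0))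

/-- The sentence stating that the encoded facts are supported and that one of them starts with
`k` and `n`. -/
def hornSentence (k n : ℕ) (R : List Rule) : HFormula ℕ :=
  .ex 0 (.all 1 (.ex 2 (.ex 3 (.ex 4 (.ex 5 (.ex 6 (.ex 7 (.qf
    (conj (goalFormula k n) (supportFormula R))))))))))

section Semantics

variable {As : ℕ → Trace ℕ} {ν : Fin 7 → Fact}

theorem Slot.sat_atom_shiftAsg_iff {s : Slot} (h : ∀ x : Fin 7, Encodes (As (x + 1)) (ν x))
    {p : ℕ} : s.atom.sat (shiftAsg As p) ↔ p = ν s.1 s.2 + 1 := by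
  rw [← h s.1 s.2 p, Slot.atom, QF.sat, shiftAsg, Trace.shift, Nat.zero_add]

theorem Constraint.sat_formula_iff (h : ∀ x : Fin 7, Encodes (As (x + 1)) (ν x)) (c : Constraint) :
    c.formula.sat As ↔ c.Holds ν := by
  cases c <;> simp only [formula, Holds, sat_nextN, sat_eventually, sat_conj, shiftAsg_shiftAsg,
    Slot.sat_atom_shiftAsg_iff h]
  case const => omega
  case offset s t k =>
    exact ⟨fun ⟨_, _, _⟩ => by omega, fun _ => ⟨ν s.1 s.2 + 1, by omega, by omega⟩⟩
  case lt s t =>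
    exact ⟨fun ⟨_, _, _, _⟩ => by omega,
      fun _ => ⟨ν s.1 s.2 + 1, rfl, ν t.1 t.2 - ν s.1 s.2 - 1, by omega⟩⟩

theorem sat_wellFormed_iff {i : Fin 5} :
    (wellFormed i).sat As ↔ ∃ n, ∀ p, (i : ℕ) ∈ As 1 p ↔ p = n + 1 := by
  have h_atom {p : ℕ} : (Slot.atom (0, i)).sat (shiftAsg As p) ↔ (i : ℕ) ∈ As 1 p := by
    simp [Slot.atom, QF.sat, shiftAsg, Trace.shift]
  have h_atom_zero : (Slot.atom (0, i)).sat As ↔ (i : ℕ) ∈ As 1 0 := h_atom (p := 0)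
  simp only [wellFormed, sat_conj, QF.sat, sat_eventually, sat_nextN, shiftAsg_shiftAsg, h_atom,
    h_atom_zero]
  constructor
  · rintro ⟨h_zero, ⟨p, hp⟩, h_once⟩
    have h_not_lt {a b : ℕ} (ha : (i : ℕ) ∈ As 1 a) (hb : (i : ℕ) ∈ As 1 b) : ¬ a < b :=
      fun hab => h_once ⟨a, ha, b - a - 1, by rwa [show b - a - 1 + (1 + a) = b by omega]⟩
    obtain ⟨n, rfl⟩ := Nat.exists_eq_succ_of_ne_zero fun h => h_zero (h ▸ hp)
    exact ⟨n, fun q => ⟨fun hq => by grind [h_not_lt hp hq, h_not_lt hq hp], fun hq => hq ▸ hp⟩⟩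
  · rintro ⟨n, hn⟩
    simp only [hn]
    exact ⟨by omega, ⟨n + 1, rfl⟩, fun ⟨_, _, _, _⟩ => by omega⟩

theorem sat_supportFormula_iff {R : List Rule} :
    (supportFormula R).sat As ↔
      (∃ v, Encodes (As 1) v) ∧ ∃ r ∈ R, ∀ c ∈ r, c.formula.sat As := by
  simp only [supportFormula, sat_conj, sat_conjList, sat_disjList, List.mem_map,
    List.mem_finRange, true_and, exists_exists_and_eq_and, forall_exists_index,
    forall_apply_eq_imp_iff, forall_apply_eq_imp_iff₂, and_imp, sat_wellFormed_iff, Encodes,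
    Classical.skolem]

theorem sat_goalFormula_iff {k n : ℕ} {v : Fact} (h : Encodes (As 0) v) :
    (goalFormula k n).sat As ↔ v 0 = k ∧ v 1 = n := by
  have h0 : 0 ∈ As 0 (k + 1) ↔ k + 1 = v 0 + 1 := h 0 _
  have h1 : 1 ∈ As 0 (n + 1) ↔ n + 1 = v 1 + 1 := h 1 _
  simp only [goalFormula, sat_conj, sat_nextN, QF.sat, shiftAsg, Trace.shift, Nat.zero_add, h0, h1]
  omega

end Semantics

/-- The assignment in the scope of the quantifiers of `hornSentence`. -/
def hornAssignment (t₀ : Trace ℕ) (t : Fin 7 → Trace ℕ) : ℕ → Trace ℕ :=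
  Function.update (Function.update (Function.update (Function.update (Function.update
    (Function.update (Function.update (Function.update (fun _ _ => ∅) 0 t₀) 1 (t 0)) 2 (t 1))
    3 (t 2)) 4 (t 3)) 5 (t 4)) 6 (t 5)) 7 (t 6)

theorem hornAssignment_zero (t₀ : Trace ℕ) (t : Fin 7 → Trace ℕ) : hornAssignment t₀ t 0 = t₀ := by
  simp [hornAssignment, Function.update]

theorem hornAssignment_succ (t₀ : Trace ℕ) (t : Fin 7 → Trace ℕ) (x : Fin 7) :
    hornAssignment t₀ t (x + 1) = t x := by
  fin_cases x <;> simp [hornAssignment, Function.update]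

theorem sat_hornSentence_iff {k n : ℕ} {R : List Rule} {T : Set (Trace ℕ)} :
    HModels T (hornSentence k n R) ↔ ∃ t₀ ∈ T, ∀ t₁ ∈ T, ∃ t : Fin 7 → Trace ℕ, t 0 = t₁ ∧
      (∀ x, t x ∈ T) ∧ (goalFormula k n).sat (hornAssignment t₀ t) ∧
        (supportFormula R).sat (hornAssignment t₀ t) := by
  refine exists_congr fun t₀ => and_congr_right fun _ => forall₂_congr fun t₁ ht₁ => ?_
  constructor
  · rintro ⟨t₂, h₂, t₃, h₃, t₄, h₄, t₅, h₅, t₆, h₆, t₇, h₇, h⟩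
    refine ⟨![t₁, t₂, t₃, t₄, t₅, t₆, t₇], rfl, fun x => ?_, sat_conj.1 h⟩
    fin_cases x <;> assumption
  · rintro ⟨t, rfl, h, h_sat⟩
    exact ⟨t 1, h 1, t 2, h 2, t 3, h 3, t 4, h 4, t 5, h 5, t 6, h 6, sat_conj.2 h_sat⟩

theorem sat_supportFormula_hornAssignment_iff {R : List Rule} {t₀ : Trace ℕ} {t : Fin 7 → Trace ℕ}
    {ν : Fin 7 → Fact} (h : ∀ x, Encodes (t x) (ν x)) :
    (supportFormula R).sat (hornAssignment t₀ t) ↔ ∃ r ∈ R, r.Holds ν := by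
  have h_enc (x : Fin 7) : Encodes (hornAssignment t₀ t (x + 1)) (ν x) :=
    (hornAssignment_succ t₀ t x).symm ▸ h x
  simp only [sat_supportFormula_iff, Constraint.sat_formula_iff h_enc, Rule.Holds,
    List.forall_iff_forall_mem]
  exact and_iff_right ⟨ν 0, h_enc 0⟩

theorem hModels_hornSentence_iff {k n : ℕ} {R : List Rule} {T : Set (Trace ℕ)} :
    HModels T (hornSentence k n R) ↔ (∀ t ∈ T, ∃ v, Encodes t v) ∧
      Supported R (encodedFacts T) ∧ ∃ v ∈ encodedFacts T, v 0 = k ∧ v 1 = n := by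
  rw [sat_hornSentence_iff]
  constructor
  · rintro ⟨t₀, ht₀, h⟩
    have h_enc : ∀ t ∈ T, ∃ v, Encodes t v := by
      intro t₁ ht₁
      obtain ⟨t, rfl, -, -, h_supp⟩ := h t₁ ht₁
      exact hornAssignment_succ t₀ t 0 ▸ (sat_supportFormula_iff.1 h_supp).1
    refine ⟨h_enc, ?_, ?_⟩
    · rintro v ⟨t₁, ht₁, hv⟩
      obtain ⟨t, rfl, ht, -, h_supp⟩ := h t₁ ht₁
      choose ν hν using fun x => h_enc (t x) (ht x)
      exact ⟨ν, (hν 0).unique hv, fun x => ⟨t x, ht x, hν x⟩,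
        (sat_supportFormula_hornAssignment_iff hν).1 h_supp⟩
    · obtain ⟨v, hv⟩ := h_enc t₀ ht₀
      obtain ⟨t, -, -, h_goal, -⟩ := h t₀ ht₀
      exact ⟨v, ⟨t₀, ht₀, hv⟩,
        (sat_goalFormula_iff ((hornAssignment_zero t₀ t).symm ▸ hv)).1 h_goal⟩
  · rintro ⟨h_enc, h_supp, v₀, ⟨t₀, ht₀, hv₀⟩, h_goal⟩
    refine ⟨t₀, ht₀, fun t₁ ht₁ => ?_⟩
    obtain ⟨v, hv⟩ := h_enc t₁ ht₁
    obtain ⟨ν, rfl, hνT, h_rule⟩ := h_supp v ⟨t₁, ht₁, hv⟩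
    choose t ht h_t using hνT
    have h_update (P : Fin 7 → Trace ℕ → Prop) (h0 : P 0 t₁) (hP : ∀ x, P x (t x)) (x : Fin 7) :
        P x (Function.update t 0 t₁ x) := by
      obtain rfl | hx := eq_or_ne x 0 <;> simp [*]
    exact ⟨Function.update t 0 t₁, Function.update_self .., h_update (fun _ u => u ∈ T) ht₁ ht,
      (sat_goalFormula_iff ((hornAssignment_zero t₀ _).symm ▸ hv₀)).2 h_goal,
      (sat_supportFormula_hornAssignment_iff
        (h_update (fun x u => Encodes u (ν x)) hv h_t)).2 h_rule⟩

/-! ### Finite supported sets as transition systems -/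

/-- The trace encoding a fact that uses no propositions other than the five fields. -/
def encoding (v : Fact) : Trace ℕ := fun p => {a | ∃ i : Fin 5, (i : ℕ) = a ∧ p = v i + 1}

theorem encodes_encoding (v : Fact) : Encodes (encoding v) v := fun i _ =>
  ⟨fun ⟨_, hj, hp⟩ => Fin.ext hj ▸ hp, fun hp => ⟨i, rfl, hp⟩⟩

theorem encodedFacts_image_encoding (F : Set Fact) : encodedFacts (encoding '' F) = F := by
  ext v
  constructor
  · rintro ⟨_, ⟨w, hw, rfl⟩, hv⟩
    exact (encodes_encoding w).unique hv ▸ hw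
  · exact fun hv => ⟨_, ⟨v, hv, rfl⟩, encodes_encoding v⟩

/-- A transition system that chooses a fact in its first step and then spells out its encoding.
Its vertices pair a fact with a position, which is counted up to `B + 1`. -/
def factSystem {F : Set Fact} (v₀ : F) (B : ℕ) : TS ℕ where
  V := F × Fin (B + 2)
  E a b := (b.2 : ℕ) = min ((a.2 : ℕ) + 1) (B + 1) ∧ (a.2 ≠ 0 → b.1 = a.1)
  vI := (v₀, 0)
  lab a := encoding a.1 a.2
  succ a := ⟨(a.1, ⟨min ((a.2 : ℕ) + 1) (B + 1), by omega⟩), rfl, fun _ => rfl⟩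

theorem encoding_min {v : Fact} {B : ℕ} (hB : ∀ i, v i < B) (p : ℕ) :
    encoding v (min p (B + 1)) = encoding v p := by
  ext a
  refine exists_congr fun i => and_congr_right fun _ => ?_
  have := hB i
  omega

theorem encoding_zero (v : Fact) : encoding v 0 = ∅ :=
  Set.eq_empty_of_forall_notMem fun _ ⟨_, _, hi⟩ => by omega

theorem traces_factSystem {F : Set Fact} (v₀ : F) {B : ℕ} (hB : ∀ v ∈ F, ∀ i, v i < B) :
    (factSystem v₀ B).traces = encoding '' F := by
  ext t
  constructor
  · rintro ⟨(ρ : ℕ → F × Fin (B + 2)), hρ, h_init, rfl⟩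
    have h_pos (p : ℕ) : ((ρ p).2 : ℕ) = min p (B + 1) := by
      induction p with
      | zero => rw [h_init]; rfl
      | succ p ih => rw [(hρ p).1, ih]; omega
    have h_fact (p : ℕ) : (ρ (p + 1)).1 = (ρ 1).1 := by
      induction p with
      | zero => rfl
      | succ p ih =>
        refine ((hρ (p + 1)).2 fun h => ?_).trans ih
        have h_val : ((ρ (p + 1)).2 : ℕ) = 0 := congrArg Fin.val h
        have := h_pos (p + 1)
        omega
    refine ⟨(ρ 1).1, (ρ 1).1.2, funext fun p => ?_⟩
    change _ = encoding (ρ p).1 (ρ p).2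
    rw [h_pos, encoding_min (hB _ (ρ p).1.2)]
    cases p with
    | zero => rw [encoding_zero, encoding_zero]
    | succ p => rw [h_fact p]
  · rintro ⟨v, hv, rfl⟩
    let ρ : ℕ → F × Fin (B + 2) := fun p =>
      if p = 0 then (v₀, 0) else (⟨v, hv⟩, ⟨min p (B + 1), by omega⟩)
    refine ⟨ρ, ?_, rfl, funext fun p => ?_⟩
    · rintro (_ | p)
      · exact ⟨rfl, fun h => absurd rfl h⟩
      · have h_step : min (p + 2) (B + 1) = min (min (p + 1) (B + 1) + 1) (B + 1) := by omega
        exact ⟨h_step, fun _ => rfl⟩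
    · cases p with
      | zero => exact (encoding_zero v).trans (encoding_zero v₀).symm
      | succ p => exact (encoding_min (hB v hv) _).symm

theorem exists_forall_lt_of_finite {F : Set Fact} (hF : F.Finite) : ∃ B, ∀ v ∈ F, ∀ i, v i < B := by
  obtain ⟨b, hb⟩ := hF.bddAbove
  exact ⟨Finset.univ.sup b + 1, fun v hv i =>
    Nat.lt_succ_of_le ((hb hv i).trans (Finset.le_sup (Finset.mem_univ i)))⟩

theorem Supported.exists_finite_hModels {R : List Rule} {F : Set Fact} (hF : F.Finite)
    (h : Supported R F) {v : Fact} (hv : v ∈ F) :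
    ∃ S : TS ℕ, Finite S.V ∧ HModels S.traces (hornSentence (v 0) (v 1) R) := by
  obtain ⟨B, hB⟩ := exists_forall_lt_of_finite hF
  have : Finite F := hF
  refine ⟨factSystem ⟨v, hv⟩ B, inferInstanceAs (Finite (F × Fin (B + 2))), ?_⟩
  rw [traces_factSystem _ hB, hModels_hornSentence_iff, encodedFacts_image_encoding]
  exact ⟨by rintro _ ⟨w, -, rfl⟩; exact ⟨w, encodes_encoding w⟩, h, v, hv, rfl, rfl⟩

open Nat.Partrec (Code)

/-! ### Induction principles for Horn systems -/

/-- A rule preserves a property of facts if its head has the property whenever all facts of smaller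
rank have it. The rank, in field `4`, makes circular support impossible. -/
def Rule.Preserves (P : Fact → Prop) (r : Rule) : Prop :=
  ∀ ν, r.Holds ν → (∀ x, ν x 4 < ν 0 4 → P (ν x)) → P (ν 0)

theorem Supported.of_preserves {P : Fact → Prop} {R : List Rule} {F : Set Fact}
    (h : Supported R F) (hR : ∀ r ∈ R, r.Preserves P) {v : Fact} (hv : v ∈ F) : P v := by
  induction hn : v 4 using Nat.strong_induction_on generalizing v with
  | _ n ih =>
    obtain ⟨ν, rfl, hνF, r, hr, h_holds⟩ := h v hv
    exact hR r hr ν h_holds fun x hx => ih _ (hn ▸ hx) (hνF x) rfl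

/-- A fact is derivable if it lies in a finite supported set. -/
def Derivable (R : List Rule) (v : Fact) : Prop := ∃ F : Set Fact, F.Finite ∧ Supported R F ∧ v ∈ F

/-- The facts of a rule instance with a given head and given first premises. The remaining facts are
filled up with the head. -/
def ruleInstance (v : Fact) (l : List Fact) : Fin 7 → Fact := fun x => (v :: l).getD x v

theorem ruleInstance_eq_or_mem (v : Fact) (l : List Fact) (x : Fin 7) :
    ruleInstance v l x = v ∨ ruleInstance v l x ∈ l := by
  rcases lt_or_ge (x : ℕ) (v :: l).length with hx | hx
  · rw [ruleInstance, List.getD_eq_getElem _ _ hx]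
    exact List.mem_cons.1 (List.getElem_mem hx)
  · exact .inl (List.getD_eq_default _ _ hx)

theorem Derivable.of_rule {R : List Rule} {r : Rule} (hr : r ∈ R) {v : Fact} (l : List Fact)
    (hl : l.Forall (Derivable R)) (h_holds : r.Holds (ruleInstance v l)) : Derivable R v := by
  choose! F h_fin h_supp h_mem using List.forall_iff_forall_mem.1 hl
  refine ⟨insert v (⋃ u ∈ l, F u), (l.finite_toSet.biUnion h_fin).insert v, ?_,
    Set.mem_insert _ _⟩
  rintro w (rfl | hw)
  · refine ⟨_, rfl, fun x => (ruleInstance_eq_or_mem w l x).imp id fun hx => ?_, r, hr, h_holds⟩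
    exact Set.mem_biUnion hx (h_mem _ hx)
  · obtain ⟨u, hu, hwu⟩ := Set.mem_iUnion₂.1 hw
    obtain ⟨ν, hν, hνF, h_rule⟩ := h_supp u hu w hwu
    exact ⟨ν, hν, fun x => .inr (Set.mem_biUnion hu (hνF x)), h_rule⟩

/-! ### Horn rules for the pairing function -/

namespace Slot

variable (x : Fin 7)

/-- The field telling pairing facts (`0`) and evaluation facts (the tag of a code) apart. -/
def tag : Slot := (x, 0)

/-- The argument of an evaluation fact, or the first component of a pairing fact. -/
def input : Slot := (x, 1)

/-- The result of an evaluation fact, or the second component of a pairing fact. -/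
def output : Slot := (x, 2)

/-- The value of a pairing fact; not used by evaluation facts. -/
def value : Slot := (x, 3)

/-- The field that decreases from the head of a rule to its premises. -/
def rank : Slot := (x, 4)

end Slot

/-- The tag of the evaluation facts of a code. -/
def evalTag (c : Code) : ℕ := Encodable.encode c + 1

theorem evalTag_injective : Function.Injective evalTag :=
  fun _ _ h => Encodable.encode_injective (Nat.succ_injective h)

/-- The fact `Nat.pair a b = Nat.pair a b` at rank `ρ`. -/
def pairFact (a b ρ : ℕ) : Fact := ![0, a, b, Nat.pair a b, ρ]

/-- The fact `b ∈ c.eval a` at rank `ρ`. -/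
def evalFact (c : Code) (a b ρ : ℕ) : Fact := ![evalTag c, a, b, 0, ρ]

/-- The statement made by a fact is true. -/
structure Correct (v : Fact) : Prop where
  pair : v 0 = 0 → Nat.pair (v 1) (v 2) = v 3
  eval : ∀ c, v 0 = evalTag c → v 2 ∈ Code.eval c (v 1)

theorem correct_of_pair {v : Fact} (h_tag : v 0 = 0) (h : Nat.pair (v 1) (v 2) = v 3) :
    Correct v :=
  ⟨fun _ => h, fun _ hc => absurd (h_tag.symm.trans hc) (Nat.succ_ne_zero _).symm⟩

theorem correct_of_eval {v : Fact} {c : Code} (h_tag : v 0 = evalTag c)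
    (h : v 2 ∈ c.eval (v 1)) : Correct v :=
  ⟨fun h0 => absurd (h_tag.symm.trans h0) (Nat.succ_ne_zero _),
    fun _ hc => evalTag_injective (h_tag.symm.trans hc) ▸ h⟩

/-- Fact `x` is a pairing fact of smaller rank than the head. -/
def isPair (x : Fin 7) : Rule := [.const (.tag x) 0, .lt (.rank x) (.rank 0)]

/-- Fact `x` is an evaluation fact of the code `c` of smaller rank than the head. -/
def isEval (c : Code) (x : Fin 7) : Rule :=
  [.const (.tag x) (evalTag c), .lt (.rank x) (.rank 0)]

/-- The constraint that two fields are equal. -/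
abbrev Constraint.same (s t : Slot) : Constraint := .offset s t 0

open Constraint (same)

/-- `Nat.pair 0 0 = 0`. -/
def pairZeroRule : Rule :=
  [.const (.tag 0) 0, .const (.input 0) 0, .const (.output 0) 0, .const (.value 0) 0]

/-- The rule increasing the value of a pairing fact by one if the components are related by `r`. -/
def pairSuccRule (r : Rule) : Rule :=
  .const (.tag 0) 0 :: .offset (.value 1) (.value 0) 1 :: isPair 1 ++ r

/-- `(a, b) ↦ (a + 1, b)` if `a + 1 < b`. -/
def pairLeftRule : Rule :=
  pairSuccRule [.offset (.input 1) (.input 0) 1, same (.output 1) (.output 0),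
    .lt (.input 0) (.output 0)]

/-- `(a, a + 1) ↦ (a + 1, 0)`. -/
def pairCornerRule : Rule :=
  pairSuccRule [.offset (.input 1) (.output 1) 1, same (.output 1) (.input 0),
    .const (.output 0) 0]

/-- `(a, b) ↦ (a, b + 1)` if `b < a`. -/
def pairRightRule : Rule :=
  pairSuccRule [.lt (.output 1) (.input 1), same (.input 1) (.input 0),
    .offset (.output 1) (.output 0) 1]

/-- `(a, a) ↦ (0, a + 1)`. -/
def pairDiagRule : Rule :=
  pairSuccRule [same (.input 1) (.output 1), .const (.input 0) 0,
    .offset (.input 1) (.output 0) 1]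

/-- The rules that enumerate the graph of the pairing function in the order of its values. -/
def pairRules : List Rule :=
  [pairZeroRule, pairLeftRule, pairCornerRule, pairRightRule, pairDiagRule]

theorem pair_succ_left {a b : ℕ} (h : a + 1 < b) : Nat.pair (a + 1) b = Nat.pair a b + 1 := by
  rw [Nat.pair, Nat.pair, if_pos h, if_pos (by omega), add_assoc]

theorem pair_succ_zero (a : ℕ) : Nat.pair (a + 1) 0 = Nat.pair a (a + 1) + 1 := by
  rw [Nat.pair, Nat.pair, if_neg (by omega), if_pos a.lt_succ_self]
  ring

theorem pair_succ_right {a b : ℕ} (h : b < a) : Nat.pair a (b + 1) = Nat.pair a b + 1 := by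
  rw [Nat.pair, Nat.pair, if_neg (by omega), if_neg (by omega)]
  ring

theorem pair_zero_succ (a : ℕ) : Nat.pair 0 (a + 1) = Nat.pair a a + 1 := by
  rw [Nat.pair, Nat.pair, if_pos a.succ_pos, if_neg (lt_irrefl a)]
  ring

theorem pair_induction {P : ℕ → ℕ → Prop} (zero : P 0 0)
    (left : ∀ a b, a + 1 < b → P a b → P (a + 1) b) (corner : ∀ a, P a (a + 1) → P (a + 1) 0)
    (right : ∀ a b, b < a → P a b → P a (b + 1)) (diag : ∀ a, P a a → P 0 (a + 1)) (a b : ℕ) :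
    P a b := by
  induction hk : Nat.pair a b generalizing a b with
  | zero =>
    obtain ⟨rfl, rfl⟩ := Nat.pair_eq_pair.1 (hk.trans (show 0 = Nat.pair 0 0 from rfl))
    exact zero
  | succ k ih =>
    match a, b with
    | 0, 0 => exact zero
    | 0, b + 1 => exact diag b (ih _ _ (by rw [pair_zero_succ] at hk; omega))
    | a + 1, 0 => exact corner a (ih _ _ (by rw [pair_succ_zero] at hk; omega))
    | a + 1, b + 1 =>
      rcases lt_or_ge a b with h | h
      · exact left a _ (by omega) (ih _ _ (by rw [pair_succ_left (by omega)] at hk; omega))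
      · exact right _ b (by omega) (ih _ _ (by rw [pair_succ_right (by omega)] at hk; omega))

theorem preserves_pairZeroRule : pairZeroRule.Preserves Correct := by
  rintro ν ⟨h_tag, h_left : ν 0 1 = 0, h_right : ν 0 2 = 0, h_value : ν 0 3 = 0⟩ -
  exact correct_of_pair h_tag (by rw [h_left, h_right, h_value]; rfl)

theorem holds_pairSuccRule_iff {r : Rule} {ν : Fin 7 → Fact} :
    (pairSuccRule r).Holds ν ↔
      ν 0 0 = 0 ∧ ν 0 3 = ν 1 3 + 1 ∧ ν 1 0 = 0 ∧ ν 1 4 < ν 0 4 ∧ r.Holds ν := by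
  simp only [Rule.Holds, pairSuccRule, isPair, List.cons_append, List.nil_append,
    List.forall_cons, Constraint.Holds, Slot.tag, Slot.value, Slot.rank]

theorem preserves_pairSuccRule {r : Rule}
    (hr : ∀ ν, r.Holds ν → Nat.pair (ν 0 1) (ν 0 2) = Nat.pair (ν 1 1) (ν 1 2) + 1) :
    (pairSuccRule r).Preserves Correct := by
  intro ν h ih
  obtain ⟨h_tag, h_value, h_tag₁, h_rank₁, h_step⟩ := holds_pairSuccRule_iff.1 h
  exact correct_of_pair h_tag (by rw [hr ν h_step, (ih 1 h_rank₁).pair h_tag₁, h_value])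

theorem preserves_of_mem_pairRules : ∀ r ∈ pairRules, r.Preserves Correct := by
  refine List.forall_iff_forall_mem.1 ⟨preserves_pairZeroRule, preserves_pairSuccRule ?_,
    preserves_pairSuccRule ?_, preserves_pairSuccRule ?_, preserves_pairSuccRule ?_⟩
  · rintro ν ⟨h_left : ν 0 1 = ν 1 1 + 1, h_right : ν 0 2 = ν 1 2, h_lt : ν 0 1 < ν 0 2⟩
    rw [h_left, pair_succ_left (h_left ▸ h_lt), h_right]
  · rintro ν ⟨h_next : ν 1 2 = ν 1 1 + 1, h_left : ν 0 1 = ν 1 2, h_right : ν 0 2 = 0⟩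
    rw [h_left, h_right, h_next, pair_succ_zero]
  · rintro ν ⟨h_lt : ν 1 2 < ν 1 1, h_left : ν 0 1 = ν 1 1, h_right : ν 0 2 = ν 1 2 + 1⟩
    rw [h_left, h_right, pair_succ_right h_lt]
  · rintro ν ⟨h_diag : ν 1 2 = ν 1 1, h_left : ν 0 1 = 0, h_right : ν 0 2 = ν 1 1 + 1⟩
    rw [h_left, h_right, h_diag, pair_zero_succ]

theorem exists_derivable_pairFact_succ {R : List Rule} {r : Rule} (hr : pairSuccRule r ∈ R)
    {a b a' b' : ℕ} (h_pair : Nat.pair a' b' = Nat.pair a b + 1)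
    (h_holds : ∀ ρ, r.Holds (ruleInstance (pairFact a' b' (ρ + 1)) [pairFact a b ρ])) :
    (∃ ρ, Derivable R (pairFact a b ρ)) → ∃ ρ, Derivable R (pairFact a' b' ρ) := by
  rintro ⟨ρ, h⟩
  exact ⟨ρ + 1, .of_rule hr [_] h
    (holds_pairSuccRule_iff.2 ⟨rfl, h_pair, rfl, ρ.lt_succ_self, h_holds ρ⟩)⟩

theorem exists_derivable_pairFact {R : List Rule} (hR : pairRules ⊆ R) (a b : ℕ) :
    ∃ ρ, Derivable R (pairFact a b ρ) := by
  simp only [pairRules, List.cons_subset] at hR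
  obtain ⟨h_zero, h_left, h_corner, h_right, h_diag, -⟩ := hR
  induction a, b using pair_induction with
  | zero => exact ⟨0, .of_rule h_zero [] trivial ⟨rfl, rfl, rfl, rfl⟩⟩
  | left a b h ih =>
    exact exists_derivable_pairFact_succ h_left (pair_succ_left h) (fun _ => ⟨rfl, rfl, h⟩) ih
  | corner a ih =>
    exact exists_derivable_pairFact_succ h_corner (pair_succ_zero a)
      (fun _ => ⟨rfl, rfl, rfl⟩) ih
  | right a b h ih =>
    exact exists_derivable_pairFact_succ h_right (pair_succ_right h)
      (fun _ => ⟨h, rfl, rfl⟩) ih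
  | diag a ih =>
    exact exists_derivable_pairFact_succ h_diag (pair_zero_succ a)
      (fun _ => ⟨rfl, rfl, rfl⟩) ih

/-! ### Horn rules for partial recursive functions -/

section Evaluation

variable {f g : Code} {a b m n : ℕ}

theorem mem_eval_zero_iff : b ∈ Code.zero.eval a ↔ b = 0 := Part.mem_some_iff

theorem mem_eval_succ_iff : b ∈ Code.succ.eval a ↔ b = a + 1 := Part.mem_some_iff

theorem mem_eval_left_iff : b ∈ Code.left.eval (Nat.pair m n) ↔ b = m := by simp [Code.eval]

theorem mem_eval_right_iff : b ∈ Code.right.eval (Nat.pair m n) ↔ b = n := by simp [Code.eval]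

theorem mem_eval_pair_iff :
    b ∈ (Code.pair f g).eval a ↔ ∃ u ∈ f.eval a, ∃ v ∈ g.eval a, Nat.pair u v = b := by
  simp [Code.eval, Seq.seq]

theorem mem_eval_comp_iff : b ∈ (Code.comp f g).eval a ↔ ∃ z ∈ g.eval a, b ∈ f.eval z :=
  Part.mem_bind_iff

theorem mem_eval_prec_succ_iff : b ∈ (Code.prec f g).eval (Nat.pair a (n + 1)) ↔
    ∃ z ∈ (Code.prec f g).eval (Nat.pair a n), b ∈ g.eval (Nat.pair a (Nat.pair n z)) := by
  rw [← Nat.succ_eq_add_one, Code.eval_prec_succ]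
  exact Part.mem_bind_iff

theorem mem_eval_rfind_iff : b ∈ (Code.rfind' f).eval (Nat.pair a m) ↔
    m ≤ b ∧ 0 ∈ f.eval (Nat.pair a b) ∧
      ∀ i, m ≤ i → i < b → ∃ k ∈ f.eval (Nat.pair a i), 0 < k := by
  simp only [Code.eval, Nat.unpaired, Nat.unpair_pair, Part.mem_map_iff]
  constructor
  · rintro ⟨n, hn, rfl⟩
    obtain ⟨h_zero, h_pos⟩ := Nat.mem_rfind.1 hn
    refine ⟨Nat.le_add_left m n, by simpa using h_zero, fun i hi hin => ?_⟩
    obtain ⟨j, rfl⟩ := Nat.exists_eq_add_of_le' hi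
    simpa [Nat.pos_iff_ne_zero] using h_pos (Nat.add_lt_add_iff_right.1 hin)
  · rintro ⟨hmb, h_zero, h_pos⟩
    obtain ⟨n, rfl⟩ := Nat.exists_eq_add_of_le' hmb
    refine ⟨n, Nat.mem_rfind.2 ⟨by simpa using h_zero, fun {i} hi => ?_⟩, rfl⟩
    simpa [Nat.pos_iff_ne_zero] using h_pos (i + m) (Nat.le_add_left m i) (by omega)

theorem mem_eval_rfind_of_zero (h : 0 ∈ f.eval (Nat.pair a m)) :
    m ∈ (Code.rfind' f).eval (Nat.pair a m) :=
  mem_eval_rfind_iff.2 ⟨le_rfl, h, fun _ hi hi' => absurd hi' hi.not_gt⟩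

theorem mem_eval_rfind_of_pos {k : ℕ} (hk : k ∈ f.eval (Nat.pair a m)) (h_pos : 0 < k)
    (h : b ∈ (Code.rfind' f).eval (Nat.pair a (m + 1))) :
    b ∈ (Code.rfind' f).eval (Nat.pair a m) := by
  obtain ⟨hmb, h_zero, h_search⟩ := mem_eval_rfind_iff.1 h
  refine mem_eval_rfind_iff.2 ⟨Nat.le_of_succ_le hmb, h_zero, fun i hi hib => ?_⟩
  obtain rfl | hi := hi.eq_or_lt
  · exact ⟨k, hk, h_pos⟩
  · exact h_search i hi hib

theorem rfind_induction {P : ℕ → Prop} (h : b ∈ (Code.rfind' f).eval (Nat.pair a m))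
    (zero : 0 ∈ f.eval (Nat.pair a b) → P b)
    (succ : ∀ i, ∀ k ∈ f.eval (Nat.pair a i), 0 < k → P (i + 1) → P i) : P m := by
  obtain ⟨hmb, h_zero, h_pos⟩ := mem_eval_rfind_iff.1 h
  refine Nat.decreasingInduction' (fun i hib hi ih => ?_) hmb (zero h_zero)
  obtain ⟨k, hk, hk_pos⟩ := h_pos i hi hib
  exact succ i k hk hk_pos ih

end Evaluation

section Rules

variable (f g : Code)

/-- `0 ∈ zero.eval a`. -/
def zeroRule : Rule := [.const (.tag 0) (evalTag .zero), .const (.output 0) 0]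

/-- `a + 1 ∈ succ.eval a`. -/
def succRule : Rule := [.const (.tag 0) (evalTag .succ), .offset (.input 0) (.output 0) 1]

/-- `m ∈ left.eval ⟨m, n⟩`, where the premise is the pairing fact of `⟨m, n⟩`. -/
def leftRule : Rule :=
  .const (.tag 0) (evalTag .left) :: isPair 1 ++
    [same (.value 1) (.input 0), same (.input 1) (.output 0)]

/-- `n ∈ right.eval ⟨m, n⟩`, where the premise is the pairing fact of `⟨m, n⟩`. -/
def rightRule : Rule :=
  .const (.tag 0) (evalTag .right) :: isPair 1 ++
    [same (.value 1) (.input 0), same (.output 1) (.output 0)]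

/-- `⟨u, v⟩ ∈ (pair f g).eval a` from `u ∈ f.eval a`, `v ∈ g.eval a` and the pairing fact of
`⟨u, v⟩`. -/
def pairCodeRule : Rule :=
  .const (.tag 0) (evalTag (.pair f g)) :: isEval f 1 ++ isEval g 2 ++ isPair 3 ++
    [same (.input 0) (.input 1), same (.input 0) (.input 2), same (.output 1) (.input 3),
      same (.output 2) (.output 3), same (.value 3) (.output 0)]

/-- `b ∈ (comp f g).eval a` from `z ∈ g.eval a` and `b ∈ f.eval z`. -/
def compRule : Rule :=
  .const (.tag 0) (evalTag (.comp f g)) :: isEval g 1 ++ isEval f 2 ++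
    [same (.input 0) (.input 1), same (.output 1) (.input 2), same (.output 2) (.output 0)]

/-- `b ∈ (prec f g).eval ⟨a, 0⟩` from the pairing fact of `⟨a, 0⟩` and `b ∈ f.eval a`. -/
def precZeroRule : Rule :=
  .const (.tag 0) (evalTag (.prec f g)) :: isPair 1 ++ isEval f 2 ++
    [.const (.output 1) 0, same (.value 1) (.input 0), same (.input 1) (.input 2),
      same (.output 2) (.output 0)]

/-- `b ∈ (prec f g).eval ⟨a, n + 1⟩` from the pairing facts of `⟨a, n + 1⟩` and `⟨a, n⟩`,
`z ∈ (prec f g).eval ⟨a, n⟩`, the pairing facts of `⟨n, z⟩` and `⟨a, ⟨n, z⟩⟩`, and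
`b ∈ g.eval ⟨a, ⟨n, z⟩⟩`. -/
def precSuccRule : Rule :=
  .const (.tag 0) (evalTag (.prec f g)) :: isPair 1 ++ isPair 2 ++ isEval (.prec f g) 3 ++
    isPair 4 ++ isPair 5 ++ isEval g 6 ++
    [same (.value 1) (.input 0), same (.input 1) (.input 2), .offset (.output 2) (.output 1) 1,
      same (.value 2) (.input 3), same (.output 2) (.input 4), same (.output 3) (.output 4),
      same (.input 1) (.input 5), same (.value 4) (.output 5), same (.value 5) (.input 6),
      same (.output 6) (.output 0)]

/-- `m ∈ (rfind' f).eval ⟨a, m⟩` from the pairing fact of `⟨a, m⟩` and `0 ∈ f.eval ⟨a, m⟩`. -/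
def rfindZeroRule : Rule :=
  .const (.tag 0) (evalTag (.rfind' f)) :: isPair 1 ++ isEval f 2 ++
    [same (.value 1) (.input 0), same (.input 0) (.input 2), .const (.output 2) 0,
      same (.output 1) (.output 0)]

/-- `b ∈ (rfind' f).eval ⟨a, m⟩` from the pairing fact of `⟨a, m⟩`, `k ∈ f.eval ⟨a, m⟩` with
`0 < k`, the pairing fact of `⟨a, m + 1⟩`, and `b ∈ (rfind' f).eval ⟨a, m + 1⟩`. The positivity of
`k` is expressed by comparison with the tag `0` of a pairing fact. -/
def rfindSuccRule : Rule :=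
  .const (.tag 0) (evalTag (.rfind' f)) :: isPair 1 ++ isEval f 2 ++ isPair 3 ++
    isEval (.rfind' f) 4 ++
    [same (.value 1) (.input 0), same (.input 0) (.input 2), .lt (.tag 1) (.output 2),
      same (.input 1) (.input 3), .offset (.output 1) (.output 3) 1, same (.value 3) (.input 4),
      same (.output 4) (.output 0)]

/-- The rules that derive the graphs of a code and of its subcodes. -/
def codeRules : Code → List Rule
  | .zero => [zeroRule]
  | .succ => [succRule]
  | .left => [leftRule]
  | .right => [rightRule]
  | .pair f g => pairCodeRule f g :: (codeRules f ++ codeRules g)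
  | .comp f g => compRule f g :: (codeRules f ++ codeRules g)
  | .prec f g => precZeroRule f g :: precSuccRule f g :: (codeRules f ++ codeRules g)
  | .rfind' f => rfindZeroRule f :: rfindSuccRule f :: codeRules f

end Rules

/-! ### Soundness of the rules -/

section Soundness

variable {f g : Code}

theorem preserves_zeroRule : zeroRule.Preserves Correct := by
  rintro ν ⟨h_tag, h_out : ν 0 2 = 0⟩ -
  exact correct_of_eval h_tag (mem_eval_zero_iff.2 h_out)

theorem preserves_succRule : succRule.Preserves Correct := by
  rintro ν ⟨h_tag, h_out : ν 0 2 = ν 0 1 + 1⟩ -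
  exact correct_of_eval h_tag (mem_eval_succ_iff.2 h_out)

theorem preserves_leftRule : leftRule.Preserves Correct := by
  rintro ν ⟨h_tag, h_tag₁, h_rank₁, h_in : ν 0 1 = ν 1 3, h_out : ν 0 2 = ν 1 1⟩ ih
  refine correct_of_eval h_tag ?_
  rw [h_in, ← (ih 1 h_rank₁).pair h_tag₁, mem_eval_left_iff, h_out]

theorem preserves_rightRule : rightRule.Preserves Correct := by
  rintro ν ⟨h_tag, h_tag₁, h_rank₁, h_in : ν 0 1 = ν 1 3, h_out : ν 0 2 = ν 1 2⟩ ih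
  refine correct_of_eval h_tag ?_
  rw [h_in, ← (ih 1 h_rank₁).pair h_tag₁, mem_eval_right_iff, h_out]

theorem preserves_pairCodeRule : (pairCodeRule f g).Preserves Correct := by
  rintro ν ⟨h_tag, h_tag₁, h_rank₁, h_tag₂, h_rank₂, h_tag₃, h_rank₃, h_in₁ : ν 1 1 = ν 0 1,
    h_in₂ : ν 2 1 = ν 0 1, h_left : ν 3 1 = ν 1 2, h_right : ν 3 2 = ν 2 2,
    h_out : ν 0 2 = ν 3 3⟩ ih
  have h_f : ν 1 2 ∈ f.eval (ν 0 1) := h_in₁ ▸ (ih 1 h_rank₁).eval f h_tag₁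
  have h_g : ν 2 2 ∈ g.eval (ν 0 1) := h_in₂ ▸ (ih 2 h_rank₂).eval g h_tag₂
  have h_pair : Nat.pair (ν 1 2) (ν 2 2) = ν 0 2 := by
    rw [← h_left, ← h_right, (ih 3 h_rank₃).pair h_tag₃, h_out]
  exact correct_of_eval h_tag (mem_eval_pair_iff.2 ⟨_, h_f, _, h_g, h_pair⟩)

theorem preserves_compRule : (compRule f g).Preserves Correct := by
  rintro ν ⟨h_tag, h_tag₁, h_rank₁, h_tag₂, h_rank₂, h_in₁ : ν 1 1 = ν 0 1,
    h_in₂ : ν 2 1 = ν 1 2, h_out : ν 0 2 = ν 2 2⟩ ih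
  have h_g : ν 1 2 ∈ g.eval (ν 0 1) := h_in₁ ▸ (ih 1 h_rank₁).eval g h_tag₁
  have h_f : ν 0 2 ∈ f.eval (ν 1 2) := h_in₂ ▸ h_out ▸ (ih 2 h_rank₂).eval f h_tag₂
  exact correct_of_eval h_tag (mem_eval_comp_iff.2 ⟨_, h_g, h_f⟩)

theorem preserves_precZeroRule : (precZeroRule f g).Preserves Correct := by
  rintro ν ⟨h_tag, h_tag₁, h_rank₁, h_tag₂, h_rank₂, h_zero : ν 1 2 = 0, h_in : ν 0 1 = ν 1 3,
    h_in₂ : ν 2 1 = ν 1 1, h_out : ν 0 2 = ν 2 2⟩ ih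
  have h_f : ν 0 2 ∈ f.eval (ν 1 1) := h_in₂ ▸ h_out ▸ (ih 2 h_rank₂).eval f h_tag₂
  refine correct_of_eval h_tag ?_
  rwa [h_in, ← (ih 1 h_rank₁).pair h_tag₁, h_zero, Code.eval_prec_zero]

theorem preserves_precSuccRule : (precSuccRule f g).Preserves Correct := by
  rintro ν ⟨h_tag, h_tag₁, h_rank₁, h_tag₂, h_rank₂, h_tag₃, h_rank₃, h_tag₄, h_rank₄, h_tag₅,
    h_rank₅, h_tag₆, h_rank₆, h_in : ν 0 1 = ν 1 3, h_left₂ : ν 2 1 = ν 1 1,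
    h_right₁ : ν 1 2 = ν 2 2 + 1, h_in₃ : ν 3 1 = ν 2 3, h_left₄ : ν 4 1 = ν 2 2,
    h_right₄ : ν 4 2 = ν 3 2, h_left₅ : ν 5 1 = ν 1 1, h_right₅ : ν 5 2 = ν 4 3,
    h_in₆ : ν 6 1 = ν 5 3, h_out : ν 0 2 = ν 6 2⟩ ih
  have h_in_eq : ν 0 1 = Nat.pair (ν 1 1) (ν 2 2 + 1) := by
    rw [h_in, ← (ih 1 h_rank₁).pair h_tag₁, h_right₁]
  have h_rec : ν 3 2 ∈ (Code.prec f g).eval (Nat.pair (ν 1 1) (ν 2 2)) := by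
    rw [← h_left₂, (ih 2 h_rank₂).pair h_tag₂, ← h_in₃]
    exact (ih 3 h_rank₃).eval _ h_tag₃
  have h_g : ν 0 2 ∈ g.eval (Nat.pair (ν 1 1) (Nat.pair (ν 2 2) (ν 3 2))) := by
    rw [← h_left₄, ← h_right₄, (ih 4 h_rank₄).pair h_tag₄, ← h_left₅, ← h_right₅,
      (ih 5 h_rank₅).pair h_tag₅, ← h_in₆, h_out]
    exact (ih 6 h_rank₆).eval _ h_tag₆
  exact correct_of_eval h_tag (h_in_eq ▸ mem_eval_prec_succ_iff.2 ⟨_, h_rec, h_g⟩)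

theorem preserves_rfindZeroRule : (rfindZeroRule f).Preserves Correct := by
  rintro ν ⟨h_tag, h_tag₁, h_rank₁, h_tag₂, h_rank₂, h_in : ν 0 1 = ν 1 3, h_in₂ : ν 2 1 = ν 0 1,
    h_zero : ν 2 2 = 0, h_out : ν 0 2 = ν 1 2⟩ ih
  have h_in_eq : ν 0 1 = Nat.pair (ν 1 1) (ν 1 2) := by
    rw [h_in, (ih 1 h_rank₁).pair h_tag₁]
  have h_f : 0 ∈ f.eval (ν 0 1) := h_in₂ ▸ h_zero ▸ (ih 2 h_rank₂).eval f h_tag₂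
  refine correct_of_eval h_tag ?_
  rw [h_in_eq] at h_f ⊢
  rw [h_out]
  exact mem_eval_rfind_of_zero h_f

theorem preserves_rfindSuccRule : (rfindSuccRule f).Preserves Correct := by
  rintro ν ⟨h_tag, h_tag₁ : ν 1 0 = 0, h_rank₁, h_tag₂, h_rank₂, h_tag₃, h_rank₃, h_tag₄, h_rank₄,
    h_in : ν 0 1 = ν 1 3, h_in₂ : ν 2 1 = ν 0 1, h_pos : ν 1 0 < ν 2 2, h_left₃ : ν 3 1 = ν 1 1,
    h_right₃ : ν 3 2 = ν 1 2 + 1, h_in₄ : ν 4 1 = ν 3 3, h_out : ν 0 2 = ν 4 2⟩ ih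
  have h_in_eq : ν 0 1 = Nat.pair (ν 1 1) (ν 1 2) := by
    rw [h_in, (ih 1 h_rank₁).pair h_tag₁]
  have h_f : ν 2 2 ∈ f.eval (ν 0 1) := h_in₂ ▸ (ih 2 h_rank₂).eval f h_tag₂
  have h_rec : ν 0 2 ∈ (Code.rfind' f).eval (Nat.pair (ν 1 1) (ν 1 2 + 1)) := by
    rw [← h_left₃, ← h_right₃, (ih 3 h_rank₃).pair h_tag₃, ← h_in₄, h_out]
    exact (ih 4 h_rank₄).eval _ h_tag₄
  refine correct_of_eval h_tag ?_
  rw [h_in_eq] at h_f ⊢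
  exact mem_eval_rfind_of_pos h_f (h_tag₁ ▸ h_pos) h_rec

theorem preserves_of_mem_codeRules (c : Code) : ∀ r ∈ codeRules c, r.Preserves Correct := by
  induction c with
  | zero => exact List.forall_mem_singleton.2 preserves_zeroRule
  | succ => exact List.forall_mem_singleton.2 preserves_succRule
  | left => exact List.forall_mem_singleton.2 preserves_leftRule
  | right => exact List.forall_mem_singleton.2 preserves_rightRule
  | pair f g ihf ihg =>
    exact List.forall_mem_cons.2 ⟨preserves_pairCodeRule, List.forall_mem_append.2 ⟨ihf, ihg⟩⟩
  | comp f g ihf ihg =>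
    exact List.forall_mem_cons.2 ⟨preserves_compRule, List.forall_mem_append.2 ⟨ihf, ihg⟩⟩
  | prec f g ihf ihg =>
    exact List.forall_mem_cons.2 ⟨preserves_precZeroRule, List.forall_mem_cons.2
      ⟨preserves_precSuccRule, List.forall_mem_append.2 ⟨ihf, ihg⟩⟩⟩
  | rfind' f ih =>
    exact List.forall_mem_cons.2 ⟨preserves_rfindZeroRule, List.forall_mem_cons.2
      ⟨preserves_rfindSuccRule, ih⟩⟩

end Soundness

/-! ### Completeness of the rules -/

/-- All values of the partial function computed by `c` are derivable. -/
def DerivesGraph (R : List Rule) (c : Code) : Prop :=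
  ∀ a, ∀ b ∈ c.eval a, ∃ ρ, Derivable R (evalFact c a b ρ)

namespace DerivesGraph

variable {R : List Rule} {f g : Code}

attribute [local simp] Rule.Holds Constraint.Holds isPair isEval ruleInstance pairFact evalFact
  Slot.tag Slot.input Slot.output Slot.value Slot.rank

theorem zero (h_rule : zeroRule ∈ R) : DerivesGraph R .zero := by
  intro a b h
  obtain rfl := mem_eval_zero_iff.1 h
  exact ⟨0, .of_rule h_rule [] trivial ⟨rfl, rfl⟩⟩

theorem succ (h_rule : succRule ∈ R) : DerivesGraph R .succ := by
  intro a b h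
  obtain rfl := mem_eval_succ_iff.1 h
  exact ⟨0, .of_rule h_rule [] trivial ⟨rfl, rfl⟩⟩

theorem left (h_pair : pairRules ⊆ R) (h_rule : leftRule ∈ R) : DerivesGraph R .left := by
  intro a b h
  obtain ⟨m, n, rfl⟩ : ∃ m n, Nat.pair m n = a := ⟨_, _, Nat.pair_unpair a⟩
  obtain rfl := mem_eval_left_iff.1 h
  obtain ⟨ρ, hρ⟩ := exists_derivable_pairFact h_pair b n
  exact ⟨ρ + 1, .of_rule h_rule [_] hρ (by simp [leftRule])⟩

theorem right (h_pair : pairRules ⊆ R) (h_rule : rightRule ∈ R) : DerivesGraph R .right := by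
  intro a b h
  obtain ⟨m, n, rfl⟩ : ∃ m n, Nat.pair m n = a := ⟨_, _, Nat.pair_unpair a⟩
  obtain rfl := mem_eval_right_iff.1 h
  obtain ⟨ρ, hρ⟩ := exists_derivable_pairFact h_pair m b
  exact ⟨ρ + 1, .of_rule h_rule [_] hρ (by simp [rightRule])⟩

theorem pair (h_pair : pairRules ⊆ R) (h_rule : pairCodeRule f g ∈ R) (hf : DerivesGraph R f)
    (hg : DerivesGraph R g) : DerivesGraph R (.pair f g) := by
  intro a b h
  obtain ⟨u, hu, v, hv, rfl⟩ := mem_eval_pair_iff.1 h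
  obtain ⟨ρ₁, h₁⟩ := hf a u hu
  obtain ⟨ρ₂, h₂⟩ := hg a v hv
  obtain ⟨ρ₃, h₃⟩ := exists_derivable_pairFact h_pair u v
  exact ⟨ρ₁ + ρ₂ + ρ₃ + 1, .of_rule h_rule [_, _, _] ⟨h₁, h₂, h₃⟩
    (by simp [pairCodeRule]; omega)⟩

theorem comp (h_rule : compRule f g ∈ R) (hf : DerivesGraph R f) (hg : DerivesGraph R g) :
    DerivesGraph R (.comp f g) := by
  intro a b h
  obtain ⟨z, hz, hb⟩ := mem_eval_comp_iff.1 h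
  obtain ⟨ρ₁, h₁⟩ := hg a z hz
  obtain ⟨ρ₂, h₂⟩ := hf z b hb
  exact ⟨ρ₁ + ρ₂ + 1, .of_rule h_rule [_, _] ⟨h₁, h₂⟩ (by simp [compRule])⟩

theorem prec (h_pair : pairRules ⊆ R) (h_zero : precZeroRule f g ∈ R)
    (h_succ : precSuccRule f g ∈ R) (hf : DerivesGraph R f) (hg : DerivesGraph R g) :
    DerivesGraph R (.prec f g) := by
  intro a b h
  obtain ⟨a, n, rfl⟩ : ∃ m n, Nat.pair m n = a := ⟨_, _, Nat.pair_unpair a⟩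
  induction n generalizing b with
  | zero =>
    rw [Code.eval_prec_zero] at h
    obtain ⟨ρ₁, h₁⟩ := exists_derivable_pairFact h_pair a 0
    obtain ⟨ρ₂, h₂⟩ := hf a b h
    exact ⟨ρ₁ + ρ₂ + 1, .of_rule h_zero [_, _] ⟨h₁, h₂⟩ (by simp [precZeroRule])⟩
  | succ n ih =>
    obtain ⟨z, hz, hb⟩ := mem_eval_prec_succ_iff.1 h
    obtain ⟨ρ₁, h₁⟩ := exists_derivable_pairFact h_pair a (n + 1)
    obtain ⟨ρ₂, h₂⟩ := exists_derivable_pairFact h_pair a n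
    obtain ⟨ρ₃, h₃⟩ := ih z hz
    obtain ⟨ρ₄, h₄⟩ := exists_derivable_pairFact h_pair n z
    obtain ⟨ρ₅, h₅⟩ := exists_derivable_pairFact h_pair a (Nat.pair n z)
    obtain ⟨ρ₆, h₆⟩ := hg _ b hb
    exact ⟨ρ₁ + ρ₂ + ρ₃ + ρ₄ + ρ₅ + ρ₆ + 1, .of_rule h_succ [_, _, _, _, _, _]
      ⟨h₁, h₂, h₃, h₄, h₅, h₆⟩ (by simp [precSuccRule]; omega)⟩

theorem rfind (h_pair : pairRules ⊆ R) (h_zero : rfindZeroRule f ∈ R)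
    (h_succ : rfindSuccRule f ∈ R) (hf : DerivesGraph R f) : DerivesGraph R (.rfind' f) := by
  intro a b h
  obtain ⟨a, m, rfl⟩ : ∃ m n, Nat.pair m n = a := ⟨_, _, Nat.pair_unpair a⟩
  refine rfind_induction (P := fun m => ∃ ρ, Derivable R (evalFact _ (Nat.pair a m) b ρ)) h
    (fun hb => ?_) (fun m k hk h_pos ih => ?_)
  · obtain ⟨ρ₁, h₁⟩ := exists_derivable_pairFact h_pair a b
    obtain ⟨ρ₂, h₂⟩ := hf _ _ hb
    exact ⟨ρ₁ + ρ₂ + 1, .of_rule h_zero [_, _] ⟨h₁, h₂⟩ (by simp [rfindZeroRule])⟩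
  · obtain ⟨ρ₁, h₁⟩ := exists_derivable_pairFact h_pair a m
    obtain ⟨ρ₂, h₂⟩ := hf _ _ hk
    obtain ⟨ρ₃, h₃⟩ := exists_derivable_pairFact h_pair a (m + 1)
    obtain ⟨ρ₄, h₄⟩ := ih
    exact ⟨ρ₁ + ρ₂ + ρ₃ + ρ₄ + 1, .of_rule h_succ [_, _, _, _] ⟨h₁, h₂, h₃, h₄⟩
      (by simp [rfindSuccRule]; omega)⟩

end DerivesGraph

theorem derivesGraph_of_subset {R : List Rule} (h_pair : pairRules ⊆ R) {c : Code}
    (h : codeRules c ⊆ R) : DerivesGraph R c := by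
  induction c with simp only [codeRules, List.cons_subset, List.append_subset,
    List.nil_subset, and_true] at h
  | zero => exact .zero h
  | succ => exact .succ h
  | left => exact .left h_pair h
  | right => exact .right h_pair h
  | pair f g ihf ihg => exact .pair h_pair h.1 (ihf h.2.1) (ihg h.2.2)
  | comp f g ihf ihg => exact .comp h.1 (ihf h.2.1) (ihg h.2.2)
  | prec f g ihf ihg => exact .prec h_pair h.1 h.2.1 (ihf h.2.2.1) (ihg h.2.2.2)
  | rfind' f ih => exact .rfind h_pair h.1 h.2.1 (ih h.2.2)

/-! ### The reduction -/

theorem freeVars_atom_subset (s : Slot) : s.atom.freeVars ⊆ Set.Iio 8 :=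
  Set.singleton_subset_iff.2 (Nat.succ_lt_succ s.1.isLt)

theorem freeVars_constraint_subset (c : Constraint) : c.formula.freeVars ⊆ Set.Iio 8 := by
  cases c <;> simp only [Constraint.formula, freeVars_nextN, freeVars_eventually, freeVars_conj,
    Set.union_subset_iff, freeVars_atom_subset, and_self]

theorem freeVars_wellFormed_subset (i : Fin 5) : (wellFormed i).freeVars ⊆ Set.Iio 8 := by
  simp only [wellFormed, QF.freeVars, freeVars_nextN, freeVars_eventually, freeVars_conj,
    Set.union_subset_iff, freeVars_atom_subset, and_self]

theorem freeVars_supportFormula_subset (R : List Rule) :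
    (supportFormula R).freeVars ⊆ Set.Iio 8 := by
  have h0 : 0 ∈ Set.Iio 8 := Nat.succ_pos 7
  refine Set.union_subset (freeVars_conjList_subset h0 ?_) (freeVars_disjList_subset h0 ?_)
  · exact List.forall_mem_map.2 fun i _ => freeVars_wellFormed_subset i
  · exact List.forall_mem_map.2 fun r _ => freeVars_conjList_subset h0
      (List.forall_mem_map.2 fun c _ => freeVars_constraint_subset c)

theorem freeVars_goalFormula (k n : ℕ) : (goalFormula k n).freeVars = {0} := by
  simp only [goalFormula, freeVars_conj, freeVars_nextN, QF.freeVars, Set.union_self]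

theorem isSentence_hornSentence (k n : ℕ) (R : List Rule) : (hornSentence k n R).IsSentence := by
  have h_sub : (conj (goalFormula k n) (supportFormula R)).freeVars ⊆ Set.Iio 8 := by
    rw [freeVars_conj, freeVars_goalFormula]
    exact Set.union_subset (Set.singleton_subset_iff.2 (Nat.succ_pos 7))
      (freeVars_supportFormula_subset R)
  refine Set.eq_empty_of_forall_notMem fun x hx => ?_
  simp only [hornSentence, HFormula.freeVars, Set.mem_sdiff, Set.mem_singleton_iff,
    and_assoc] at hx
  have hx8 : x < 8 := h_sub hx.1
  omega

theorem primrec_codeWith_nextN (ψ : QF ℕ) : Primrec fun k => (nextN k ψ).codeWith id := by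
  simp only [codeWith_nextN]
  exact Primrec.nat_iterate .id (.const _) (Primrec₂.natPair.comp (.const 3) .snd).to₂

theorem primrec_codeWith_hornSentence (k : ℕ) (R : List Rule) :
    Primrec fun n => (hornSentence k n R).codeWith id := by
  have pair_left (m : ℕ) {f : ℕ → ℕ} (hf : Primrec f) : Primrec fun n => Nat.pair m (f n) :=
    Primrec₂.natPair.comp (.const m) hf
  have pair_right (m : ℕ) {f : ℕ → ℕ} (hf : Primrec f) : Primrec fun n => Nat.pair (f n) m :=
    Primrec₂.natPair.comp hf (.const m)
  have conj_left (ψ : QF ℕ) {χ : ℕ → QF ℕ} (h : Primrec fun n => (χ n).codeWith id) :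
      Primrec fun n => (conj ψ (χ n)).codeWith id :=
    pair_left 1 (pair_left 2 (pair_left _ (pair_left 1 h)))
  have conj_right (ψ : QF ℕ) {χ : ℕ → QF ℕ} (h : Primrec fun n => (χ n).codeWith id) :
      Primrec fun n => (conj (χ n) ψ).codeWith id :=
    pair_left 1 (pair_left 2 (pair_right _ (pair_left 1 h)))
  have quantifier (q x : ℕ) {f : ℕ → ℕ} (hf : Primrec f) :
      Primrec fun n => Nat.pair q (Nat.pair x (f n)) := pair_left q (pair_left x hf)
  have h_goal : Primrec fun n => (goalFormula k n).codeWith id :=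
    conj_left _ ((primrec_codeWith_nextN _).comp Primrec.succ)
  exact quantifier 0 0 <| quantifier 1 1 <| quantifier 0 2 <| quantifier 0 3 <| quantifier 0 4 <|
    quantifier 0 5 <| quantifier 0 6 <| quantifier 0 7 <| pair_left 2 <|
      conj_right (supportFormula R) h_goal

/-- The rules for evaluating the code `c`. -/
def evaluationRules (c : Code) : List Rule := pairRules ++ codeRules c

theorem preserves_of_mem_evaluationRules (c : Code) :
    ∀ r ∈ evaluationRules c, r.Preserves Correct :=
  List.forall_mem_append.2 ⟨preserves_of_mem_pairRules, preserves_of_mem_codeRules c⟩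

theorem exists_finite_hModels_iff_dom (c : Code) (n : ℕ) :
    (∃ S : TS ℕ, Finite S.V ∧ HModels S.traces (hornSentence (evalTag c) n (evaluationRules c))) ↔
      (c.eval n).Dom := by
  constructor
  · rintro ⟨S, -, hS⟩
    obtain ⟨-, h_supp, v, hv, h_tag, rfl⟩ := hModels_hornSentence_iff.1 hS
    have h_correct : Correct v := h_supp.of_preserves (preserves_of_mem_evaluationRules c) hv
    exact Part.dom_iff_mem.2 ⟨_, h_correct.eval c h_tag⟩
  · intro h
    obtain ⟨ρ, F, hF, h_supp, h_mem⟩ :=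
      derivesGraph_of_subset (R := evaluationRules c) (List.subset_append_left _ _)
        (List.subset_append_right _ _) n _ (Part.get_mem h)
    exact h_supp.exists_finite_hModels hF h_mem

theorem manyOneRed_finStateSatCodes {N : Set ℕ} (hN : IsRE N) : ManyOneRed N FinStateSatCodes := by
  obtain ⟨f, hf, hN⟩ := hN
  obtain ⟨c, rfl⟩ := Code.exists_code.1 hf
  refine ⟨fun n => (hornSentence (evalTag c) n (evaluationRules c)).codeWith id,
    (primrec_codeWith_hornSentence _ _).to_comp, fun n => ?_⟩
  rw [hN, ← exists_finite_hModels_iff_dom]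
  constructor
  · exact fun h => ⟨_, isSentence_hornSentence _ _ _, rfl, h⟩
  · rintro ⟨φ, -, h_code, h⟩
    rwa [HFormula.codeWith_injective Function.injective_id h_code] at h

end HyperLTL

/-- **HyperLTL finite-state satisfiability is Σ⁰₁-complete**: the set of codes is
recursively enumerable, and every recursively enumerable set many-one reduces to
it via a total computable function. -/
theorem hyperltl_finite_state_sat_Sigma01_complete :
    IsRE FinStateSatCodes ∧ ∀ N : Set ℕ, IsRE N → ManyOneRed N FinStateSatCodes :=
  ⟨HyperLTL.isRE_finStateSatCodes, fun _ hN => HyperLTL.manyOneRed_finStateSatCodes hN⟩
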